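/- arXiv:1310.6711 — 2 statements merged into one kernel-verified Lean document; each statement's English description precedes it below -/
import Mathlib

section
/- Let n ≥ 2 and let Ω = ℝⁿ \ Ḡ, where G is a convex domain in ℝⁿ. Let u ∈ C²(Ω) ∩ C_b(Ω̄) be the velocity component of a solution {u, p} of the Stokes system Δu − grad p = 0, div u = 0 in Ω, and let p be the pressure, vanishing as d_x → ∞. Then for every point x ∈ Ω, |p(x)| ≤ (E_n / d_x) · sup_Ω |u|, where E_n = (4 ω_{n−1} / ω_n) ∫₀^{π/2} [1 + n(n−2) cos²θ]^{1/2} sin^{n−2}θ dθ. -/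
open MeasureTheory Real Filter Metric
open scoped Real RealInnerProductSpace

noncomputable section

/-- `Eu n` is the Euclidean space `ℝⁿ`. -/
abbrev Eu (n : ℕ) := EuclideanSpace ℝ (Fin n)

/-- `ω_n`: the surface area of the unit sphere `S^{n-1}` in `ℝⁿ`,
given by the classical formula `2 π^{n/2} / Γ(n/2)`. -/
def sphereArea (n : ℕ) : ℝ := 2 * π ^ ((n : ℝ) / 2) / Real.Gamma ((n : ℝ) / 2)

/-- The divergence `div u(x) = ∑ⱼ ∂uⱼ/∂xⱼ (x)` of a vector field `u : ℝⁿ → ℝⁿ`. -/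
def divg {n : ℕ} (u : Eu n → Eu n) (x : Eu n) : ℝ :=
  ∑ j, fderiv ℝ (fun y => u y j) x (EuclideanSpace.single j 1)

/-- The Laplacian of a scalar function at a point: the sum of the pure second
partial derivatives in the coordinate directions. -/
def lapl {n : ℕ} (u : Eu n → ℝ) (x : Eu n) : ℝ :=
  ∑ i, fderiv ℝ (fun y => fderiv ℝ u y (EuclideanSpace.single i 1)) x
    (EuclideanSpace.single i 1)

/-- The constant `E_n = (4 ω_{n-1}/ω_n) ∫₀^{π/2} (1 + n(n-2) cos²θ)^{1/2} sin^{n-2}θ dθ`. -/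
def Econst (n : ℕ) : ℝ :=
  (4 * sphereArea (n - 1) / sphereArea n) *
    ∫ θ in (0:ℝ)..(π / 2),
      Real.sqrt (1 + (n : ℝ) * ((n : ℝ) - 2) * Real.cos θ ^ 2) * Real.sin θ ^ (n - 2)

/-!
Let `q` be the projection of `x` onto the closed convex set and `ν = (x - q) / |x - q|`. The
half-space `⟪ν, z - q⟫ > 0` lies in the exterior domain and contains `x` at height exactly `d_x`, so
it suffices to bound the pressure of a bounded Stokes flow in a half-space.

There, with `t` the height over the boundary, `p`, `w = u_ν - t p / 2` and
`g = t ∂_ν p / 2 - ∂_ν u_ν` are harmonic, and `p = -2 (g + ∂_ν w)`. On the boundary `w` equals `u_ν`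
and, since `div u = 0`, `g` equals the tangential divergence of `u`. A harmonic function that grows
more slowly than the height is the Poisson integral of its boundary values; integrating by parts
along the boundary turns the formula for `p` into the integral of `-2 u` against the gradient of the
Poisson kernel. The Cauchy–Schwarz inequality and the `L¹` norm of that gradient, computed in polar
coordinates, give `E_n / t`.

Smoothness up to the boundary is obtained by mollifying the flow at scale `δ` and raising the
boundary by `3 δ`; then `δ → 0`.
-/

open scoped Topology

/-! ### Second derivatives and the maximum principle in a half-space -/

/-- `φ` has second derivative `a` at `x`: it is differentiable near `x`, and its derivative has
derivative `a` at `x`. Unlike `deriv (deriv φ) x = a`, this excludes junk values. -/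
def HasSecondDerivAt (φ : ℝ → ℝ) (a x : ℝ) : Prop :=
  ∃ φ' : ℝ → ℝ, (∀ᶠ s in 𝓝 x, HasDerivAt φ (φ' s) s) ∧ HasDerivAt φ' a x

namespace HasSecondDerivAt

variable {φ ψ : ℝ → ℝ} {a b x : ℝ}

theorem sub (hφ : HasSecondDerivAt φ a x) (hψ : HasSecondDerivAt ψ b x) :
    HasSecondDerivAt (fun s => φ s - ψ s) (a - b) x := by
  obtain ⟨φ', hφ, hφ'⟩ := hφ
  obtain ⟨ψ', hψ, hψ'⟩ := hψ
  refine ⟨fun s => φ' s - ψ' s, ?_, hφ'.sub hψ'⟩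
  filter_upwards [hφ, hψ] with s hs ks using hs.sub ks

theorem neg (hφ : HasSecondDerivAt φ a x) : HasSecondDerivAt (fun s => -φ s) (-a) x := by
  obtain ⟨φ', hφ, hφ'⟩ := hφ
  exact ⟨fun s => -φ' s, hφ.mono fun s hs => hs.neg, hφ'.neg⟩

theorem const_mul (c : ℝ) (hφ : HasSecondDerivAt φ a x) :
    HasSecondDerivAt (fun s => c * φ s) (c * a) x := by
  obtain ⟨φ', hφ, hφ'⟩ := hφ
  exact ⟨fun s => c * φ' s, hφ.mono fun s hs => hs.const_mul c, hφ'.const_mul c⟩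

theorem congr_of_eventuallyEq (hφ : HasSecondDerivAt φ a x) (h : ψ =ᶠ[𝓝 x] φ) :
    HasSecondDerivAt ψ a x := by
  obtain ⟨φ', hφ, hφ'⟩ := hφ
  refine ⟨φ', ?_, hφ'⟩
  filter_upwards [hφ, h.eventuallyEq_nhds] with s hs hs' using hs.congr_of_eventuallyEq hs'

theorem nonpos_of_isLocalMax (hφ : HasSecondDerivAt φ a x) (hmax : IsLocalMax φ x) : a ≤ 0 := by
  obtain ⟨φ', hφ, hφ'⟩ := hφ
  have hderiv : deriv φ =ᶠ[𝓝 x] φ' := hφ.mono fun s hs => hs.deriv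
  have hderiv₂ : deriv (deriv φ) x = a := by rw [hderiv.deriv_eq, hφ'.deriv]
  by_contra! hpos
  have hmin : IsLocalMin φ x :=
    isLocalMin_of_deriv_deriv_pos (hderiv₂ ▸ hpos) hmax.deriv_eq_zero
      hφ.self_of_nhds.continuousAt
  have hconst : φ =ᶠ[𝓝 x] fun _ => φ x := by
    filter_upwards [hmax, hmin] with s hs hs' using le_antisymm hs hs'
  have hzero : deriv (deriv φ) x = 0 := by simpa using hconst.deriv.deriv_eq
  exact hpos.ne' (hderiv₂ ▸ hzero)

end HasSecondDerivAt

theorem hasSecondDerivAt_quadratic (a b c x : ℝ) :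
    HasSecondDerivAt (fun s => a + b * s + c * s ^ 2) (2 * c) x := by
  refine ⟨fun s => b + 2 * c * s, Eventually.of_forall fun s => ?_, ?_⟩
  · have hlin : HasDerivAt (fun s : ℝ => a + b * s) b s := by
      simpa using ((hasDerivAt_id' s).const_mul b).const_add a
    have hsq : HasDerivAt (fun s : ℝ => c * s ^ 2) (2 * c * s) s :=
      ((hasDerivAt_pow 2 s).const_mul c).congr_deriv (by norm_num; ring)
    exact hlin.add hsq
  · simpa using ((hasDerivAt_id' x).const_mul (2 * c)).const_add b

theorem hasDerivAt_of_hasLineDerivAt_add_smul {E : Type*} [NormedAddCommGroup E] [NormedSpace ℝ E]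
    {φ : E → ℝ} {a : ℝ} {x v : E} {s : ℝ} (h : HasLineDerivAt ℝ φ a (x + s • v) v) :
    HasDerivAt (fun r : ℝ => φ (x + r • v)) a s := by
  have hshift := HasDerivAt.comp_sub_const s s
    (f := fun r : ℝ => φ (x + s • v + r • v)) (f' := a) (by rw [sub_self]; exact h)
  refine hshift.congr_of_eventuallyEq (Eventually.of_forall fun r => ?_)
  dsimp only
  congr 1
  module

theorem hasSecondDerivAt_of_hasLineDerivAt {E : Type*} [NormedAddCommGroup E] [NormedSpace ℝ E]
    {φ φ' : E → ℝ} {a : ℝ} {x v : E}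
    (h : ∀ᶠ s : ℝ in 𝓝 0, HasLineDerivAt ℝ φ (φ' (x + s • v)) (x + s • v) v)
    (h' : HasLineDerivAt ℝ φ' a x v) : HasSecondDerivAt (fun s => φ (x + s • v)) a 0 :=
  ⟨fun s => φ' (x + s • v), h.mono fun _ hs => hasDerivAt_of_hasLineDerivAt_add_smul hs, h'⟩

/-- Pointwise harmonicity of `g` at `(y, t) ∈ ℝᵐ × ℝ`: the pure second derivatives in the coordinate
directions exist and add up to zero. -/
def ProdHarmonicAt {m : ℕ} (g : Eu m → ℝ → ℝ) (y : Eu m) (t : ℝ) : Prop :=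
  ∃ (a : Fin m → ℝ) (c : ℝ),
    (∀ i, HasSecondDerivAt (fun s => g (y + s • EuclideanSpace.single i 1) t) (a i) 0) ∧
    HasSecondDerivAt (g y) c t ∧ ∑ i, a i + c = 0

section MaximumPrinciple

variable {m : ℕ} {g h : Eu m → ℝ → ℝ} {y : Eu m} {t : ℝ}

theorem ProdHarmonicAt.sub (hg : ProdHarmonicAt g y t) (hh : ProdHarmonicAt h y t) :
    ProdHarmonicAt (fun y t => g y t - h y t) y t := by
  obtain ⟨a, c, ha, hc, hac⟩ := hg
  obtain ⟨b, d, hb, hd, hbd⟩ := hh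
  refine ⟨fun i => a i - b i, c - d, fun i => (ha i).sub (hb i), hc.sub hd, ?_⟩
  rw [Finset.sum_sub_distrib]
  linarith

theorem ProdHarmonicAt.neg (hg : ProdHarmonicAt g y t) :
    ProdHarmonicAt (fun y t => -g y t) y t := by
  obtain ⟨a, c, ha, hc, hac⟩ := hg
  refine ⟨fun i => -a i, -c, fun i => (ha i).neg, hc.neg, ?_⟩
  rw [Finset.sum_neg_distrib]
  linarith

theorem ProdHarmonicAt.const_mul (c : ℝ) (hg : ProdHarmonicAt g y t) :
    ProdHarmonicAt (fun y t => c * g y t) y t := by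
  obtain ⟨a, b, ha, hb, hab⟩ := hg
  refine ⟨fun i => c * a i, c * b, fun i => (ha i).const_mul c, hb.const_mul c, ?_⟩
  rw [← Finset.mul_sum, ← mul_add, hab, mul_zero]

theorem ProdHarmonicAt.congr_of_eqOn (hg : ProdHarmonicAt g y t) (ht : 0 < t)
    (h_eq : ∀ y t, 0 < t → h y t = g y t) : ProdHarmonicAt h y t := by
  obtain ⟨a, c, ha, hc, hac⟩ := hg
  refine ⟨a, c, fun i => (ha i).congr_of_eventuallyEq ?_, hc.congr_of_eventuallyEq ?_, hac⟩
  · exact Eventually.of_forall fun s => h_eq _ t ht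
  · filter_upwards [lt_mem_nhds ht] with s hs using h_eq y s hs

theorem norm_add_smul_single_sq (y : Eu m) (i : Fin m) (s : ℝ) :
    ‖y + s • EuclideanSpace.single i (1 : ℝ)‖ ^ 2 = ‖y‖ ^ 2 + 2 * y i * s + s ^ 2 := by
  rw [norm_add_sq_real, inner_smul_right, norm_smul, EuclideanSpace.inner_single_right,
    PiLp.norm_single, mul_pow, Real.norm_eq_abs, sq_abs]
  simp only [conj_trivial, norm_one]
  ring

/-- The comparison function of the maximum principle on the slab `0 ≤ t ≤ L`. Its Laplacian is
`2 m ε - 2 (m + 1) ε = -2 ε`, so it is strictly superharmonic. -/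
def slabBarrier (m : ℕ) (δ L ε : ℝ) (y : Eu m) (t : ℝ) : ℝ :=
  δ * t + ε * (‖y‖ ^ 2 + (m + 1) * (L ^ 2 - t ^ 2))

theorem mul_add_mul_norm_sq_le_slabBarrier {δ L ε : ℝ} (hε : 0 ≤ ε) (ht : 0 ≤ t) (htL : t ≤ L) :
    δ * t + ε * ‖y‖ ^ 2 ≤ slabBarrier m δ L ε y t := by
  have : 0 ≤ ((m : ℝ) + 1) * (L ^ 2 - t ^ 2) :=
    mul_nonneg (by positivity) (sub_nonneg.2 (by gcongr))
  unfold slabBarrier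
  gcongr
  linarith

theorem not_isLocalMax_sub_slabBarrier {δ L ε : ℝ} (hε : 0 < ε) (hg : ProdHarmonicAt g y t) :
    ¬ IsLocalMax (fun z : Eu m × ℝ => g z.1 z.2 - slabBarrier m δ L ε z.1 z.2) (y, t) := by
  intro hmax
  obtain ⟨a, c, ha, hc, hsum⟩ := hg
  have ha_le (i : Fin m) : a i ≤ 2 * ε := by
    have hline : Tendsto (fun s : ℝ => (y + s • EuclideanSpace.single i (1 : ℝ), t)) (𝓝 0)
        (𝓝 (y, t)) := Continuous.tendsto' (by fun_prop) _ _ (by simp)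
    have hbarrier := (ha i).sub
      (hasSecondDerivAt_quadratic (slabBarrier m δ L ε y t) (ε * (2 * y i)) ε 0)
    have := hbarrier.nonpos_of_isLocalMax <| by
      filter_upwards [hline.eventually hmax] with s hs
      simp only [slabBarrier, norm_add_smul_single_sq] at hs ⊢
      simp only [zero_smul, add_zero]
      linarith
    linarith
  have hc_le : c ≤ -2 * (m + 1) * ε := by
    have hline : Tendsto (fun s : ℝ => (y, s)) (𝓝 t) (𝓝 (y, t)) :=
      Continuous.tendsto' (by fun_prop) _ _ rfl
    have hbarrier := hc.sub (hasSecondDerivAt_quadratic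
      (ε * (‖y‖ ^ 2 + (m + 1) * L ^ 2)) δ (-(ε * (m + 1))) t)
    have := hbarrier.nonpos_of_isLocalMax <| by
      filter_upwards [hline.eventually hmax] with s hs
      simp only [slabBarrier] at hs
      linarith
    linarith
  have : ∑ i, a i ≤ m * (2 * ε) := by
    simpa using Finset.sum_le_sum fun i (_ : i ∈ Finset.univ) => ha_le i
  linarith

theorem le_slabBarrier_of_harmonic {C L δ ε : ℝ} (hε : 0 < ε) (hδ : 0 ≤ δ)
    (hcont : ContinuousOn (fun z : Eu m × ℝ => g z.1 z.2) {z | 0 ≤ z.2})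
    (hharm : ∀ y t, 0 < t → ProdHarmonicAt g y t)
    (hbot : ∀ y, g y 0 ≤ 0) (htop : ∀ y, g y L ≤ δ * L)
    (hC : ∀ y t, 0 ≤ t → t ≤ L → g y t ≤ C) (ht : 0 ≤ t) (htL : t ≤ L) :
    g y t ≤ slabBarrier m δ L ε y t := by
  obtain ⟨R, hCR, hyR⟩ : ∃ R, C ≤ ε * R ^ 2 ∧ ‖y‖ ≤ R :=
    (((tendsto_pow_atTop two_ne_zero).const_mul_atTop hε).eventually_ge_atTop C
      |>.and (eventually_ge_atTop ‖y‖)).exists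
  let K : Set (Eu m × ℝ) := closedBall 0 R ×ˢ Set.Icc 0 L
  have hyK : (y, t) ∈ K := ⟨by simpa using hyR, ht, htL⟩
  have hK : IsCompact K := (isCompact_closedBall 0 R).prod isCompact_Icc
  have hcontK : ContinuousOn (fun z : Eu m × ℝ => g z.1 z.2 - slabBarrier m δ L ε z.1 z.2) K :=
    (hcont.mono fun z hz => hz.2.1).sub (by unfold slabBarrier; fun_prop)
  obtain ⟨⟨y₁, t₁⟩, ⟨hy₁, ht₁, ht₁L⟩, hmax⟩ := hK.exists_isMaxOn ⟨_, hyK⟩ hcontK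
  replace hy₁ : ‖y₁‖ ≤ R := by simpa using hy₁
  suffices g y₁ t₁ ≤ slabBarrier m δ L ε y₁ t₁ by
    have : g y t - slabBarrier m δ L ε y t ≤ g y₁ t₁ - slabBarrier m δ L ε y₁ t₁ := hmax hyK
    linarith
  have hbarrier := mul_add_mul_norm_sq_le_slabBarrier (y := y₁) (δ := δ) hε.le ht₁ ht₁L
  have hεy : 0 ≤ ε * ‖y₁‖ ^ 2 := by positivity
  rcases ht₁.eq_or_lt with rfl | ht₁pos
  · linarith [hbot y₁]
  rcases ht₁L.eq_or_lt with rfl | ht₁lt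
  · linarith [htop y₁]
  rcases hy₁.eq_or_lt with rfl | hy₁lt
  · linarith [hC y₁ t₁ ht₁ ht₁L, mul_nonneg hδ ht₁]
  have hnhds : K ∈ 𝓝 (y₁, t₁) :=
    prod_mem_nhds (closedBall_mem_nhds_of_mem (by simpa using hy₁lt)) (Icc_mem_nhds ht₁pos ht₁lt)
  exact absurd (hmax.isLocalMax hnhds) (not_isLocalMax_sub_slabBarrier hε (hharm y₁ t₁ ht₁pos))

/-- The growth condition of the Phragmén–Lindelöf principle below: `g y t` is at most linear in `t`
up to the boundary, and `o(t)` as `t → ∞`, both uniformly in `y`. -/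
structure SublinearGrowth (g : Eu m → ℝ → ℝ) : Prop where
  exists_bound : ∃ C, ∀ y t, 0 ≤ t → |g y t| ≤ C * (1 + t)
  isLittleO : ∀ ε > 0, ∃ R : ℝ, ∀ y t, R ≤ t → |g y t| ≤ ε * t

theorem SublinearGrowth.neg (hg : SublinearGrowth g) : SublinearGrowth fun y t => -g y t where
  exists_bound := by simpa only [abs_neg] using hg.exists_bound
  isLittleO := by simpa only [abs_neg] using hg.isLittleO

theorem SublinearGrowth.sub (hg : SublinearGrowth g) (hh : SublinearGrowth h) :
    SublinearGrowth fun y t => g y t - h y t where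
  exists_bound := by
    obtain ⟨C, hC⟩ := hg.exists_bound
    obtain ⟨D, hD⟩ := hh.exists_bound
    refine ⟨C + D, fun y t ht => (abs_sub _ _).trans ?_⟩
    linarith [hC y t ht, hD y t ht]
  isLittleO ε hε := by
    obtain ⟨R, hR⟩ := hg.isLittleO (ε / 2) (half_pos hε)
    obtain ⟨S, hS⟩ := hh.isLittleO (ε / 2) (half_pos hε)
    refine ⟨max R S, fun y t ht => (abs_sub _ _).trans ?_⟩
    linarith [hR y t (le_of_max_le_left ht), hS y t (le_of_max_le_right ht)]

theorem sublinearGrowth_of_abs_le {M : ℝ} (hM : ∀ y t, 0 ≤ t → |g y t| ≤ M) :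
    SublinearGrowth g where
  exists_bound := by
    refine ⟨M, fun y t ht => (hM y t ht).trans ?_⟩
    have : 0 ≤ M := (abs_nonneg _).trans (hM y t ht)
    nlinarith
  isLittleO ε hε := by
    refine ⟨max 0 (M / ε), fun y t ht => (hM y t (le_of_max_le_left ht)).trans ?_⟩
    rw [mul_comm, ← div_le_iff₀ hε]
    exact le_of_max_le_right ht

theorem le_of_forall_pos_le_add_mul {a b c : ℝ} (h : ∀ ε > 0, a ≤ b + ε * c) : a ≤ b := by
  have hlim : Tendsto (fun ε : ℝ => b + ε * c) (𝓝[>] 0) (𝓝 b) :=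
    (Continuous.tendsto' (by fun_prop) 0 b (by simp)).mono_left nhdsWithin_le_nhds
  exact ge_of_tendsto hlim (eventually_mem_nhdsWithin.mono h)

theorem nonpos_of_harmonic_of_sublinearGrowth
    (hcont : ContinuousOn (fun z : Eu m × ℝ => g z.1 z.2) {z | 0 ≤ z.2})
    (hharm : ∀ y t, 0 < t → ProdHarmonicAt g y t) (hbot : ∀ y, g y 0 = 0)
    (hgrowth : SublinearGrowth g) (ht : 0 ≤ t) : g y t ≤ 0 := by
  obtain ⟨C, hC⟩ := hgrowth.exists_bound
  refine le_of_forall_pos_le_add_mul (c := t) fun δ hδ => ?_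
  obtain ⟨R, hR⟩ := hgrowth.isLittleO δ hδ
  obtain ⟨L, hRL, htL⟩ : ∃ L, R ≤ L ∧ t ≤ L := ⟨max R t, le_max_left _ _, le_max_right _ _⟩
  rw [zero_add]
  refine le_of_forall_pos_le_add_mul (c := ‖y‖ ^ 2 + (m + 1) * (L ^ 2 - t ^ 2)) fun ε hε => ?_
  have hC₀ : 0 ≤ C := by simpa using (abs_nonneg _).trans (hC y 0 le_rfl)
  refine le_slabBarrier_of_harmonic (C := C * (1 + L)) hε hδ.le hcont hharm (fun y => (hbot y).le)
    (fun y => (le_abs_self _).trans (hR y L hRL)) (fun y t ht htL => ?_) ht htL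
  calc g y t ≤ |g y t| := le_abs_self _
    _ ≤ C * (1 + t) := hC y t ht
    _ ≤ C * (1 + L) := by gcongr

theorem eq_zero_of_harmonic_of_sublinearGrowth
    (hcont : ContinuousOn (fun z : Eu m × ℝ => g z.1 z.2) {z | 0 ≤ z.2})
    (hharm : ∀ y t, 0 < t → ProdHarmonicAt g y t) (hbot : ∀ y, g y 0 = 0)
    (hgrowth : SublinearGrowth g) (ht : 0 ≤ t) : g y t = 0 := by
  refine le_antisymm (nonpos_of_harmonic_of_sublinearGrowth hcont hharm hbot hgrowth ht) ?_
  have := nonpos_of_harmonic_of_sublinearGrowth (y := y) hcont.neg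
    (fun y t ht => (hharm y t ht).neg) (fun y => by simp [hbot y]) hgrowth.neg ht
  linarith

end MaximumPrinciple

/-! ### The normalizing constants -/

theorem sphereArea_pos {n : ℕ} (hn : n ≠ 0) : 0 < sphereArea n := by
  have : 0 < Real.Gamma ((n : ℝ) / 2) := Real.Gamma_pos_of_pos (by positivity)
  unfold sphereArea
  positivity

theorem dim_mul_volume_unitBall_eq_sphereArea {m : ℕ} (hm : m ≠ 0) :
    m * (volume : Measure (Eu m)).real (ball 0 1) = sphereArea m := by
  have : Nonempty (Fin m) := ⟨⟨0, Nat.pos_of_ne_zero hm⟩⟩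
  have : 0 < Real.Gamma ((m : ℝ) / 2) := Real.Gamma_pos_of_pos (by positivity)
  have hGamma_succ : Real.Gamma ((m : ℝ) / 2 + 1) = m / 2 * Real.Gamma ((m : ℝ) / 2) :=
    Real.Gamma_add_one (by positivity)
  have hpi : √π ^ m = π ^ ((m : ℝ) / 2) := by
    rw [Real.sqrt_eq_rpow, ← Real.rpow_natCast, ← Real.rpow_mul Real.pi_pos.le]
    congr 1
    ring
  rw [Measure.real, EuclideanSpace.volume_ball, ENNReal.ofReal_one, one_pow, one_mul,
    Fintype.card_fin, hGamma_succ, hpi, ENNReal.toReal_ofReal (by positivity), sphereArea]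
  field_simp

/-- The exponent `-(m + 1) / 2` of the Poisson kernel `t (‖z‖² + t²) ^ (-(m + 1) / 2)` of the
half-space `ℝᵐ × (0, ∞)`. -/
abbrev poissonExponent (m : ℕ) : ℝ := -((m : ℝ) + 1) / 2

/-- The unnormalized Poisson kernel of `ℝᵐ × (0, ∞)` at height one. Every kernel occurring below is
dominated by it locally uniformly. -/
def poissonWeight {m : ℕ} (z : Eu m) : ℝ := (1 + ‖z‖ ^ 2) ^ poissonExponent m

theorem poissonWeight_pos {m : ℕ} (z : Eu m) : 0 < poissonWeight z := by
  unfold poissonWeight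
  positivity

theorem integrable_poissonWeight (m : ℕ) : Integrable (poissonWeight (m := m)) := by
  have hdim : (Module.finrank ℝ (Eu m) : ℝ) < m + 1 := by simp
  exact integrable_rpow_neg_one_add_norm_sq hdim

theorem tan_image_Ioo_zero_pi_div_two : Real.tan '' Set.Ioo 0 (π / 2) = Set.Ioi 0 := by
  ext r
  constructor
  · rintro ⟨θ, hθ, rfl⟩
    exact Real.tan_pos_of_pos_of_lt_pi_div_two hθ.1 hθ.2
  · intro hr
    exact ⟨Real.arctan r, ⟨Real.arctan_pos.2 hr, Real.arctan_lt_pi_div_two r⟩, Real.tan_arctan r⟩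

theorem integral_Ioi_zero_eq_integral_tan (f : ℝ → ℝ) :
    ∫ r in Set.Ioi 0, f r = ∫ θ in (0 : ℝ)..(π / 2), f (Real.tan θ) / Real.cos θ ^ 2 := by
  have hsub : Set.Ioo 0 (π / 2) ⊆ Set.Ioo (-(π / 2)) (π / 2) :=
    Set.Ioo_subset_Ioo_left (by linarith [Real.pi_pos])
  rw [intervalIntegral.integral_of_le (by positivity), integral_Ioc_eq_integral_Ioo,
    ← tan_image_Ioo_zero_pi_div_two, integral_image_eq_integral_abs_deriv_smul
      (f' := fun θ => 1 / Real.cos θ ^ 2) measurableSet_Ioo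
      (fun θ hθ => (Real.hasDerivAt_tan (Real.cos_pos_of_mem_Ioo (hsub hθ)).ne').hasDerivWithinAt)
      (Real.injOn_tan.mono hsub)]
  refine setIntegral_congr_fun measurableSet_Ioo fun θ _ => ?_
  rw [abs_of_nonneg (by positivity), smul_eq_mul, one_div, mul_comm, div_eq_mul_inv]

theorem inv_cos_sq_rpow_poissonExponent {m : ℕ} {θ : ℝ} (hθ : 0 ≤ Real.cos θ) :
    ((Real.cos θ ^ 2)⁻¹) ^ poissonExponent m = Real.cos θ ^ (m + 1) := by
  rw [← Real.rpow_natCast, ← Real.rpow_natCast, ← Real.rpow_neg hθ, ← Real.rpow_mul hθ]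
  congr 1
  push_cast
  ring

theorem integral_mul_poissonWeight {m : ℕ} (hm : m ≠ 0) (h : ℝ → ℝ) :
    ∫ z : Eu m, h (1 + ‖z‖ ^ 2)⁻¹ * poissonWeight z =
      sphereArea m * ∫ θ in (0 : ℝ)..(π / 2), h (Real.cos θ ^ 2) * Real.sin θ ^ (m - 1) := by
  have : Nonempty (Fin m) := ⟨⟨0, Nat.pos_of_ne_zero hm⟩⟩
  have hpolar := integral_fun_norm_addHaar (volume : Measure (Eu m))
    (fun r => h (1 + r ^ 2)⁻¹ * (1 + r ^ 2) ^ poissonExponent m)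
  simp only [finrank_euclideanSpace, Fintype.card_fin, smul_eq_mul, nsmul_eq_mul] at hpolar
  simp only [poissonWeight]
  rw [hpolar, ← mul_assoc, dim_mul_volume_unitBall_eq_sphereArea hm,
    integral_Ioi_zero_eq_integral_tan]
  congr 1
  rw [intervalIntegral.integral_of_le (by positivity), intervalIntegral.integral_of_le
    (by positivity), integral_Ioc_eq_integral_Ioo, integral_Ioc_eq_integral_Ioo]
  refine setIntegral_congr_fun measurableSet_Ioo fun θ hθ => ?_
  have hcos : 0 < Real.cos θ := Real.cos_pos_of_mem_Ioo ⟨by linarith [hθ.1, Real.pi_pos], hθ.2⟩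
  have htan : 1 + Real.tan θ ^ 2 = (Real.cos θ ^ 2)⁻¹ := by
    rw [← Real.inv_one_add_tan_sq hcos.ne', inv_inv]
  obtain ⟨k, rfl⟩ := Nat.exists_eq_succ_of_ne_zero hm
  rw [htan, inv_inv, inv_cos_sq_rpow_poissonExponent hcos.le, Real.tan_eq_sin_div_cos, div_pow,
    Nat.succ_eq_add_one, Nat.add_sub_cancel]
  field_simp
  ring

theorem integral_sin_pow_eq_Gamma (k : ℕ) :
    ∫ θ in (0 : ℝ)..(π / 2), Real.sin θ ^ k =
      √π * Real.Gamma (((k : ℝ) + 1) / 2) / (2 * Real.Gamma ((k : ℝ) / 2 + 1)) := by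
  induction k using Nat.twoStepInduction with
  | zero =>
    have hGamma : √π * Real.Gamma 2⁻¹ = π := by
      rw [← one_div, Real.Gamma_one_half_eq, Real.mul_self_sqrt Real.pi_pos.le]
    simp [hGamma]
  | one =>
    have hGamma : Real.Gamma ((1 : ℝ) / 2 + 1) = 1 / 2 * √π := by
      rw [Real.Gamma_add_one (by norm_num), Real.Gamma_one_half_eq]
    have hpi : √π ≠ 0 := by positivity
    simp only [pow_one, integral_sin, Nat.cast_one, hGamma, Real.cos_zero, Real.cos_pi_div_two]
    norm_num
    field_simp
  | more k ih _ =>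
    have hGamma : Real.Gamma (((k + 2 : ℕ) + 1 : ℝ) / 2) =
        (k + 1) / 2 * Real.Gamma ((k + 1 : ℝ) / 2) := by
      rw [← Real.Gamma_add_one (by positivity)]
      congr 1
      push_cast
      ring
    have hGamma' : Real.Gamma ((k + 2 : ℕ) / 2 + 1 : ℝ) =
        (k / 2 + 1) * Real.Gamma ((k : ℝ) / 2 + 1) := by
      rw [← Real.Gamma_add_one (by positivity)]
      congr 1
      push_cast
      ring
    have : 0 < Real.Gamma ((k : ℝ) / 2 + 1) := Real.Gamma_pos_of_pos (by positivity)
    rw [integral_sin_pow, ih, hGamma, hGamma', Real.sin_zero, Real.cos_pi_div_two,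
      zero_pow k.succ_ne_zero]
    field_simp
    ring

theorem integral_poissonWeight {m : ℕ} (hm : m ≠ 0) :
    ∫ z : Eu m, poissonWeight z = sphereArea (m + 1) / 2 := by
  have hsin := integral_mul_poissonWeight hm fun _ => 1
  simp only [one_mul] at hsin
  obtain ⟨k, rfl⟩ := Nat.exists_eq_succ_of_ne_zero hm
  have hk : ((k + 1 : ℕ) : ℝ) / 2 = (k + 1) / 2 := by push_cast; ring
  have hk' : ((k + 1 + 1 : ℕ) : ℝ) / 2 = k / 2 + 1 := by push_cast; ring
  have hpi : π ^ ((k : ℝ) / 2 + 1) = π ^ ((k + 1 : ℝ) / 2) * √π := by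
    rw [Real.sqrt_eq_rpow, ← Real.rpow_add Real.pi_pos]
    congr 1
    ring
  have : 0 < Real.Gamma ((k + 1 : ℝ) / 2) := Real.Gamma_pos_of_pos (by positivity)
  rw [hsin, Nat.succ_eq_add_one, Nat.add_sub_cancel, integral_sin_pow_eq_Gamma]
  simp only [sphereArea, hk, hk', hpi]
  field_simp

theorem Econst_succ_eq_integral {m : ℕ} (hm : m ≠ 0) :
    Econst (m + 1) = 4 / sphereArea (m + 1) *
      ∫ z : Eu m, √(1 + (m + 1) * (m - 1) * (1 + ‖z‖ ^ 2)⁻¹) * poissonWeight z := by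
  rw [integral_mul_poissonWeight hm fun c => √(1 + (m + 1) * (m - 1) * c), Econst,
    Nat.add_sub_cancel, show m + 1 - 2 = m - 1 by omega, Nat.cast_add_one,
    show (m : ℝ) + 1 - 2 = m - 1 by ring]
  ring

/-! ### Kernels dominated by the Poisson kernel -/

section Kernel

variable {m : ℕ}

/-- The base `‖z‖² + t²` of the Poisson kernel. -/
def poissonDenom (z : Eu m) (t : ℝ) : ℝ := ‖z‖ ^ 2 + t ^ 2

/-- The power `(‖z‖² + t²) ^ (-(m + 1) / 2)`. All kernels below are written as this power times a
multiplier which is bounded on slabs `τ ≤ t ≤ T`. -/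
def poissonPow (z : Eu m) (t : ℝ) : ℝ := poissonDenom z t ^ poissonExponent m

theorem poissonDenom_pos (z : Eu m) {t : ℝ} (ht : 0 < t) : 0 < poissonDenom z t := by
  unfold poissonDenom
  positivity

theorem poissonPow_pos (z : Eu m) {t : ℝ} (ht : 0 < t) : 0 < poissonPow z t :=
  Real.rpow_pos_of_pos (poissonDenom_pos z ht) _

theorem continuous_poissonDenom (t : ℝ) : Continuous fun z : Eu m => poissonDenom z t := by
  unfold poissonDenom
  fun_prop

/-- The multiplier `k` is continuous in `z` for `t > 0` and bounded on every slab `τ ≤ t ≤ T` with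
`τ > 0`. -/
structure SlabBounded (k : Eu m → ℝ → ℝ) : Prop where
  continuous {t : ℝ} : 0 < t → Continuous fun z => k z t
  exists_abs_le {τ : ℝ} (T : ℝ) : 0 < τ → ∃ B, ∀ z t, τ ≤ t → t ≤ T → |k z t| ≤ B

namespace SlabBounded

variable {k l : Eu m → ℝ → ℝ}

theorem add (hk : SlabBounded k) (hl : SlabBounded l) : SlabBounded fun z t => k z t + l z t where
  continuous ht := (hk.continuous ht).add (hl.continuous ht)
  exists_abs_le T hτ := by
    obtain ⟨A, hA⟩ := hk.exists_abs_le T hτ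
    obtain ⟨B, hB⟩ := hl.exists_abs_le T hτ
    exact ⟨A + B, fun z t hτt htT =>
      (abs_add_le _ _).trans (add_le_add (hA z t hτt htT) (hB z t hτt htT))⟩

theorem mul (hk : SlabBounded k) (hl : SlabBounded l) : SlabBounded fun z t => k z t * l z t where
  continuous ht := (hk.continuous ht).mul (hl.continuous ht)
  exists_abs_le T hτ := by
    obtain ⟨A, hA⟩ := hk.exists_abs_le T hτ
    obtain ⟨B, hB⟩ := hl.exists_abs_le T hτ
    refine ⟨A * B, fun z t hτt htT => ?_⟩
    rw [abs_mul]
    exact mul_le_mul (hA z t hτt htT) (hB z t hτt htT) (abs_nonneg _)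
      ((abs_nonneg _).trans (hA z t hτt htT))

theorem sqrt (hk : SlabBounded k) : SlabBounded fun z t => √(k z t) where
  continuous ht := (hk.continuous ht).sqrt
  exists_abs_le T hτ := by
    obtain ⟨A, hA⟩ := hk.exists_abs_le T hτ
    refine ⟨√A, fun z t hτt htT => ?_⟩
    rw [abs_of_nonneg (Real.sqrt_nonneg _)]
    exact Real.sqrt_le_sqrt ((le_abs_self _).trans (hA z t hτt htT))

end SlabBounded

theorem slabBounded_const (c : ℝ) : SlabBounded fun (_ : Eu m) _ => c where
  continuous _ := continuous_const
  exists_abs_le _ _ := ⟨|c|, fun _ _ _ _ => le_rfl⟩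

theorem slabBounded_height : SlabBounded fun (_ : Eu m) t => t where
  continuous _ := continuous_const
  exists_abs_le T hτ := ⟨T, fun _ _ hτt htT => by rwa [abs_of_pos (hτ.trans_le hτt)]⟩

theorem slabBounded_inv_poissonDenom : SlabBounded fun (z : Eu m) t => (poissonDenom z t)⁻¹ where
  continuous ht := (continuous_poissonDenom _).inv₀ fun z => (poissonDenom_pos z ht).ne'
  exists_abs_le {τ} T hτ := by
    refine ⟨(τ ^ 2)⁻¹, fun z t hτt _ => ?_⟩
    have hle : τ ^ 2 ≤ poissonDenom z t := by
      unfold poissonDenom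
      nlinarith [sq_nonneg ‖z‖]
    rw [abs_of_pos (inv_pos.2 (poissonDenom_pos z (hτ.trans_le hτt)))]
    gcongr

theorem slabBounded_coord_div_poissonDenom (i : Fin m) :
    SlabBounded fun z t => z i / poissonDenom z t where
  continuous ht :=
    Continuous.div (by fun_prop) (continuous_poissonDenom _) fun z => (poissonDenom_pos z ht).ne'
  exists_abs_le {τ} T hτ := by
    refine ⟨τ⁻¹, fun z t hτt _ => ?_⟩
    have ht : 0 < t := hτ.trans_le hτt
    have hcoord : |z i| ≤ ‖z‖ := PiLp.norm_apply_le z i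
    have hden : ‖z‖ * τ ≤ poissonDenom z t := by
      unfold poissonDenom
      nlinarith [sq_nonneg (‖z‖ - τ), norm_nonneg z]
    rw [abs_div, abs_of_pos (poissonDenom_pos z ht), div_le_iff₀ (poissonDenom_pos z ht),
      inv_mul_eq_div, le_div_iff₀ hτ]
    exact (mul_le_mul_of_nonneg_right hcoord hτ.le).trans hden

/-- The kernel `k` is continuous in `z` for `t > 0`, and its translates `k (y - z) t` are bounded by
a multiple of the Poisson weight, uniformly for `(y, t)` in compact subsets of the half-space. This
makes all integrals of `k (y - z) t` against bounded functions converge locally uniformly. -/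
structure PoissonDominated (k : Eu m → ℝ → ℝ) : Prop where
  continuous {t : ℝ} : 0 < t → Continuous fun z => k z t
  exists_abs_le (ρ : ℝ) {τ : ℝ} (T : ℝ) : 0 < τ →
    ∃ B, ∀ y z t, ‖y‖ ≤ ρ → τ ≤ t → t ≤ T → |k (y - z) t| ≤ B * poissonWeight z

theorem one_add_norm_sq_le_mul_poissonDenom {ρ τ t : ℝ} {y : Eu m} (hτ : 0 < τ) (hy : ‖y‖ ≤ ρ)
    (hτt : τ ≤ t) (z : Eu m) :
    1 + ‖z‖ ^ 2 ≤ ((1 + 2 * ρ ^ 2) / τ ^ 2 + 2) * poissonDenom (y - z) t := by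
  have htri : ‖z‖ ^ 2 ≤ 2 * ρ ^ 2 + 2 * ‖y - z‖ ^ 2 := by
    have hz : ‖z‖ ≤ ρ + ‖y - z‖ := by linarith [norm_le_norm_add_norm_sub y z]
    nlinarith [sq_nonneg (ρ - ‖y - z‖), norm_nonneg z]
  calc 1 + ‖z‖ ^ 2 ≤ (1 + 2 * ρ ^ 2) / τ ^ 2 * τ ^ 2 + 2 * ‖y - z‖ ^ 2 := by
        rw [div_mul_cancel₀ _ (by positivity)]
        linarith
    _ ≤ (1 + 2 * ρ ^ 2) / τ ^ 2 * poissonDenom (y - z) t + 2 * poissonDenom (y - z) t := by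
        unfold poissonDenom
        gcongr
        · nlinarith [sq_nonneg ‖y - z‖]
        · nlinarith [sq_nonneg t]
    _ = _ := by ring

theorem poissonDominated_poissonPow : PoissonDominated (poissonPow (m := m)) where
  continuous ht := (continuous_poissonDenom _).rpow_const fun z => .inl (poissonDenom_pos z ht).ne'
  exists_abs_le ρ τ T hτ := by
    let A : ℝ := (1 + 2 * ρ ^ 2) / τ ^ 2 + 2
    have hA : 0 < A := by positivity
    refine ⟨A⁻¹ ^ poissonExponent m, fun y z t hy hτt _ => ?_⟩
    have hle : A⁻¹ * (1 + ‖z‖ ^ 2) ≤ poissonDenom (y - z) t := by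
      rw [inv_mul_le_iff₀ hA]
      exact one_add_norm_sq_le_mul_poissonDenom hτ hy hτt z
    rw [abs_of_pos (poissonPow_pos _ (hτ.trans_le hτt)), poissonWeight,
      ← Real.mul_rpow (by positivity) (by positivity)]
    refine Real.rpow_le_rpow_of_nonpos (by positivity) hle ?_
    exact div_nonpos_of_nonpos_of_nonneg (by linarith [(m.cast_nonneg : (0 : ℝ) ≤ m)]) two_pos.le

theorem SlabBounded.mul_poissonPow {k : Eu m → ℝ → ℝ} (hk : SlabBounded k) :
    PoissonDominated fun z t => k z t * poissonPow z t where
  continuous ht := (hk.continuous ht).mul (poissonDominated_poissonPow.continuous ht)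
  exists_abs_le ρ τ T hτ := by
    obtain ⟨A, hA⟩ := hk.exists_abs_le T hτ
    obtain ⟨B, hB⟩ := poissonDominated_poissonPow.exists_abs_le ρ T hτ
    refine ⟨A * B, fun y z t hy hτt htT => ?_⟩
    rw [abs_mul, mul_assoc]
    exact mul_le_mul (hA _ t hτt htT) (hB y z t hy hτt htT) (abs_nonneg _)
      ((abs_nonneg _).trans (hA 0 t hτt htT))

/-- The potential `y ↦ ∫ k (y - z) t f z dz` of the boundary function `f` with respect to the
kernel `k`. -/
def kernelIntegral (k : Eu m → ℝ → ℝ) (f : Eu m → ℝ) (y : Eu m) (t : ℝ) : ℝ :=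
  ∫ z, k (y - z) t * f z

section KernelIntegral

variable {k k' : Eu m → ℝ → ℝ} {f : Eu m → ℝ} {C : ℝ}

theorem PoissonDominated.integrable_mul (hk : PoissonDominated k) (hf : Continuous f)
    (hfC : ∀ z, |f z| ≤ C) (y : Eu m) {t : ℝ} (ht : 0 < t) :
    Integrable fun z => k (y - z) t * f z := by
  obtain ⟨B, hB⟩ := hk.exists_abs_le ‖y‖ t ht
  have hcont : Continuous fun z => k (y - z) t := (hk.continuous ht).comp (by fun_prop)
  have hint : Integrable fun z => k (y - z) t :=
    ((integrable_poissonWeight m).const_mul B).mono' hcont.aestronglyMeasurable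
      (Eventually.of_forall fun z => hB y z t le_rfl le_rfl le_rfl)
  exact hint.mul_bdd hf.aestronglyMeasurable (Eventually.of_forall hfC)

theorem hasDerivAt_integral_mul_of_le_poissonWeight {K K' : ℝ → Eu m → ℝ} {s B : ℝ} {U : Set ℝ}
    (hU : U ∈ 𝓝 s) (hf : Continuous f) (hfC : ∀ z, |f z| ≤ C)
    (hK : ∀ r ∈ U, Continuous (K r)) (hK' : Continuous (K' s))
    (hint : Integrable fun z => K s z * f z)
    (hderiv : ∀ r ∈ U, ∀ z, HasDerivAt (fun r => K r z) (K' r z) r)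
    (hB : ∀ r ∈ U, ∀ z, |K' r z| ≤ B * poissonWeight z) :
    HasDerivAt (fun r => ∫ z, K r z * f z) (∫ z, K' s z * f z) s := by
  refine (hasDerivAt_integral_of_dominated_loc_of_deriv_le (F' := fun r z => K' r z * f z)
    (bound := fun z => B * poissonWeight z * C) hU ?_ hint (hK'.mul hf).aestronglyMeasurable
    ?_ ?_ ?_).2
  · filter_upwards [hU] with r hr using ((hK r hr).mul hf).aestronglyMeasurable
  · refine Eventually.of_forall fun z r hr => ?_
    rw [norm_mul]
    exact mul_le_mul (hB r hr z) (hfC z) (norm_nonneg _) ((abs_nonneg _).trans (hB r hr z))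
  · exact ((integrable_poissonWeight m).const_mul B).mul_const C
  · exact Eventually.of_forall fun z r hr => (hderiv r hr z).mul_const (f z)

theorem hasDerivAt_kernelIntegral (hk : PoissonDominated k) (hk' : PoissonDominated k')
    (hderiv : ∀ z t, 0 < t → HasDerivAt (k z) (k' z t) t) (hf : Continuous f)
    (hfC : ∀ z, |f z| ≤ C) (y : Eu m) {t : ℝ} (ht : 0 < t) :
    HasDerivAt (kernelIntegral k f y) (kernelIntegral k' f y t) t := by
  obtain ⟨B, hB⟩ := hk'.exists_abs_le ‖y‖ (2 * t) (half_pos ht)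
  have hpos {s : ℝ} (hs : s ∈ Set.Icc (t / 2) (2 * t)) : 0 < s := (half_pos ht).trans_le hs.1
  exact hasDerivAt_integral_mul_of_le_poissonWeight
    (K := fun s z => k (y - z) s) (K' := fun s z => k' (y - z) s)
    (Icc_mem_nhds (half_lt_self ht) (by linarith)) hf hfC
    (fun s hs => (hk.continuous (hpos hs)).comp (by fun_prop))
    ((hk'.continuous ht).comp (by fun_prop)) (hk.integrable_mul hf hfC y ht)
    (fun s hs z => hderiv (y - z) s (hpos hs))
    fun s hs z => hB y z s le_rfl hs.1 hs.2

theorem hasLineDerivAt_kernelIntegral (hk : PoissonDominated k) (hk' : PoissonDominated k')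
    {t : ℝ} (ht : 0 < t) {v : Eu m}
    (hderiv : ∀ z, HasLineDerivAt ℝ (fun z => k z t) (k' z t) z v)
    (hf : Continuous f) (hfC : ∀ z, |f z| ≤ C) (y : Eu m) :
    HasLineDerivAt ℝ (fun y => kernelIntegral k f y t) (kernelIntegral k' f y t) y v := by
  obtain ⟨B, hB⟩ := hk'.exists_abs_le (‖y‖ + ‖v‖) t ht
  have hbound {s : ℝ} (hs : s ∈ ball (0 : ℝ) 1) : ‖y + s • v‖ ≤ ‖y‖ + ‖v‖ := by
    have hs' : ‖s‖ ≤ 1 := (mem_ball_zero_iff.1 hs).le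
    calc ‖y + s • v‖ ≤ ‖y‖ + ‖s‖ * ‖v‖ := (norm_add_le _ _).trans_eq (by rw [norm_smul])
      _ ≤ ‖y‖ + 1 * ‖v‖ := by gcongr
      _ = ‖y‖ + ‖v‖ := by rw [one_mul]
  have := hasDerivAt_integral_mul_of_le_poissonWeight
    (K := fun s z => k (y + s • v - z) t) (K' := fun s z => k' (y + s • v - z) t)
    (ball_mem_nhds 0 one_pos) hf hfC
    (fun s _ => (hk.continuous ht).comp (by fun_prop))
    ((hk'.continuous ht).comp (by fun_prop)) (hk.integrable_mul hf hfC _ ht)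
    (fun s _ z => ?_)
    fun s hs z => hB _ z t (hbound hs) le_rfl le_rfl
  · simpa only [HasLineDerivAt, kernelIntegral, zero_smul, add_zero] using this
  · have := hasDerivAt_of_hasLineDerivAt_add_smul (hderiv (y - z + s • v))
    simpa only [add_sub_right_comm] using this

end KernelIntegral

end Kernel

/-! ### The Poisson integral -/

section Poisson

variable {m : ℕ}

/-- The unnormalized Poisson kernel of the half-space `ℝᵐ × (0, ∞)`. -/
def halfSpacePoissonKernel (z : Eu m) (t : ℝ) : ℝ := t * poissonPow z t

/-- The derivative of the Poisson kernel in the `i`-th tangential direction. -/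
def tangentialKernel (i : Fin m) (z : Eu m) (t : ℝ) : ℝ :=
  2 * poissonExponent m * t * (z i / poissonDenom z t) * poissonPow z t

/-- The second derivative of the Poisson kernel in the `i`-th tangential direction. -/
def tangentialKernel₂ (i : Fin m) (z : Eu m) (t : ℝ) : ℝ :=
  (2 * poissonExponent m * t * (poissonDenom z t)⁻¹ +
    4 * poissonExponent m * (poissonExponent m - 1) * t *
      ((z i / poissonDenom z t) * (z i / poissonDenom z t))) * poissonPow z t

/-- The derivative of the Poisson kernel in the normal direction. -/
def normalKernel (z : Eu m) (t : ℝ) : ℝ :=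
  (1 + 2 * poissonExponent m * (t * t) * (poissonDenom z t)⁻¹) * poissonPow z t

/-- The second derivative of the Poisson kernel in the normal direction. -/
def normalKernel₂ (z : Eu m) (t : ℝ) : ℝ :=
  (6 * poissonExponent m * t * (poissonDenom z t)⁻¹ +
    4 * poissonExponent m * (poissonExponent m - 1) * (t * t * t) *
      ((poissonDenom z t)⁻¹ * (poissonDenom z t)⁻¹)) * poissonPow z t

theorem poissonDominated_halfSpacePoissonKernel :
    PoissonDominated (halfSpacePoissonKernel (m := m)) :=
  slabBounded_height.mul_poissonPow

theorem poissonDominated_tangentialKernel (i : Fin m) : PoissonDominated (tangentialKernel i) :=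
  (((slabBounded_const _).mul slabBounded_height).mul
    (slabBounded_coord_div_poissonDenom i)).mul_poissonPow

theorem poissonDominated_tangentialKernel₂ (i : Fin m) : PoissonDominated (tangentialKernel₂ i) :=
  ((((slabBounded_const _).mul slabBounded_height).mul slabBounded_inv_poissonDenom).add
    (((slabBounded_const _).mul slabBounded_height).mul
      ((slabBounded_coord_div_poissonDenom i).mul
        (slabBounded_coord_div_poissonDenom i)))).mul_poissonPow

theorem poissonDominated_normalKernel : PoissonDominated (normalKernel (m := m)) :=
  ((slabBounded_const 1).add (((slabBounded_const _).mul
    (slabBounded_height.mul slabBounded_height)).mul slabBounded_inv_poissonDenom)).mul_poissonPow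

theorem poissonDominated_normalKernel₂ : PoissonDominated (normalKernel₂ (m := m)) :=
  ((((slabBounded_const _).mul slabBounded_height).mul slabBounded_inv_poissonDenom).add
    (((slabBounded_const _).mul ((slabBounded_height.mul slabBounded_height).mul
      slabBounded_height)).mul
        (slabBounded_inv_poissonDenom.mul slabBounded_inv_poissonDenom))).mul_poissonPow

theorem hasLineDerivAt_poissonDenom (i : Fin m) (z : Eu m) (t : ℝ) :
    HasLineDerivAt ℝ (fun z => poissonDenom z t) (2 * z i) z (EuclideanSpace.single i 1) := by
  have hline : HasDerivAt (fun s : ℝ => ‖z‖ ^ 2 + 2 * z i * s + s ^ 2 + t ^ 2) (2 * z i) 0 := by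
    have := (((hasDerivAt_id' (0 : ℝ)).const_mul (2 * z i)).const_add (‖z‖ ^ 2)).add
      (hasDerivAt_pow 2 (0 : ℝ))
    exact (this.add_const (t ^ 2)).congr_deriv (by simp)
  simpa only [HasLineDerivAt, poissonDenom, norm_add_smul_single_sq] using hline

theorem hasLineDerivAt_poissonPow (i : Fin m) (z : Eu m) {t : ℝ} (ht : 0 < t) :
    HasLineDerivAt ℝ (fun z => poissonPow z t)
      (2 * poissonExponent m * (z i / poissonDenom z t) * poissonPow z t) z
      (EuclideanSpace.single i 1) := by
  have hpos := poissonDenom_pos z ht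
  refine (HasDerivAt.rpow_const (hasLineDerivAt_poissonDenom i z t)
    (.inl (poissonDenom_pos _ ht).ne')).congr_deriv ?_
  rw [zero_smul, add_zero, Real.rpow_sub_one hpos.ne', poissonPow]
  ring

theorem hasDerivAt_poissonDenom (z : Eu m) (t : ℝ) : HasDerivAt (poissonDenom z) (2 * t) t :=
  ((hasDerivAt_pow 2 t).const_add (‖z‖ ^ 2)).congr_deriv (by simp)

theorem hasDerivAt_poissonPow (z : Eu m) {t : ℝ} (ht : 0 < t) :
    HasDerivAt (poissonPow z)
      (2 * poissonExponent m * (t * (poissonDenom z t)⁻¹) * poissonPow z t) t := by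
  have hpos := poissonDenom_pos z ht
  refine ((hasDerivAt_poissonDenom z t).rpow_const (.inl hpos.ne')).congr_deriv ?_
  rw [Real.rpow_sub_one hpos.ne', poissonPow]
  ring

theorem hasLineDerivAt_halfSpacePoissonKernel (i : Fin m) (z : Eu m) {t : ℝ} (ht : 0 < t) :
    HasLineDerivAt ℝ (fun z => halfSpacePoissonKernel z t) (tangentialKernel i z t) z
      (EuclideanSpace.single i 1) := by
  refine (HasDerivAt.const_mul t (hasLineDerivAt_poissonPow i z ht)).congr_deriv ?_
  unfold tangentialKernel
  ring

theorem hasLineDerivAt_tangentialKernel (i : Fin m) (z : Eu m) {t : ℝ} (ht : 0 < t) :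
    HasLineDerivAt ℝ (fun z => tangentialKernel i z t) (tangentialKernel₂ i z t) z
      (EuclideanSpace.single i 1) := by
  have hpos := poissonDenom_pos z ht
  have hcoord : HasDerivAt (fun s : ℝ => (z + s • EuclideanSpace.single i (1 : ℝ)) i) 1 0 := by
    simpa using (hasDerivAt_id' (0 : ℝ)).const_add (z i)
  have hdiv := hcoord.div (hasLineDerivAt_poissonDenom i z t) (poissonDenom_pos _ ht).ne'
  refine ((hdiv.const_mul (2 * poissonExponent m * t)).mul
    (hasLineDerivAt_poissonPow i z ht)).congr_deriv ?_
  simp only [zero_smul, add_zero, tangentialKernel₂, Pi.div_apply]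
  field_simp
  ring

theorem hasDerivAt_halfSpacePoissonKernel (z : Eu m) {t : ℝ} (ht : 0 < t) :
    HasDerivAt (halfSpacePoissonKernel z) (normalKernel z t) t := by
  refine ((hasDerivAt_id' t).mul (hasDerivAt_poissonPow z ht)).congr_deriv ?_
  unfold normalKernel
  ring

theorem hasDerivAt_normalKernel (z : Eu m) {t : ℝ} (ht : 0 < t) :
    HasDerivAt (normalKernel z) (normalKernel₂ z t) t := by
  have hpos := poissonDenom_pos z ht
  have hmul := ((((hasDerivAt_id' t).mul (hasDerivAt_id' t)).const_mul
    (2 * poissonExponent m)).mul ((hasDerivAt_poissonDenom z t).inv hpos.ne')).const_add 1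
  refine (hmul.mul (hasDerivAt_poissonPow z ht)).congr_deriv ?_
  simp only [normalKernel₂, Pi.mul_apply, Pi.inv_apply]
  field_simp
  ring

theorem norm_sq_eq_poissonDenom_sub (z : Eu m) (t : ℝ) :
    ∑ i, z i ^ 2 = poissonDenom z t - t ^ 2 := by
  rw [poissonDenom, add_sub_cancel_right, EuclideanSpace.real_norm_sq_eq]

theorem sum_tangentialKernel₂_add_normalKernel₂ (z : Eu m) {t : ℝ} (ht : 0 < t) :
    ∑ i, tangentialKernel₂ i z t + normalKernel₂ z t = 0 := by
  have hpos := poissonDenom_pos z ht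
  have hsum : ∑ i, (z i / poissonDenom z t) * (z i / poissonDenom z t) =
      (poissonDenom z t - t ^ 2) / poissonDenom z t ^ 2 := by
    rw [← norm_sq_eq_poissonDenom_sub, Finset.sum_div]
    exact Finset.sum_congr rfl fun i _ => by ring
  simp only [tangentialKernel₂, normalKernel₂]
  rw [← Finset.sum_mul, Finset.sum_add_distrib, Finset.sum_const, Finset.card_univ,
    Fintype.card_fin, nsmul_eq_mul, ← Finset.mul_sum, hsum]
  simp only [poissonExponent]
  field_simp
  ring

theorem prodHarmonicAt_kernelIntegral_halfSpacePoissonKernel {f : Eu m → ℝ} {C : ℝ}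
    (hf : Continuous f) (hfC : ∀ z, |f z| ≤ C) (y : Eu m) {t : ℝ} (ht : 0 < t) :
    ProdHarmonicAt (kernelIntegral halfSpacePoissonKernel f) y t := by
  refine ⟨fun i => kernelIntegral (tangentialKernel₂ i) f y t, kernelIntegral normalKernel₂ f y t,
    fun i => ?_, ⟨kernelIntegral normalKernel f y, ?_, ?_⟩, ?_⟩
  · exact hasSecondDerivAt_of_hasLineDerivAt
      (φ := fun y => kernelIntegral halfSpacePoissonKernel f y t)
      (φ' := fun y => kernelIntegral (tangentialKernel i) f y t)
      (Eventually.of_forall fun s => hasLineDerivAt_kernelIntegral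
        poissonDominated_halfSpacePoissonKernel (poissonDominated_tangentialKernel i) ht
        (fun z => hasLineDerivAt_halfSpacePoissonKernel i z ht) hf hfC _)
      (hasLineDerivAt_kernelIntegral (poissonDominated_tangentialKernel i)
        (poissonDominated_tangentialKernel₂ i) ht
        (fun z => hasLineDerivAt_tangentialKernel i z ht) hf hfC y)
  · filter_upwards [lt_mem_nhds ht] with s hs
    exact hasDerivAt_kernelIntegral poissonDominated_halfSpacePoissonKernel
      poissonDominated_normalKernel (fun z t ht => hasDerivAt_halfSpacePoissonKernel z ht) hf hfC
      y hs
  · exact hasDerivAt_kernelIntegral poissonDominated_normalKernel poissonDominated_normalKernel₂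
      (fun z t ht => hasDerivAt_normalKernel z ht) hf hfC y ht
  · have hint (i : Fin m) : Integrable fun z => tangentialKernel₂ i (y - z) t * f z :=
      (poissonDominated_tangentialKernel₂ i).integrable_mul hf hfC y ht
    have hzero (z : Eu m) :
        ∑ i, tangentialKernel₂ i (y - z) t * f z + normalKernel₂ (y - z) t * f z = 0 := by
      rw [← Finset.sum_mul, ← add_mul, sum_tangentialKernel₂_add_normalKernel₂ _ ht, zero_mul]
    simp only [kernelIntegral]
    rw [← integral_finsetSum _ fun i _ => hint i, ← integral_add
      (integrable_finsetSum _ fun i _ => hint i)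
      (poissonDominated_normalKernel₂.integrable_mul hf hfC y ht)]
    simp only [hzero, integral_zero]

theorem poissonDenom_smul (w : Eu m) (t : ℝ) :
    poissonDenom (t • w) t = t ^ 2 * (1 + ‖w‖ ^ 2) := by
  rw [poissonDenom, norm_smul, mul_pow, Real.norm_eq_abs, sq_abs]
  ring

theorem poissonPow_smul (w : Eu m) {t : ℝ} (ht : 0 < t) :
    poissonPow (t • w) t = (t ^ (m + 1))⁻¹ * poissonWeight w := by
  have hpow : (t ^ 2) ^ poissonExponent m = (t ^ (m + 1))⁻¹ := by
    rw [← Real.rpow_natCast, ← Real.rpow_natCast, ← Real.rpow_mul ht.le, ← Real.rpow_neg ht.le]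
    congr 1
    push_cast
    ring
  rw [poissonPow, poissonDenom_smul, Real.mul_rpow (by positivity) (by positivity), hpow,
    poissonWeight]

theorem integral_eq_pow_mul_integral_comp_smul (φ : Eu m → ℝ) {t : ℝ} (ht : 0 < t) :
    ∫ z, φ z = t ^ m * ∫ w, φ (t • w) := by
  rw [Measure.integral_comp_smul, finrank_euclideanSpace, Fintype.card_fin, smul_eq_mul,
    abs_of_pos (by positivity), mul_inv_cancel_left₀ (by positivity)]

/-- The Poisson integral of `f`, in the rescaled form `z = y - t w` which makes sense and is
continuous up to the boundary `t = 0`. -/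
def poissonIntegral (f : Eu m → ℝ) (y : Eu m) (t : ℝ) : ℝ :=
  2 / sphereArea (m + 1) * ∫ w, poissonWeight w * f (y - t • w)

theorem poissonIntegral_eq_kernelIntegral (f : Eu m → ℝ) (y : Eu m) {t : ℝ} (ht : 0 < t) :
    poissonIntegral f y t =
      2 / sphereArea (m + 1) * kernelIntegral halfSpacePoissonKernel f y t := by
  have hreflect : kernelIntegral halfSpacePoissonKernel f y t =
      ∫ z, halfSpacePoissonKernel z t * f (y - z) := by
    rw [← integral_sub_left_eq_self (fun z => halfSpacePoissonKernel z t * f (y - z)) volume y]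
    simp only [kernelIntegral, sub_sub_cancel]
  have hscale (w : Eu m) : halfSpacePoissonKernel (t • w) t = (t ^ m)⁻¹ * poissonWeight w := by
    rw [halfSpacePoissonKernel, poissonPow_smul w ht, pow_succ]
    field_simp
  rw [hreflect, integral_eq_pow_mul_integral_comp_smul _ ht, ← integral_const_mul, poissonIntegral]
  congr 2 with w
  rw [hscale]
  field_simp

section

variable {f : Eu m → ℝ} {C : ℝ}

theorem continuous_poissonWeight : Continuous (poissonWeight (m := m)) := by
  unfold poissonWeight
  exact Continuous.rpow_const (by fun_prop) fun z => .inl (by positivity)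

theorem norm_poissonWeight_mul_le (hfC : ∀ z, |f z| ≤ C) (w z : Eu m) :
    ‖poissonWeight w * f z‖ ≤ poissonWeight w * C := by
  rw [norm_mul, Real.norm_of_nonneg (poissonWeight_pos w).le]
  exact mul_le_mul_of_nonneg_left (hfC z) (poissonWeight_pos w).le

theorem continuous_poissonIntegral (hf : Continuous f) (hfC : ∀ z, |f z| ≤ C) :
    Continuous fun z : Eu m × ℝ => poissonIntegral f z.1 z.2 := by
  refine continuous_const.mul (continuous_of_dominated (bound := fun w => poissonWeight w * C)
    (fun z => ?_) (fun z => ?_) ((integrable_poissonWeight m).mul_const C) ?_)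
  · exact (continuous_poissonWeight.mul (hf.comp (by fun_prop))).aestronglyMeasurable
  · exact Eventually.of_forall fun w => norm_poissonWeight_mul_le hfC w _
  · exact Eventually.of_forall fun w => continuous_const.mul (hf.comp (by fun_prop))

theorem abs_poissonIntegral_le (hm : m ≠ 0) (hfC : ∀ z, |f z| ≤ C) (y : Eu m) (t : ℝ) :
    |poissonIntegral f y t| ≤ C := by
  have hpos : 0 < sphereArea (m + 1) := sphereArea_pos m.succ_ne_zero
  have hle : |∫ w, poissonWeight w * f (y - t • w)| ≤ sphereArea (m + 1) / 2 * C := by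
    rw [← integral_poissonWeight hm, ← integral_mul_const]
    exact norm_integral_le_of_norm_le ((integrable_poissonWeight m).mul_const C)
      (Eventually.of_forall fun w => norm_poissonWeight_mul_le hfC w _)
  rw [poissonIntegral, abs_mul, abs_of_pos (by positivity)]
  calc _ ≤ 2 / sphereArea (m + 1) * (sphereArea (m + 1) / 2 * C) := by gcongr
    _ = C := by field_simp

theorem poissonIntegral_zero (hm : m ≠ 0) (f : Eu m → ℝ) (y : Eu m) :
    poissonIntegral f y 0 = f y := by
  have hpos : 0 < sphereArea (m + 1) := sphereArea_pos m.succ_ne_zero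
  simp only [poissonIntegral, zero_smul, sub_zero]
  rw [integral_mul_const, integral_poissonWeight hm]
  field_simp

theorem prodHarmonicAt_poissonIntegral (hf : Continuous f) (hfC : ∀ z, |f z| ≤ C) (y : Eu m) {t : ℝ}
    (ht : 0 < t) : ProdHarmonicAt (poissonIntegral f) y t :=
  ((prodHarmonicAt_kernelIntegral_halfSpacePoissonKernel hf hfC y ht).const_mul _).congr_of_eqOn ht
    fun y _ ht => poissonIntegral_eq_kernelIntegral f y ht

end

theorem continuous_boundaryValue {g : Eu m → ℝ → ℝ}
    (hcont : ContinuousOn (fun z : Eu m × ℝ => g z.1 z.2) {z | 0 ≤ z.2}) :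
    Continuous fun z => g z 0 :=
  hcont.comp_continuous (f := fun z : Eu m => (z, (0 : ℝ))) (by fun_prop) fun _ => le_refl (0 : ℝ)

theorem eq_poissonIntegral_of_harmonic (hm : m ≠ 0) {g : Eu m → ℝ → ℝ}
    (hcont : ContinuousOn (fun z : Eu m × ℝ => g z.1 z.2) {z | 0 ≤ z.2})
    (hharm : ∀ y t, 0 < t → ProdHarmonicAt g y t) (hgrowth : SublinearGrowth g) (y : Eu m)
    {t : ℝ} (ht : 0 ≤ t) : g y t = poissonIntegral (fun z => g z 0) y t := by
  obtain ⟨C, hC⟩ := hgrowth.exists_bound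
  have hbdry : Continuous fun z => g z 0 := continuous_boundaryValue hcont
  have hbdryC (z : Eu m) : |g z 0| ≤ C := by simpa using hC z 0 le_rfl
  refine sub_eq_zero.1 (eq_zero_of_harmonic_of_sublinearGrowth
    (g := fun y t => g y t - poissonIntegral (fun z => g z 0) y t) ?_ ?_ ?_ ?_ ht)
  · exact hcont.sub (continuous_poissonIntegral hbdry hbdryC).continuousOn
  · exact fun y t ht => (hharm y t ht).sub (prodHarmonicAt_poissonIntegral hbdry hbdryC y ht)
  · exact fun y => by rw [poissonIntegral_zero hm, sub_self]
  · exact hgrowth.sub (sublinearGrowth_of_abs_le fun y t _ => abs_poissonIntegral_le hm hbdryC y t)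

theorem kernelIntegral_halfSpacePoissonKernel_eq_tangentialKernel {f f' : Eu m → ℝ} {C C' : ℝ}
    (i : Fin m) (hf : Continuous f) (hf' : Continuous f') (hfC : ∀ z, |f z| ≤ C)
    (hfC' : ∀ z, |f' z| ≤ C')
    (hderiv : ∀ z, HasLineDerivAt ℝ f (f' z) z (EuclideanSpace.single i 1))
    (y : Eu m) {t : ℝ} (ht : 0 < t) :
    kernelIntegral halfSpacePoissonKernel f' y t = kernelIntegral (tangentialKernel i) f y t := by
  have hkernel (z : Eu m) : HasLineDerivAt ℝ (fun z => halfSpacePoissonKernel (y - z) t)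
      (-tangentialKernel i (y - z) t) z (EuclideanSpace.single i 1) := by
    have hneg : HasDerivAt (fun s : ℝ => -s) (-1) 0 := hasDerivAt_neg 0
    have hline := hasLineDerivAt_halfSpacePoissonKernel i (y - z) ht
    refine (HasDerivAt.scomp_of_eq (0 : ℝ) hline hneg neg_zero.symm).congr_of_eventuallyEq
      (Eventually.of_forall fun s => ?_) |>.congr_deriv (by simp)
    simp only [Function.comp_apply, neg_smul, sub_add_eq_sub_sub, ← sub_eq_add_neg]
  have hparts := integral_bilinear_hasLineDerivAt_right_eq_neg_left_of_integrable (μ := volume)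
    (B := ContinuousLinearMap.mul ℝ ℝ) (g' := f')
    (by simpa using ((poissonDominated_tangentialKernel i).integrable_mul hf hfC y ht).neg)
    (poissonDominated_halfSpacePoissonKernel.integrable_mul hf' hfC' y ht)
    (poissonDominated_halfSpacePoissonKernel.integrable_mul hf hfC y ht)
    (fun z _ => hkernel z) fun z _ => hderiv z
  simpa only [kernelIntegral, ContinuousLinearMap.mul_apply', neg_mul, integral_neg, neg_neg]
    using hparts

/-- The length of the gradient of the Poisson kernel. -/
def gradientKernel (z : Eu m) (t : ℝ) : ℝ :=
  √(1 + ((m : ℝ) + 1) * (m - 1) * (t * t) * (poissonDenom z t)⁻¹) * poissonPow z t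

theorem poissonDominated_gradientKernel : PoissonDominated (gradientKernel (m := m)) :=
  ((slabBounded_const 1).add (((slabBounded_const _).mul
    (slabBounded_height.mul slabBounded_height)).mul
      slabBounded_inv_poissonDenom)).sqrt.mul_poissonPow

theorem gradientKernel_nonneg (z : Eu m) {t : ℝ} (ht : 0 < t) : 0 ≤ gradientKernel z t :=
  mul_nonneg (Real.sqrt_nonneg _) (poissonPow_pos z ht).le

theorem sum_tangentialKernel_sq_add_normalKernel_sq (hm : m ≠ 0) (z : Eu m) {t : ℝ} (ht : 0 < t) :
    ∑ i, tangentialKernel i z t ^ 2 + normalKernel z t ^ 2 = gradientKernel z t ^ 2 := by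
  have hpos := poissonDenom_pos z ht
  have hm' : (0 : ℝ) ≤ m - 1 := sub_nonneg.2 (by exact_mod_cast Nat.one_le_iff_ne_zero.2 hm)
  have htangential : ∑ i, tangentialKernel i z t ^ 2 =
      (2 * poissonExponent m * t / poissonDenom z t * poissonPow z t) ^ 2 *
        (poissonDenom z t - t ^ 2) := by
    rw [← norm_sq_eq_poissonDenom_sub, Finset.mul_sum]
    refine Finset.sum_congr rfl fun i _ => ?_
    rw [tangentialKernel]
    ring
  rw [htangential, normalKernel, gradientKernel, mul_pow √_, Real.sq_sqrt (by positivity)]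
  simp only [poissonExponent]
  field_simp
  ring

theorem abs_sum_tangentialKernel_mul_add_le (hm : m ≠ 0) (z : Eu m) {t : ℝ} (ht : 0 < t)
    (a : Fin m → ℝ) (b : ℝ) {M : ℝ} (hM₀ : 0 ≤ M) (hM : ∑ i, a i ^ 2 + b ^ 2 ≤ M ^ 2) :
    |∑ i, tangentialKernel i z t * a i + normalKernel z t * b| ≤ gradientKernel z t * M := by
  refine abs_le_of_sq_le_sq ?_ (mul_nonneg (gradientKernel_nonneg z ht) hM₀)
  have hcauchy := Finset.sum_mul_sq_le_sq_mul_sq (Finset.univ : Finset (Option (Fin m)))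
    (fun o => o.elim (normalKernel z t) fun i => tangentialKernel i z t) (fun o => o.elim b a)
  simp only [Fintype.sum_option, Option.elim] at hcauchy
  rw [add_comm, add_comm (normalKernel z t ^ 2), add_comm (b ^ 2),
    sum_tangentialKernel_sq_add_normalKernel_sq hm z ht] at hcauchy
  calc _ ≤ _ := hcauchy
    _ ≤ gradientKernel z t ^ 2 * M ^ 2 := mul_le_mul_of_nonneg_left hM (sq_nonneg _)
    _ = _ := (mul_pow _ _ 2).symm

theorem integral_gradientKernel (hm : m ≠ 0) (y : Eu m) {t : ℝ} (ht : 0 < t) :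
    4 / sphereArea (m + 1) * ∫ z, gradientKernel (y - z) t = Econst (m + 1) / t := by
  have hscale (w : Eu m) : gradientKernel (t • w) t = (t ^ (m + 1))⁻¹ *
      (√(1 + ((m : ℝ) + 1) * (m - 1) * (1 + ‖w‖ ^ 2)⁻¹) * poissonWeight w) := by
    rw [gradientKernel, poissonPow_smul w ht, poissonDenom_smul, mul_inv, mul_assoc _ (t * t),
      ← mul_assoc (t * t), ← sq, mul_inv_cancel₀ (by positivity), one_mul]
    ring
  rw [integral_sub_left_eq_self (fun z => gradientKernel z t) volume y,
    integral_eq_pow_mul_integral_comp_smul _ ht]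
  simp only [hscale]
  rw [integral_const_mul, Econst_succ_eq_integral hm, pow_succ]
  field_simp

theorem hasDerivAt_poissonIntegral {f : Eu m → ℝ} {C : ℝ} (hf : Continuous f)
    (hfC : ∀ z, |f z| ≤ C) (y : Eu m) {t : ℝ} (ht : 0 < t) :
    HasDerivAt (poissonIntegral f y)
      (2 / sphereArea (m + 1) * kernelIntegral normalKernel f y t) t := by
  refine ((hasDerivAt_kernelIntegral poissonDominated_halfSpacePoissonKernel
    poissonDominated_normalKernel (fun z t ht => hasDerivAt_halfSpacePoissonKernel z ht) hf hfC y
    ht).const_mul _).congr_of_eventuallyEq ?_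
  filter_upwards [lt_mem_nhds ht] with s hs using poissonIntegral_eq_kernelIntegral f y hs

section

variable {f f' : Fin m → Eu m → ℝ} {C : ℝ}

theorem poissonIntegral_sum_eq_sum_kernelIntegral_tangentialKernel (hf : ∀ i, Continuous (f i))
    (hf' : ∀ i, Continuous (f' i)) (hfC : ∀ i z, |f i z| ≤ C) (hfC' : ∀ i z, |f' i z| ≤ C)
    (hderiv : ∀ i z, HasLineDerivAt ℝ (f i) (f' i z) z (EuclideanSpace.single i 1))
    (y : Eu m) {t : ℝ} (ht : 0 < t) :
    poissonIntegral (fun z => ∑ i, f' i z) y t =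
      2 / sphereArea (m + 1) * ∑ i, kernelIntegral (tangentialKernel i) (f i) y t := by
  have hsum : kernelIntegral halfSpacePoissonKernel (fun z => ∑ i, f' i z) y t =
      ∑ i, kernelIntegral halfSpacePoissonKernel (f' i) y t := by
    simp only [kernelIntegral, Finset.mul_sum]
    exact integral_finsetSum _ fun i _ =>
      poissonDominated_halfSpacePoissonKernel.integrable_mul (hf' i) (hfC' i) y ht
  rw [poissonIntegral_eq_kernelIntegral _ y ht, hsum]
  exact congrArg _ (Finset.sum_congr rfl fun i _ =>
    kernelIntegral_halfSpacePoissonKernel_eq_tangentialKernel i (hf i) (hf' i) (hfC i) (hfC' i)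
      (hderiv i) y ht)

theorem abs_sum_kernelIntegral_add_kernelIntegral_le (hm : m ≠ 0) {h : Eu m → ℝ} {D M : ℝ}
    (hf : ∀ i, Continuous (f i)) (hfC : ∀ i z, |f i z| ≤ C) (hh : Continuous h)
    (hhD : ∀ z, |h z| ≤ D) (hM₀ : 0 ≤ M) (hM : ∀ z, ∑ i, f i z ^ 2 + h z ^ 2 ≤ M ^ 2)
    (y : Eu m) {t : ℝ} (ht : 0 < t) :
    |∑ i, kernelIntegral (tangentialKernel i) (f i) y t + kernelIntegral normalKernel h y t| ≤
      (∫ z, gradientKernel (y - z) t) * M := by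
  have hint (i : Fin m) : Integrable fun z => tangentialKernel i (y - z) t * f i z :=
    (poissonDominated_tangentialKernel i).integrable_mul (hf i) (hfC i) y ht
  have hgrad : Integrable fun z => gradientKernel (y - z) t := by
    simpa using poissonDominated_gradientKernel.integrable_mul continuous_const
      (fun _ => (abs_one (α := ℝ)).le) y ht
  simp only [kernelIntegral]
  rw [← integral_finsetSum _ fun i _ => hint i, ← integral_add
    (integrable_finsetSum _ fun i _ => hint i)
    (poissonDominated_normalKernel.integrable_mul hh hhD y ht), ← integral_mul_const,
    ← Real.norm_eq_abs]
  refine norm_integral_le_of_norm_le (hgrad.mul_const M) (Eventually.of_forall fun z => ?_)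
  exact abs_sum_tangentialKernel_mul_add_le hm _ ht (fun i => f i z) (h z) hM₀ (hM z)

theorem abs_two_mul_add_normalDeriv_le (hm : m ≠ 0) {g w : Eu m → ℝ → ℝ} {M a t : ℝ} {y : Eu m}
    (ht : 0 < t) (hM₀ : 0 ≤ M)
    (hgcont : ContinuousOn (fun z : Eu m × ℝ => g z.1 z.2) {z | 0 ≤ z.2})
    (hwcont : ContinuousOn (fun z : Eu m × ℝ => w z.1 z.2) {z | 0 ≤ z.2})
    (hg : ∀ y t, 0 < t → ProdHarmonicAt g y t) (hw : ∀ y t, 0 < t → ProdHarmonicAt w y t)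
    (hggrowth : SublinearGrowth g) (hwgrowth : SublinearGrowth w)
    (hf : ∀ i, Continuous (f i)) (hf' : ∀ i, Continuous (f' i))
    (hfC : ∀ i z, |f i z| ≤ C) (hfC' : ∀ i z, |f' i z| ≤ C)
    (hderiv : ∀ i z, HasLineDerivAt ℝ (f i) (f' i z) z (EuclideanSpace.single i 1))
    (hbdry : ∀ z, g z 0 = ∑ i, f' i z) (hM : ∀ z, ∑ i, f i z ^ 2 + w z 0 ^ 2 ≤ M ^ 2)
    (ha : HasDerivAt (w y) a t) :
    |2 * (g y t + a)| ≤ Econst (m + 1) / t * M := by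
  obtain ⟨D, hD⟩ := hwgrowth.exists_bound
  have hw₀ : Continuous fun z => w z 0 := continuous_boundaryValue hwcont
  have hw₀D (z : Eu m) : |w z 0| ≤ D := by simpa using hD z 0 le_rfl
  have hg_eq : g y t = 2 / sphereArea (m + 1) *
      ∑ i, kernelIntegral (tangentialKernel i) (f i) y t := by
    rw [eq_poissonIntegral_of_harmonic hm hgcont hg hggrowth y ht.le, funext hbdry,
      poissonIntegral_sum_eq_sum_kernelIntegral_tangentialKernel hf hf' hfC hfC' hderiv y ht]
  have ha_eq : a = 2 / sphereArea (m + 1) * kernelIntegral normalKernel (fun z => w z 0) y t := by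
    refine ha.unique ((hasDerivAt_poissonIntegral hw₀ hw₀D y ht).congr_of_eventuallyEq ?_)
    filter_upwards [lt_mem_nhds ht] with s hs
    exact eq_poissonIntegral_of_harmonic hm hwcont hw hwgrowth y hs.le
  have hpos : 0 < sphereArea (m + 1) := sphereArea_pos m.succ_ne_zero
  rw [hg_eq, ha_eq, ← mul_add, ← mul_assoc, mul_div_assoc', abs_mul, abs_of_pos (by positivity),
    ← integral_gradientKernel hm y ht, mul_assoc]
  norm_num
  gcongr
  exact abs_sum_kernelIntegral_add_kernelIntegral_le hm hf hfC hw₀ hw₀D hM₀ hM y ht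

end

end Poisson

/-! ### Vector calculus -/

section VectorCalculus

open scoped ContDiff Gradient Laplacian

section DirDeriv

variable {E F : Type*} [NormedAddCommGroup E] [NormedSpace ℝ E] [NormedAddCommGroup F]
  [NormedSpace ℝ F] {f g : E → F} {x : E} {U : Set E}

/-- The derivative of `f` in the constant direction `v`, as a function of the base point. -/
def dirDeriv (v : E) (f : E → F) (x : E) : F := fderiv ℝ f x v

theorem hasLineDerivAt_dirDeriv (v : E) (hf : DifferentiableAt ℝ f x) :
    HasLineDerivAt ℝ f (dirDeriv v f x) x v :=
  hf.hasFDerivAt.hasLineDerivAt v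

theorem dirDeriv_congr (v : E) (h : f =ᶠ[𝓝 x] g) : dirDeriv v f x = dirDeriv v g x := by
  rw [dirDeriv, dirDeriv, h.fderiv_eq]

theorem contDiff_dirDeriv (v : E) {k n : WithTop ℕ∞} (hf : ContDiff ℝ n f) (hkn : k + 1 ≤ n) :
    ContDiff ℝ k (dirDeriv v f) :=
  (hf.fderiv_right hkn).clm_apply contDiff_const

theorem contDiffOn_dirDeriv (v : E) {k n : WithTop ℕ∞} (hU : IsOpen U) (hf : ContDiffOn ℝ n f U)
    (hkn : k + 1 ≤ n) : ContDiffOn ℝ k (dirDeriv v f) U :=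
  (hf.fderiv_of_isOpen hU hkn).clm_apply contDiffOn_const

theorem dirDeriv_sub (v : E) (hf : DifferentiableAt ℝ f x) (hg : DifferentiableAt ℝ g x) :
    dirDeriv v (fun z => f z - g z) x = dirDeriv v f x - dirDeriv v g x := by
  simp only [dirDeriv, fderiv_fun_sub hf hg, sub_apply]

theorem dirDeriv_clm_comp (v : E) {G : Type*} [NormedAddCommGroup G] [NormedSpace ℝ G]
    (L : F →L[ℝ] G) (hf : DifferentiableAt ℝ f x) :
    dirDeriv v (fun z => L (f z)) x = L (dirDeriv v f x) :=
  DFunLike.congr_fun (L.hasFDerivAt.comp x hf.hasFDerivAt).fderiv v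

theorem dirDeriv_finsetSum {ι : Type*} (s : Finset ι) (v : E) {f : ι → E → F}
    (hf : ∀ i ∈ s, DifferentiableAt ℝ (f i) x) :
    dirDeriv v (fun z => ∑ i ∈ s, f i z) x = ∑ i ∈ s, dirDeriv v (f i) x := by
  simp only [dirDeriv, fderiv_fun_sum hf, sum_apply]

theorem dirDeriv_dirDeriv (v w : E) (hf : ContDiffAt ℝ 2 f x) :
    dirDeriv v (dirDeriv w f) x = fderiv ℝ (fderiv ℝ f) x v w := by
  have hf' : DifferentiableAt ℝ (fderiv ℝ f) x :=
    (hf.fderiv_right (m := 1) (by norm_num)).differentiableAt (by simp)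
  exact dirDeriv_clm_comp v (ContinuousLinearMap.apply ℝ F w) hf'

theorem dirDeriv_comm (v w : E) (hf : ContDiffAt ℝ 2 f x) :
    dirDeriv v (dirDeriv w f) x = dirDeriv w (dirDeriv v f) x := by
  rw [dirDeriv_dirDeriv v w hf, dirDeriv_dirDeriv w v hf]
  exact hf.isSymmSndFDerivAt (by simp) v w

end DirDeriv

variable {E F ι : Type*} [NormedAddCommGroup E] [InnerProductSpace ℝ E]
  [NormedAddCommGroup F] [NormedSpace ℝ F] [Fintype ι] {x : E}

/-- The signed height of `z` over the hyperplane through `q` with normal vector `ν`. -/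
def height (ν q z : E) : ℝ := ⟪ν, z - q⟫

theorem contDiff_height (ν q : E) {n : WithTop ℕ∞} : ContDiff ℝ n (height ν q) :=
  contDiff_const.inner ℝ (contDiff_id.sub contDiff_const)

theorem continuous_height (ν q : E) : Continuous (height ν q) :=
  (contDiff_height ν q (n := 0)).continuous

theorem isOpen_setOf_lt_height (ν q : E) (s : ℝ) : IsOpen {z | s < height ν q z} :=
  isOpen_lt continuous_const (continuous_height ν q)

theorem height_sub_height (ν q y z : E) : height ν q y - height ν q z = ⟪ν, y - z⟫ := by
  rw [height, height, ← inner_sub_right, sub_sub_sub_cancel_right]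

theorem height_add_smul {ν : E} (hν : ‖ν‖ = 1) (q z : E) (s : ℝ) :
    height ν q (z + s • ν) = height ν q z + s := by
  rw [height, height, add_sub_right_comm, inner_add_right, inner_smul_right,
    real_inner_self_eq_norm_sq, hν]
  ring

theorem height_self_add_smul {ν : E} (hν : ‖ν‖ = 1) (q : E) (s : ℝ) :
    height ν q (q + s • ν) = s := by
  rw [height_add_smul hν, height, sub_self, inner_zero_right, zero_add]

theorem height_sub_le_dist {ν : E} (hν : ‖ν‖ = 1) (q y z : E) :
    height ν q y - height ν q z ≤ dist y z := by
  rw [height_sub_height, dist_eq_norm]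
  simpa only [hν, one_mul] using real_inner_le_norm ν (y - z)

theorem dirDeriv_height (ν q v x : E) : dirDeriv v (height ν q) x = ⟪ν, v⟫ := by
  have h : HasFDerivAt (height ν q) (innerSL ℝ ν) x :=
    (innerSL ℝ ν).hasFDerivAt.comp x ((hasFDerivAt_id x).sub_const q)
  rw [dirDeriv, h.fderiv, innerSL_apply_apply]

theorem dirDeriv_height_mul (ν q v : E) {f : E → ℝ} (hf : DifferentiableAt ℝ f x) :
    dirDeriv v (fun z => height ν q z * f z) x
      = ⟪ν, v⟫ * f x + height ν q x * dirDeriv v f x := by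
  rw [← dirDeriv_height ν q v x]
  simp only [dirDeriv, fderiv_fun_mul ((contDiff_height ν q (n := 1)).differentiable
    (by simp) x) hf, add_apply, smul_apply, smul_eq_mul]
  ring

/-- The divergence of a vector field, as the trace of its derivative. -/
def divergence (u : E → E) (x : E) : ℝ := LinearMap.trace ℝ E (fderiv ℝ u x)

theorem divergence_eq_sum (b : OrthonormalBasis ι ℝ E) (u : E → E) :
    divergence u x = ∑ i, ⟪b i, dirDeriv (b i) u x⟫ :=
  LinearMap.trace_eq_sum_inner (fderiv ℝ u x : E →ₗ[ℝ] E) b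

theorem divergence_congr {u v : E → E} (h : u =ᶠ[𝓝 x] v) : divergence u x = divergence v x := by
  rw [divergence, divergence, h.fderiv_eq]

variable [FiniteDimensional ℝ E]

theorem laplacian_eq_sum_dirDeriv (b : OrthonormalBasis ι ℝ E) {f : E → F}
    (hf : ContDiffAt ℝ 2 f x) : Δ f x = ∑ i, dirDeriv (b i) (dirDeriv (b i) f) x := by
  simp only [InnerProductSpace.laplacian_eq_iteratedFDeriv_orthonormalBasis f b,
    iteratedFDeriv_two_apply, dirDeriv_dirDeriv _ _ hf, Matrix.cons_val_zero, Matrix.cons_val_one]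

theorem contDiff_laplacian {f : E → F} {k n : WithTop ℕ∞} (hf : ContDiff ℝ n f)
    (hkn : k + 2 ≤ n) : ContDiff ℝ k (Δ f) := by
  rw [show Δ f = fun z => ∑ i, dirDeriv (stdOrthonormalBasis ℝ E i)
      (dirDeriv (stdOrthonormalBasis ℝ E i) f) z from funext fun z =>
    laplacian_eq_sum_dirDeriv _ (hf.of_le (le_add_self.trans hkn)).contDiffAt]
  refine ContDiff.sum fun i _ => contDiff_dirDeriv _ (contDiff_dirDeriv _ hf ?_) le_rfl
  rwa [add_assoc, one_add_one_eq_two]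

theorem laplacian_dirDeriv (v : E) {f : E → F} (hf : ContDiff ℝ 3 f) :
    Δ (dirDeriv v f) x = dirDeriv v (Δ f) x := by
  let b := stdOrthonormalBasis ℝ E
  have hf₂ : ContDiff ℝ 2 f := hf.of_le (by norm_num)
  have hd (w : E) : ContDiff ℝ 2 (dirDeriv w f) := contDiff_dirDeriv w hf (by norm_num)
  have hdd (w : E) : ContDiff ℝ 1 (dirDeriv w (dirDeriv w f)) :=
    contDiff_dirDeriv w (hd w) (by norm_num)
  have hΔ : Δ f = fun z => ∑ i, dirDeriv (b i) (dirDeriv (b i) f) z :=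
    funext fun z => laplacian_eq_sum_dirDeriv b hf₂.contDiffAt
  rw [laplacian_eq_sum_dirDeriv b (hd v).contDiffAt, hΔ,
    dirDeriv_finsetSum _ _ fun i _ => (hdd _).differentiable (by simp) x]
  refine Finset.sum_congr rfl fun i _ => ?_
  rw [show dirDeriv (b i) (dirDeriv v f) = dirDeriv v (dirDeriv (b i) f) from
    funext fun z => dirDeriv_comm _ _ hf₂.contDiffAt, dirDeriv_comm _ _ (hd _).contDiffAt]

theorem laplacian_height_mul (ν q : E) {f : E → ℝ} (hf : ContDiff ℝ 2 f) :
    Δ (fun z => height ν q z * f z) x = 2 * dirDeriv ν f x + height ν q x * Δ f x := by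
  let b := stdOrthonormalBasis ℝ E
  have hh : ContDiff ℝ 2 (height ν q) := contDiff_height ν q
  have hf₁ : Differentiable ℝ f := hf.differentiable (by simp)
  have hd (v : E) : Differentiable ℝ (dirDeriv v f) :=
    (contDiff_dirDeriv v hf (k := 1) (by norm_num)).differentiable (by simp)
  have hsecond (v : E) : dirDeriv v (dirDeriv v fun z => height ν q z * f z) x
      = 2 * (⟪ν, v⟫ * dirDeriv v f x) + height ν q x * dirDeriv v (dirDeriv v f) x := by
    have hfirst : dirDeriv v (fun z => height ν q z * f z)
        = fun z => height ν q z * dirDeriv v f z - -⟪ν, v⟫ * f z :=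
      funext fun z => (dirDeriv_height_mul ν q v (hf₁ z)).trans (by ring)
    have hconst : dirDeriv v (fun z => -⟪ν, v⟫ * f z) x = -⟪ν, v⟫ * dirDeriv v f x :=
      dirDeriv_clm_comp v (-⟪ν, v⟫ • ContinuousLinearMap.id ℝ ℝ) (hf₁ x)
    rw [hfirst, dirDeriv_sub v ((hh.differentiable (by simp) x).fun_mul (hd v x))
      ((hf₁ x).const_mul _), dirDeriv_height_mul ν q v (hd v x), hconst]
    ring
  have hν : dirDeriv ν f x = ∑ i, ⟪ν, b i⟫ * dirDeriv (b i) f x := by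
    conv_lhs => rw [← b.sum_repr' ν]
    simp only [dirDeriv, map_sum, map_smul, smul_eq_mul, real_inner_comm]
  rw [laplacian_eq_sum_dirDeriv b (hh.mul hf).contDiffAt, laplacian_eq_sum_dirDeriv b hf.contDiffAt,
    hν]
  simp only [hsecond, Finset.sum_add_distrib, Finset.mul_sum]

theorem inner_gradient_eq_dirDeriv (v : E) (f : E → ℝ) : ⟪v, ∇ f x⟫ = dirDeriv v f x := by
  rw [dirDeriv, real_inner_comm, inner_gradient_left]

theorem divergence_gradient {f : E → ℝ} (hf : ContDiff ℝ 2 f) :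
    divergence (∇ f) x = Δ f x := by
  have hgrad : DifferentiableAt ℝ (∇ f) x :=
    (InnerProductSpace.toDual ℝ E).symm.toContinuousLinearEquiv.differentiable.differentiableAt.comp
      x ((hf.fderiv_right (m := 1) (by norm_num)).differentiable (by simp) x)
  rw [divergence_eq_sum (stdOrthonormalBasis ℝ E),
    laplacian_eq_sum_dirDeriv (stdOrthonormalBasis ℝ E) hf.contDiffAt]
  refine Finset.sum_congr rfl fun i _ => ?_
  rw [← innerSL_apply_apply ℝ, ← dirDeriv_clm_comp _ _ hgrad]
  simp only [innerSL_apply_apply, inner_gradient_eq_dirDeriv]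

theorem divergence_laplacian {u : E → E} (hu : ContDiff ℝ 3 u) :
    divergence (Δ u) x = Δ (divergence u) x := by
  let b := stdOrthonormalBasis ℝ E
  have hdu (v : E) : ContDiff ℝ 2 (dirDeriv v u) := contDiff_dirDeriv v hu (by norm_num)
  have hterm (i) : ContDiff ℝ 2 fun z => ⟪b i, dirDeriv (b i) u z⟫ :=
    contDiff_const.inner ℝ (hdu _)
  have hsum : Δ (fun z => ∑ i, ⟪b i, dirDeriv (b i) u z⟫) x
      = ∑ i, Δ (fun z => ⟪b i, dirDeriv (b i) u z⟫) x := by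
    rw [laplacian_eq_sum_dirDeriv b (ContDiff.sum fun i _ => hterm i).contDiffAt]
    simp only [laplacian_eq_sum_dirDeriv b (hterm _).contDiffAt]
    rw [Finset.sum_comm]
    refine Finset.sum_congr rfl fun j _ => ?_
    rw [show dirDeriv (b j) (fun z => ∑ i, ⟪b i, dirDeriv (b i) u z⟫)
      = fun z => ∑ i, dirDeriv (b j) (fun z => ⟪b i, dirDeriv (b i) u z⟫) z from
      funext fun z => dirDeriv_finsetSum _ _ fun i _ => (hterm i).differentiable (by simp) z]
    exact dirDeriv_finsetSum _ _ fun i _ =>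
      (contDiff_dirDeriv (b j) (hterm i) (k := 1) (by norm_num)).differentiable (by simp) x
  rw [divergence_eq_sum b, show divergence u = fun z => ∑ i, ⟪b i, dirDeriv (b i) u z⟫ from
    funext fun z => divergence_eq_sum b u, hsum]
  refine Finset.sum_congr rfl fun i _ => ?_
  rw [← laplacian_dirDeriv _ hu]
  exact ((hdu (b i)).contDiffAt.laplacian_CLM_comp_left (l := innerSL ℝ (b i))).symm

end VectorCalculus

/-! ### Smooth Stokes flows over a half-space -/

section SmoothStokes

open scoped ContDiff Gradient Laplacian

variable {E : Type*} [NormedAddCommGroup E] [InnerProductSpace ℝ E]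
  {u : E → E} {p : E → ℝ} {ν q z : E} {U V : Set E}

/-- The harmonic function `u_ν - t p / 2` of a Stokes flow, where `t` is the height over a
hyperplane with normal `ν`: it has the boundary values of `u_ν` there. -/
def harmonicNormalVelocity (u : E → E) (p : E → ℝ) (ν q z : E) : ℝ :=
  ⟪ν, u z⟫ - height ν q z * (p z / 2)

/-- The harmonic function `t ∂_ν p / 2 - ∂_ν u_ν` of a Stokes flow, where `t` is the height over a
hyperplane with normal `ν`: it has the boundary values of the tangential divergence there. -/
def harmonicTangentialDivergence (u : E → E) (p : E → ℝ) (ν q z : E) : ℝ :=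
  height ν q z * (dirDeriv ν p z / 2) - ⟪ν, dirDeriv ν u z⟫

theorem contDiff_harmonicNormalVelocity {n : WithTop ℕ∞} (hu : ContDiff ℝ n u)
    (hp : ContDiff ℝ n p) (ν q : E) : ContDiff ℝ n (harmonicNormalVelocity u p ν q) :=
  (contDiff_const.inner ℝ hu).sub ((contDiff_height ν q).mul (hp.div_const 2))

theorem contDiff_harmonicTangentialDivergence {k n : WithTop ℕ∞} (hu : ContDiff ℝ n u)
    (hp : ContDiff ℝ n p) (hkn : k + 1 ≤ n) (ν q : E) :
    ContDiff ℝ k (harmonicTangentialDivergence u p ν q) :=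
  ((contDiff_height ν q).mul ((contDiff_dirDeriv ν hp hkn).div_const 2)).sub
    (contDiff_const.inner ℝ (contDiff_dirDeriv ν hu hkn))

theorem dirDeriv_div_const {f : E → ℝ} (v : E) (c : ℝ) (hf : DifferentiableAt ℝ f z) :
    dirDeriv v (fun y => f y / c) z = dirDeriv v f z / c := by
  simp only [div_eq_inv_mul]
  exact dirDeriv_clm_comp v (c⁻¹ • ContinuousLinearMap.id ℝ ℝ) hf

theorem pressure_eq_neg_two_mul (hν : ‖ν‖ = 1) (hu : DifferentiableAt ℝ u z)
    (hp : DifferentiableAt ℝ p z) :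
    p z = -(2 * (harmonicTangentialDivergence u p ν q z
      + dirDeriv ν (harmonicNormalVelocity u p ν q) z)) := by
  have hh : DifferentiableAt ℝ (height ν q) z :=
    (contDiff_height ν q (n := 1)).differentiable (by simp) z
  have hinner : dirDeriv ν (fun y => ⟪ν, u y⟫) z = ⟪ν, dirDeriv ν u z⟫ :=
    dirDeriv_clm_comp ν (innerSL ℝ ν) hu
  have hp₂ : DifferentiableAt ℝ (fun y => p y / 2) z := by
    simpa only [div_eq_mul_inv] using hp.mul_const (2 : ℝ)⁻¹
  unfold harmonicTangentialDivergence harmonicNormalVelocity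
  rw [dirDeriv_sub ν ((differentiableAt_const ν).inner ℝ hu) (hh.fun_mul hp₂),
    dirDeriv_height_mul ν q ν hp₂, dirDeriv_div_const ν 2 hp, hinner,
    real_inner_self_eq_norm_sq, hν]
  ring

variable [FiniteDimensional ℝ E]

theorem laplacian_div_const {f : E → ℝ} (c : ℝ) (hf : ContDiffAt ℝ 2 f z) :
    Δ (fun y => f y / c) z = Δ f z / c := by
  simp only [div_eq_inv_mul]
  exact InnerProductSpace.laplacian_smul c⁻¹ hf

/-- `u` and `p` are the velocity and the pressure of a classical solution of the Stokes system
`Δu = ∇p`, `div u = 0` in `U`. -/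
structure IsStokesSolutionOn (u : E → E) (p : E → ℝ) (U : Set E) : Prop where
  contDiffOn_velocity : ContDiffOn ℝ 2 u U
  contDiffOn_pressure : ContDiffOn ℝ 1 p U
  laplacian_eq_gradient : ∀ z ∈ U, Δ u z = ∇ p z
  divergence_eq_zero : ∀ z ∈ U, divergence u z = 0

namespace IsStokesSolutionOn

theorem mono (h : IsStokesSolutionOn u p U) (hVU : V ⊆ U) : IsStokesSolutionOn u p V where
  contDiffOn_velocity := h.contDiffOn_velocity.mono hVU
  contDiffOn_pressure := h.contDiffOn_pressure.mono hVU
  laplacian_eq_gradient z hz := h.laplacian_eq_gradient z (hVU hz)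
  divergence_eq_zero z hz := h.divergence_eq_zero z (hVU hz)

theorem congr (h : IsStokesSolutionOn u p U) (hU : IsOpen U) {u' : E → E} {p' : E → ℝ}
    (hu : Set.EqOn u' u U) (hp : Set.EqOn p' p U) : IsStokesSolutionOn u' p' U where
  contDiffOn_velocity := h.contDiffOn_velocity.congr hu
  contDiffOn_pressure := h.contDiffOn_pressure.congr hp
  laplacian_eq_gradient z hz := by
    have hu' : u' =ᶠ[𝓝 z] u := hu.eventuallyEq_of_mem (hU.mem_nhds hz)
    rw [(InnerProductSpace.laplacian_congr_nhds hu').eq_of_nhds,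
      (hp.eventuallyEq_of_mem (hU.mem_nhds hz)).gradient_eq, h.laplacian_eq_gradient z hz]
  divergence_eq_zero z hz := by
    rw [divergence_congr (hu.eventuallyEq_of_mem (hU.mem_nhds hz)), h.divergence_eq_zero z hz]

theorem inner_laplacian (h : IsStokesSolutionOn u p U) (hz : z ∈ U) (v : E) :
    ⟪v, Δ u z⟫ = dirDeriv v p z := by
  rw [h.laplacian_eq_gradient z hz, inner_gradient_eq_dirDeriv]

theorem laplacian_pressure_eq_zero (h : IsStokesSolutionOn u p U) (hU : IsOpen U)
    (hu : ContDiff ℝ 3 u) (hp : ContDiff ℝ 2 p) (hz : z ∈ U) : Δ p z = 0 := by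
  have hdiv : divergence u =ᶠ[𝓝 z] fun _ => 0 :=
    eventually_of_mem (hU.mem_nhds hz) h.divergence_eq_zero
  have hΔ : Δ u =ᶠ[𝓝 z] ∇ p := eventually_of_mem (hU.mem_nhds hz) h.laplacian_eq_gradient
  calc Δ p z = divergence (∇ p) z := (divergence_gradient hp).symm
    _ = divergence (Δ u) z := (divergence_congr hΔ).symm
    _ = Δ (divergence u) z := divergence_laplacian hu
    _ = Δ (fun _ : E => (0 : ℝ)) z := (InnerProductSpace.laplacian_congr_nhds hdiv).eq_of_nhds
    _ = 0 := by rw [InnerProductSpace.laplacian_const, Pi.zero_apply]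

theorem laplacian_harmonicNormalVelocity (h : IsStokesSolutionOn u p U) (hU : IsOpen U)
    (hu : ContDiff ℝ 3 u) (hp : ContDiff ℝ 2 p) (hz : z ∈ U) :
    Δ (harmonicNormalVelocity u p ν q) z = 0 := by
  have hu₂ : ContDiff ℝ 2 u := hu.of_le (by norm_num)
  have hinner : Δ (fun y => ⟪ν, u y⟫) z = ⟪ν, Δ u z⟫ :=
    hu₂.contDiffAt.laplacian_CLM_comp_left (l := innerSL ℝ ν)
  have hsub : Δ (harmonicNormalVelocity u p ν q) z
      = Δ (fun y => ⟪ν, u y⟫) z - Δ (fun y => height ν q y * (p y / 2)) z :=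
    (contDiff_const.inner ℝ hu₂).contDiffAt.laplacian_sub
      ((contDiff_height ν q).mul (hp.div_const 2)).contDiffAt
  rw [hsub, hinner, h.inner_laplacian hz, laplacian_height_mul ν q (hp.div_const 2),
    laplacian_div_const 2 hp.contDiffAt, h.laplacian_pressure_eq_zero hU hu hp hz,
    dirDeriv_div_const ν 2 (hp.differentiable (by simp) z)]
  ring

theorem laplacian_dirDeriv_pressure (h : IsStokesSolutionOn u p U) (hU : IsOpen U)
    (hu : ContDiff ℝ 3 u) (hp : ContDiff ℝ 3 p) (hz : z ∈ U) (v : E) :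
    Δ (dirDeriv v p) z = 0 := by
  have hzero : Δ p =ᶠ[𝓝 z] fun _ => 0 := eventually_of_mem (hU.mem_nhds hz) fun y hy =>
    h.laplacian_pressure_eq_zero hU hu (hp.of_le (by norm_num)) hy
  rw [laplacian_dirDeriv v hp, dirDeriv_congr v hzero, dirDeriv, fderiv_fun_const, Pi.zero_apply,
    zero_apply]

theorem laplacian_inner_dirDeriv_velocity (h : IsStokesSolutionOn u p U) (hU : IsOpen U)
    (hu : ContDiff ℝ 3 u) (hz : z ∈ U) (v w : E) :
    Δ (fun y => ⟪v, dirDeriv w u y⟫) z = dirDeriv w (dirDeriv v p) z := by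
  have hdu : ContDiff ℝ 2 (dirDeriv w u) := contDiff_dirDeriv w hu (by norm_num)
  have hΔu : DifferentiableAt ℝ (Δ u) z :=
    (contDiff_laplacian hu (k := 1) (by norm_num)).differentiable (by simp) z
  have hgrad : (fun y => ⟪v, Δ u y⟫) =ᶠ[𝓝 z] dirDeriv v p :=
    eventually_of_mem (hU.mem_nhds hz) fun y hy => h.inner_laplacian hy v
  calc Δ (fun y => ⟪v, dirDeriv w u y⟫) z = ⟪v, Δ (dirDeriv w u) z⟫ :=
        hdu.contDiffAt.laplacian_CLM_comp_left (l := innerSL ℝ v)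
    _ = ⟪v, dirDeriv w (Δ u) z⟫ := by rw [laplacian_dirDeriv w hu]
    _ = dirDeriv w (fun y => ⟪v, Δ u y⟫) z := (dirDeriv_clm_comp w (innerSL ℝ v) hΔu).symm
    _ = dirDeriv w (dirDeriv v p) z := dirDeriv_congr w hgrad

theorem laplacian_harmonicTangentialDivergence (h : IsStokesSolutionOn u p U) (hU : IsOpen U)
    (hu : ContDiff ℝ 3 u) (hp : ContDiff ℝ 3 p) (hz : z ∈ U) :
    Δ (harmonicTangentialDivergence u p ν q) z = 0 := by
  have hdu : ContDiff ℝ 2 (dirDeriv ν u) := contDiff_dirDeriv ν hu (by norm_num)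
  have hdp : ContDiff ℝ 2 (dirDeriv ν p) := contDiff_dirDeriv ν hp (by norm_num)
  have hsub : Δ (harmonicTangentialDivergence u p ν q) z
      = Δ (fun y => height ν q y * (dirDeriv ν p y / 2)) z
        - Δ (fun y => ⟪ν, dirDeriv ν u y⟫) z :=
    ((contDiff_height ν q).mul (hdp.div_const 2)).contDiffAt.laplacian_sub
      (contDiff_const.inner ℝ hdu).contDiffAt
  rw [hsub, h.laplacian_inner_dirDeriv_velocity hU hu hz, laplacian_height_mul ν q
    (hdp.div_const 2), laplacian_div_const 2 hdp.contDiffAt,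
    h.laplacian_dirDeriv_pressure hU hu hp hz, dirDeriv_div_const ν 2
    (hdp.differentiable (by simp) z)]
  ring

end IsStokesSolutionOn

end SmoothStokes

section HalfSpaceCoord

open scoped Laplacian

variable {E : Type*} [NormedAddCommGroup E] [InnerProductSpace ℝ E] {u : E → E} {p : E → ℝ}
  {ν q z : E}

/-- `f` tends to zero as the height over the hyperplane through `q` with normal vector `ν` tends to
infinity, uniformly in the tangential directions. -/
def DecaysAtHeight (ν q : E) (f : E → ℝ) : Prop :=
  ∀ ε > 0, ∃ R : ℝ, ∀ z, R ≤ height ν q z → |f z| ≤ ε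

theorem hasSecondDerivAt_comp_add_smul (v x : E) (s : ℝ) {f : E → ℝ} (hf : ContDiff ℝ 2 f) :
    HasSecondDerivAt (fun r => f (x + r • v)) (dirDeriv v (dirDeriv v f) (x + s • v)) s :=
  ⟨fun r => dirDeriv v f (x + r • v),
    Eventually.of_forall fun _ => hasDerivAt_of_hasLineDerivAt_add_smul
      (hasLineDerivAt_dirDeriv v (hf.differentiable (by simp) _)),
    hasDerivAt_of_hasLineDerivAt_add_smul (hasLineDerivAt_dirDeriv v
      ((contDiff_dirDeriv v hf (k := 1) (by norm_num)).differentiable (by simp) _))⟩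

theorem abs_le_of_abs_dirDeriv_le {f : E → ℝ} {C R : ℝ} (v : E) (hf : Differentiable ℝ f)
    (hR : 0 ≤ R) (hC : ∀ s : ℝ, 0 ≤ s → |dirDeriv v f (z + s • v)| ≤ C) :
    |f z| ≤ |f (z + R • v)| + C * R := by
  have hmvt : ‖f (z + R • v) - f (z + (0 : ℝ) • v)‖ ≤ C * ‖R - 0‖ :=
    (convex_Icc (0 : ℝ) R).norm_image_sub_le_of_norm_hasDerivWithin_le
      (f := fun s : ℝ => f (z + s • v)) (f' := fun s => dirDeriv v f (z + s • v))
      (fun s _ => (hasDerivAt_of_hasLineDerivAt_add_smul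
        (hasLineDerivAt_dirDeriv v (hf _))).hasDerivWithinAt)
      (fun s hs => hC s hs.1) ⟨le_rfl, hR⟩ ⟨hR, le_rfl⟩
  rw [sub_zero, zero_smul, add_zero, Real.norm_eq_abs, norm_of_nonneg hR] at hmvt
  linarith [abs_sub_abs_le_abs_sub (f z) (f (z + R • v)), abs_sub_comm (f z) (f (z + R • v))]

theorem DecaysAtHeight.exists_abs_le {f : E → ℝ} {C : ℝ} (hf : DecaysAtHeight ν q f)
    (hν : ‖ν‖ = 1) (hdiff : Differentiable ℝ f)
    (hC : ∀ z, 0 ≤ height ν q z → |dirDeriv ν f z| ≤ C) :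
    ∃ C', ∀ z, 0 ≤ height ν q z → |f z| ≤ C' := by
  obtain ⟨R, hR⟩ := hf 1 one_pos
  refine ⟨1 + C * max R 0, fun z hz => ?_⟩
  have hfar : |f (z + max R 0 • ν)| ≤ 1 := hR _ <| by
    rw [height_add_smul hν]
    linarith [le_max_left R 0]
  have hstep := abs_le_of_abs_dirDeriv_le (z := z) ν hdiff (le_max_right R 0) fun s hs =>
    hC _ (by rw [height_add_smul hν]; positivity)
  linarith

section Coordinates

variable {m : ℕ} (b : OrthonormalBasis (Fin (m + 1)) ℝ E) (q : E)

/-- The point with tangential coordinates `y` and height `t` in the Euclidean coordinates with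
origin `q` and axes `b`, the last of which is the height axis. -/
def halfSpaceCoord (y : Eu m) (t : ℝ) : E :=
  q + ∑ j, y j • b j.castSucc + t • b (Fin.last m)

theorem halfSpaceCoord_zero_left (t : ℝ) :
    halfSpaceCoord b q 0 t = q + t • b (Fin.last m) := by
  simp [halfSpaceCoord]

theorem halfSpaceCoord_zero_right_add_smul (y : Eu m) (t : ℝ) :
    halfSpaceCoord b q y 0 + t • b (Fin.last m) = halfSpaceCoord b q y t := by
  rw [halfSpaceCoord, halfSpaceCoord, zero_smul, add_zero]

theorem halfSpaceCoord_add_smul_single (y : Eu m) (t s : ℝ) (i : Fin m) :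
    halfSpaceCoord b q (y + s • EuclideanSpace.single i 1) t
      = halfSpaceCoord b q y t + s • b i.castSucc := by
  have hsum : ∑ j, (y + s • EuclideanSpace.single i (1 : ℝ)) j • b j.castSucc
      = ∑ j, y j • b j.castSucc + s • b i.castSucc := by
    simp [add_smul, Finset.sum_add_distrib]
  rw [halfSpaceCoord, halfSpaceCoord, hsum]
  abel

theorem continuous_halfSpaceCoord :
    Continuous fun z : Eu m × ℝ => halfSpaceCoord b q z.1 z.2 := by
  unfold halfSpaceCoord
  fun_prop

theorem height_halfSpaceCoord (y : Eu m) (t : ℝ) :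
    height (b (Fin.last m)) q (halfSpaceCoord b q y t) = t := by
  rw [halfSpaceCoord, height_add_smul (b.norm_eq_one _), height, add_sub_cancel_left, inner_sum,
    Finset.sum_eq_zero, zero_add]
  intro j _
  rw [inner_smul_right, b.inner_eq_zero (Fin.castSucc_lt_last j).ne', mul_zero]

theorem prodHarmonicAt_comp_halfSpaceCoord [FiniteDimensional ℝ E] {F : E → ℝ}
    (hF : ContDiff ℝ 2 F) {y : Eu m} {t : ℝ} (h : Δ F (halfSpaceCoord b q y t) = 0) :
    ProdHarmonicAt (fun y t => F (halfSpaceCoord b q y t)) y t := by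
  refine ⟨fun i => dirDeriv (b i.castSucc) (dirDeriv (b i.castSucc) F) (halfSpaceCoord b q y t),
    dirDeriv (b (Fin.last m)) (dirDeriv (b (Fin.last m)) F) (halfSpaceCoord b q y t),
    fun i => ?_, ?_, ?_⟩
  · simpa only [halfSpaceCoord_add_smul_single, zero_smul, add_zero] using
      hasSecondDerivAt_comp_add_smul (b i.castSucc) (halfSpaceCoord b q y t) 0 hF
  · simpa only [halfSpaceCoord_zero_right_add_smul] using
      hasSecondDerivAt_comp_add_smul (b (Fin.last m)) (halfSpaceCoord b q y 0) t hF
  · rw [← h, laplacian_eq_sum_dirDeriv b hF.contDiffAt, Fin.sum_univ_castSucc]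

end Coordinates

section HalfSpaceEstimate

variable {m : ℕ} {b : OrthonormalBasis (Fin (m + 1)) ℝ E} {M C C' C₁ C₂ η t : ℝ}

theorem sublinearGrowth_id_mul {B : Eu m → ℝ → ℝ} (hC : ∀ y t, 0 ≤ t → |B y t| ≤ C)
    (hdecay : ∀ ε > 0, ∃ R : ℝ, ∀ y t, R ≤ t → |B y t| ≤ ε) :
    SublinearGrowth fun y t => t * B y t where
  exists_bound := by
    refine ⟨C, fun y t ht => ?_⟩
    have hB : |B y t| ≤ C := hC y t ht
    rw [abs_mul, abs_of_nonneg ht]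
    nlinarith [abs_nonneg (B y t)]
  isLittleO ε hε := by
    obtain ⟨R, hR⟩ := hdecay ε hε
    refine ⟨max R 0, fun y t ht => ?_⟩
    have ht₀ : 0 ≤ t := le_of_max_le_right ht
    rw [abs_mul, abs_of_nonneg ht₀, mul_comm]
    exact mul_le_mul_of_nonneg_right (hR y t (le_of_max_le_left ht)) ht₀

theorem DecaysAtHeight.sublinearGrowth_height_mul_half {f : E → ℝ}
    (hf : DecaysAtHeight (b (Fin.last m)) q f)
    (hC : ∀ z, 0 ≤ height (b (Fin.last m)) q z → |f z| ≤ C) :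
    SublinearGrowth fun y t => height (b (Fin.last m)) q (halfSpaceCoord b q y t)
      * (f (halfSpaceCoord b q y t) / 2) := by
  have hhalf (x : ℝ) : |x / 2| ≤ |x| := by
    rw [abs_div, abs_two]
    exact half_le_self (abs_nonneg x)
  simp only [height_halfSpaceCoord]
  refine sublinearGrowth_id_mul (C := C)
    (fun y t ht => (hhalf _).trans (hC _ (by rwa [height_halfSpaceCoord]))) fun ε hε => ?_
  obtain ⟨R, hR⟩ := hf ε hε
  exact ⟨R, fun y t ht => (hhalf _).trans (hR _ (by rwa [height_halfSpaceCoord]))⟩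

theorem abs_inner_le_norm_of_norm_eq_one {v : E} (hv : ‖v‖ = 1) (w : E) : |⟪v, w⟫| ≤ ‖w‖ := by
  simpa only [hv, one_mul] using abs_real_inner_le_norm v w

theorem sublinearGrowth_harmonicNormalVelocity (hM : ∀ z, ‖u z‖ ≤ M)
    (hp : DecaysAtHeight (b (Fin.last m)) q p)
    (hC : ∀ z, 0 ≤ height (b (Fin.last m)) q z → |p z| ≤ C) :
    SublinearGrowth fun y t =>
      harmonicNormalVelocity u p (b (Fin.last m)) q (halfSpaceCoord b q y t) :=
  (sublinearGrowth_of_abs_le fun _ _ _ =>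
    (abs_inner_le_norm_of_norm_eq_one (b.norm_eq_one _) _).trans (hM _)).sub
    (hp.sublinearGrowth_height_mul_half hC)

theorem sublinearGrowth_harmonicTangentialDivergence
    (hM : ∀ z, ‖dirDeriv (b (Fin.last m)) u z‖ ≤ M)
    (hp : DecaysAtHeight (b (Fin.last m)) q (dirDeriv (b (Fin.last m)) p))
    (hC : ∀ z, 0 ≤ height (b (Fin.last m)) q z → |dirDeriv (b (Fin.last m)) p z| ≤ C) :
    SublinearGrowth fun y t =>
      harmonicTangentialDivergence u p (b (Fin.last m)) q (halfSpaceCoord b q y t) :=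
  (hp.sublinearGrowth_height_mul_half hC).sub
    (sublinearGrowth_of_abs_le fun _ _ _ =>
      (abs_inner_le_norm_of_norm_eq_one (b.norm_eq_one _) _).trans (hM _))

theorem sum_sq_inner_add_harmonicNormalVelocity_sq (y : Eu m) :
    ∑ i : Fin m, ⟪b i.castSucc, u (halfSpaceCoord b q y 0)⟫ ^ 2
      + harmonicNormalVelocity u p (b (Fin.last m)) q (halfSpaceCoord b q y 0) ^ 2
      = ‖u (halfSpaceCoord b q y 0)‖ ^ 2 := by
  rw [harmonicNormalVelocity, height_halfSpaceCoord, zero_mul, sub_zero, ← Fin.sum_univ_castSucc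
    (f := fun i => ⟪b i, u (halfSpaceCoord b q y 0)⟫ ^ 2), b.sum_sq_inner_right]

theorem harmonicTangentialDivergence_eq_sum {y : Eu m}
    (hdiv : divergence u (halfSpaceCoord b q y 0) = 0) :
    harmonicTangentialDivergence u p (b (Fin.last m)) q (halfSpaceCoord b q y 0)
      = ∑ i : Fin m, ⟪b i.castSucc, dirDeriv (b i.castSucc) u (halfSpaceCoord b q y 0)⟫ := by
  rw [divergence_eq_sum b, Fin.sum_univ_castSucc] at hdiv
  rw [harmonicTangentialDivergence, height_halfSpaceCoord]
  linarith

theorem hasLineDerivAt_inner_halfSpaceCoord (hu : Differentiable ℝ u) (i : Fin m) (y : Eu m)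
    (v : E) (t : ℝ) :
    HasLineDerivAt ℝ (fun y => ⟪v, u (halfSpaceCoord b q y t)⟫)
      ⟪v, dirDeriv (b i.castSucc) u (halfSpaceCoord b q y t)⟫ y (EuclideanSpace.single i 1) := by
  have hline := hasLineDerivAt_dirDeriv (b i.castSucc)
    ((innerSL ℝ v).differentiableAt.comp (halfSpaceCoord b q y t) (hu _))
  have hinner := dirDeriv_clm_comp (b i.castSucc) (innerSL ℝ v) (hu (halfSpaceCoord b q y t))
  rw [Function.comp_def, hinner] at hline
  simpa only [HasLineDerivAt, halfSpaceCoord_add_smul_single, innerSL_apply_apply] using hline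

theorem hasDerivAt_comp_halfSpaceCoord {F : E → ℝ} (hF : Differentiable ℝ F) (y : Eu m) (t : ℝ) :
    HasDerivAt (fun t => F (halfSpaceCoord b q y t))
      (dirDeriv (b (Fin.last m)) F (halfSpaceCoord b q y t)) t := by
  simpa only [halfSpaceCoord_zero_right_add_smul] using hasDerivAt_of_hasLineDerivAt_add_smul
    (hasLineDerivAt_dirDeriv (b (Fin.last m)) (hF (halfSpaceCoord b q y 0 + t • b (Fin.last m))))

theorem IsStokesSolutionOn.abs_pressure_le_of_abs_dirDeriv_le [FiniteDimensional ℝ E]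
    (h : IsStokesSolutionOn u p {z | -η < height (b (Fin.last m)) q z}) (hm : m ≠ 0)
    (hη : 0 < η) (hu : ContDiff ℝ 3 u) (hp : ContDiff ℝ 3 p) (hM : ∀ z, ‖u z‖ ≤ M)
    (hC₁ : ∀ i z, ‖dirDeriv (b i) u z‖ ≤ C₁)
    (hC : ∀ z, 0 ≤ height (b (Fin.last m)) q z → |p z| ≤ C)
    (hC' : ∀ z, 0 ≤ height (b (Fin.last m)) q z → |dirDeriv (b (Fin.last m)) p z| ≤ C')
    (hpdecay : DecaysAtHeight (b (Fin.last m)) q p)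
    (hpdecay' : DecaysAtHeight (b (Fin.last m)) q (dirDeriv (b (Fin.last m)) p)) (ht : 0 < t) :
    |p (q + t • b (Fin.last m))| ≤ Econst (m + 1) / t * M := by
  set ν := b (Fin.last m)
  have hν : ‖ν‖ = 1 := b.norm_eq_one _
  have hU : IsOpen {z | -η < height ν q z} := isOpen_setOf_lt_height ν q (-η)
  have hcoord_mem (y : Eu m) {t : ℝ} (ht : 0 ≤ t) : -η < height ν q (halfSpaceCoord b q y t) :=
    (neg_lt_zero.2 hη).trans_le (by rwa [height_halfSpaceCoord])
  have hu₁ : Differentiable ℝ u := hu.differentiable (by simp)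
  have hp₁ : Differentiable ℝ p := hp.differentiable (by simp)
  have hw : ContDiff ℝ 2 (harmonicNormalVelocity u p ν q) :=
    contDiff_harmonicNormalVelocity (hu.of_le (by norm_num)) (hp.of_le (by norm_num)) ν q
  have hg : ContDiff ℝ 2 (harmonicTangentialDivergence u p ν q) :=
    contDiff_harmonicTangentialDivergence hu hp (by norm_num) ν q
  have hcoord := continuous_halfSpaceCoord b q
  have hbase : Continuous fun y : Eu m => halfSpaceCoord b q y 0 :=
    hcoord.comp (continuous_id.prodMk continuous_const)
  rw [← halfSpaceCoord_zero_left, pressure_eq_neg_two_mul hν (hu₁ _) (hp₁ _), abs_neg]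
  exact abs_two_mul_add_normalDeriv_le hm ht ((norm_nonneg _).trans (hM 0))
    (g := fun y t => harmonicTangentialDivergence u p ν q (halfSpaceCoord b q y t))
    (w := fun y t => harmonicNormalVelocity u p ν q (halfSpaceCoord b q y t))
    (hg.continuous.comp hcoord).continuousOn (hw.continuous.comp hcoord).continuousOn
    (fun y t ht => prodHarmonicAt_comp_halfSpaceCoord b q hg
      (h.laplacian_harmonicTangentialDivergence hU hu hp (hcoord_mem y ht.le)))
    (fun y t ht => prodHarmonicAt_comp_halfSpaceCoord b q hw
      (h.laplacian_harmonicNormalVelocity hU hu (hp.of_le (by norm_num)) (hcoord_mem y ht.le)))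
    (sublinearGrowth_harmonicTangentialDivergence (hC₁ _) hpdecay' hC')
    (sublinearGrowth_harmonicNormalVelocity hM hpdecay hC)
    (fun i => continuous_const.inner (hu.continuous.comp hbase))
    (fun i => continuous_const.inner
      ((contDiff_dirDeriv _ hu (k := 2) (by norm_num)).continuous.comp hbase))
    (fun i z => ((abs_inner_le_norm_of_norm_eq_one (b.norm_eq_one _) _).trans (hM _)).trans
      (le_max_left M C₁))
    (fun i z => ((abs_inner_le_norm_of_norm_eq_one (b.norm_eq_one _) _).trans (hC₁ _ _)).trans
      (le_max_right M C₁))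
    (fun i z => hasLineDerivAt_inner_halfSpaceCoord hu₁ i z _ _)
    (fun z => harmonicTangentialDivergence_eq_sum (h.divergence_eq_zero _ (hcoord_mem z le_rfl)))
    (fun z => (sum_sq_inner_add_harmonicNormalVelocity_sq z).trans_le
      (pow_le_pow_left₀ (norm_nonneg _) (hM _) 2))
    (hasDerivAt_comp_halfSpaceCoord (hw.differentiable (by simp)) _ _)

theorem IsStokesSolutionOn.abs_pressure_le_of_contDiff [FiniteDimensional ℝ E]
    (h : IsStokesSolutionOn u p {z | -η < height (b (Fin.last m)) q z}) (hm : m ≠ 0)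
    (hη : 0 < η) (hu : ContDiff ℝ 3 u) (hp : ContDiff ℝ 3 p) (hM : ∀ z, ‖u z‖ ≤ M)
    (hC₁ : ∀ i z, ‖dirDeriv (b i) u z‖ ≤ C₁) (hC₂ : ∀ z, ‖Δ u z‖ ≤ C₂)
    (hpdecay : DecaysAtHeight (b (Fin.last m)) q p)
    (hpdecay' : DecaysAtHeight (b (Fin.last m)) q (dirDeriv (b (Fin.last m)) p)) (ht : 0 < t) :
    |p (q + t • b (Fin.last m))| ≤ Econst (m + 1) / t * M := by
  have hν : ‖b (Fin.last m)‖ = 1 := b.norm_eq_one _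
  have hC' (z : E) (hz : 0 ≤ height (b (Fin.last m)) q z) :
      |dirDeriv (b (Fin.last m)) p z| ≤ C₂ := by
    rw [← h.inner_laplacian ((neg_lt_zero.2 hη).trans_le hz)]
    exact (abs_inner_le_norm_of_norm_eq_one hν _).trans (hC₂ z)
  obtain ⟨C, hC⟩ := hpdecay.exists_abs_le hν (hp.differentiable (by simp)) hC'
  exact h.abs_pressure_le_of_abs_dirDeriv_le hm hη hu hp hM hC₁ hC hC' hpdecay hpdecay' ht

end HalfSpaceEstimate

end HalfSpaceCoord

/-! ### Mollification -/

section Mollification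

open scoped ContDiff Convolution Gradient Laplacian

theorem locallyIntegrable_indicator_of_continuousOn {X F : Type*} [TopologicalSpace X] [T2Space X]
    [WeaklyLocallyCompactSpace X] [MeasurableSpace X] [OpensMeasurableSpace X] {μ : Measure X}
    [IsFiniteMeasureOnCompacts μ] [NormedAddCommGroup F] {f : X → F} {A : Set X} (hA : IsClosed A)
    (hf : ContinuousOn f A) : LocallyIntegrable (A.indicator f) μ := by
  rw [locallyIntegrable_iff]
  intro K hK
  rw [integrableOn_indicator_iff hA.measurableSet]
  exact (hf.mono Set.inter_subset_left).integrableOn_compact (hK.inter_left hA)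

variable {E F : Type*} [NormedAddCommGroup E] [InnerProductSpace ℝ E]
  [NormedAddCommGroup F] [NormedSpace ℝ F] {φ : E → ℝ} {f g : E → F} {x : E} {δ C : ℝ}
  {V W : Set E}

/-- `φ` is a smooth real function supported in the closed ball of radius `δ` about the origin, the
kernel of a mollification at scale `δ`. Neither the sign nor the integral of `φ` is prescribed, so
the derivatives of such a kernel are again of this kind. -/
structure IsTestFunction (φ : E → ℝ) (δ : ℝ) : Prop where
  contDiff : ContDiff ℝ ∞ φ
  tsupport_subset : tsupport φ ⊆ closedBall 0 δ

namespace IsTestFunction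

protected theorem dirDeriv (hφ : IsTestFunction φ δ) (v : E) : IsTestFunction (dirDeriv v φ) δ where
  contDiff := contDiff_dirDeriv v hφ.contDiff le_rfl
  tsupport_subset := (tsupport_fderiv_apply_subset ℝ v).trans hφ.tsupport_subset

theorem sub_mem_closedBall (hφ : IsTestFunction φ δ) (x : E) {t : E} (ht : t ∈ tsupport φ) :
    x - t ∈ closedBall x δ := by
  rw [mem_closedBall, dist_eq_norm, sub_sub_cancel_left, norm_neg]
  exact mem_closedBall_zero_iff.1 (hφ.tsupport_subset ht)

theorem smul_comp_sub_congr {G : Type*} [AddCommGroup G] [Module ℝ G] {f g : E → G}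
    (hφ : IsTestFunction φ δ) (h : Set.EqOn f g (closedBall x δ)) (t : E) :
    φ t • f (x - t) = φ t • g (x - t) := by
  by_cases ht : t ∈ tsupport φ
  · rw [h (hφ.sub_mem_closedBall x ht)]
  · rw [image_eq_zero_of_notMem_tsupport ht, zero_smul, zero_smul]

variable [FiniteDimensional ℝ E]

theorem hasCompactSupport (hφ : IsTestFunction φ δ) : HasCompactSupport φ :=
  (isCompact_closedBall (0 : E) δ).of_isClosed_subset (isClosed_tsupport φ) hφ.tsupport_subset

variable [MeasurableSpace E] [BorelSpace E]

theorem integrable (hφ : IsTestFunction φ δ) : Integrable φ :=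
  hφ.contDiff.continuous.integrable_of_hasCompactSupport hφ.hasCompactSupport

theorem integrable_smul_comp_sub (hφ : IsTestFunction φ δ)
    (hf : ContinuousOn f (closedBall x δ)) : Integrable fun t => φ t • f (x - t) := by
  have hcont : ContinuousOn (fun t => φ t • f (x - t)) (tsupport φ) :=
    hφ.contDiff.continuous.continuousOn.smul
      (hf.comp (by fun_prop) fun t ht => hφ.sub_mem_closedBall x ht)
  exact (integrableOn_iff_integrable_of_support_subset
    ((Function.support_smul_subset_left φ _).trans (subset_tsupport φ))).1
    (hcont.integrableOn_compact hφ.hasCompactSupport)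

end IsTestFunction

theorem isTestFunction_normed [FiniteDimensional ℝ E] [MeasurableSpace E] [BorelSpace E]
    (B : ContDiffBump (0 : E)) : IsTestFunction (B.normed volume) B.rOut where
  contDiff := B.contDiff_normed
  tsupport_subset := B.tsupport_normed_eq.subset

variable [FiniteDimensional ℝ E] [MeasurableSpace E] [BorelSpace E]

/-- The convolution of a vector-valued function `f` with the real kernel `φ`. -/
def mollify (φ : E → ℝ) (f : E → F) : E → F :=
  φ ⋆[ContinuousLinearMap.lsmul ℝ ℝ, volume] f

theorem mollify_apply (φ : E → ℝ) (f : E → F) (x : E) :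
    mollify φ f x = ∫ t, φ t • f (x - t) := rfl

namespace IsTestFunction

theorem mollify_congr (hφ : IsTestFunction φ δ) (h : Set.EqOn f g (closedBall x δ)) :
    mollify φ f x = mollify φ g x :=
  integral_congr_ae (Eventually.of_forall (hφ.smul_comp_sub_congr h))

theorem norm_mollify_le (hφ : IsTestFunction φ δ) (hf : ∀ y ∈ closedBall x δ, ‖f y‖ ≤ C) :
    ‖mollify φ f x‖ ≤ C * ∫ t, ‖φ t‖ := by
  rw [mollify_apply, ← integral_const_mul]
  refine norm_integral_le_of_norm_le (hφ.integrable.norm.const_mul C)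
    (Eventually.of_forall fun t => ?_)
  rw [norm_smul, mul_comm C]
  by_cases ht : t ∈ tsupport φ
  · exact mul_le_mul_of_nonneg_left (hf _ (hφ.sub_mem_closedBall x ht)) (norm_nonneg _)
  · rw [image_eq_zero_of_notMem_tsupport ht, norm_zero, zero_mul, zero_mul]

theorem contDiff_mollify (hφ : IsTestFunction φ δ) (hf : LocallyIntegrable f) :
    ContDiff ℝ ∞ (mollify φ f) :=
  hφ.hasCompactSupport.contDiff_convolution_left _ hφ.contDiff hf

theorem dirDeriv_mollify (hφ : IsTestFunction φ δ) (hf : LocallyIntegrable f) (v : E) :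
    dirDeriv v (mollify φ f) = mollify (dirDeriv v φ) f := by
  funext x
  have hderiv := hφ.hasCompactSupport.hasFDerivAt_convolution_left
    (ContinuousLinearMap.lsmul ℝ ℝ) (hφ.contDiff.of_le ENat.LEInfty.out) hf x
  have hint : ConvolutionExistsAt (fderiv ℝ φ) f x
      ((ContinuousLinearMap.lsmul ℝ ℝ).precompL E) volume :=
    (hφ.hasCompactSupport.fderiv ℝ).convolutionExists_left _
      (hφ.contDiff.continuous_fderiv (by simp)) hf x
  simp only [dirDeriv, mollify]
  rw [hderiv.fderiv, convolution_def, ContinuousLinearMap.integral_apply hint]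
  rfl

theorem mollify_finsetSum {ι : Type*} (s : Finset ι) {f : ι → E → F} (hφ : IsTestFunction φ δ)
    (hf : ∀ i ∈ s, ContinuousOn (f i) (closedBall x δ)) :
    mollify φ (fun y => ∑ i ∈ s, f i y) x = ∑ i ∈ s, mollify φ (f i) x := by
  simp only [mollify_apply, Finset.smul_sum]
  exact integral_finsetSum _ fun i hi => hφ.integrable_smul_comp_sub (hf i hi)

theorem mollify_clm_comp [CompleteSpace F] {G : Type*} [NormedAddCommGroup G] [NormedSpace ℝ G]
    [CompleteSpace G] (hφ : IsTestFunction φ δ) (L : F →L[ℝ] G)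
    (hf : ContinuousOn f (closedBall x δ)) :
    mollify φ (fun y => L (f y)) x = L (mollify φ f x) := by
  rw [mollify_apply, mollify_apply, ← L.integral_comp_comm (hφ.integrable_smul_comp_sub hf)]
  simp only [map_smul]

theorem mollify_dirDeriv (hφ : IsTestFunction φ δ) (hW : IsOpen W) (hx : closedBall x δ ⊆ W)
    (hf : ContDiffOn ℝ 1 f W) (v : E) :
    mollify φ (dirDeriv v f) x = mollify (dirDeriv v φ) f x := by
  have hfd {t : E} (ht : t ∈ tsupport φ) : DifferentiableAt ℝ f (x - t) :=
    (hf.differentiableOn (by simp)).differentiableAt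
      (hW.mem_nhds (hx (hφ.sub_mem_closedBall x ht)))
  have hderiv (t : E) : φ t • fderiv ℝ (fun s => f (x - s)) t v
      = -(φ t • dirDeriv v f (x - t)) := by
    by_cases ht : t ∈ tsupport φ
    · have hcomp : HasFDerivAt (fun s => f (x - s)) (fderiv ℝ f (x - t) ∘L (-.id ℝ E)) t :=
        (hfd ht).hasFDerivAt.comp t ((hasFDerivAt_id t).const_sub x)
      rw [hcomp.fderiv, ContinuousLinearMap.comp_apply, neg_apply, map_neg, smul_neg]
      rfl
    · rw [image_eq_zero_of_notMem_tsupport ht, zero_smul, zero_smul, neg_zero]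
  have hfc : ContinuousOn f (closedBall x δ) := hf.continuousOn.mono hx
  have hf'c : ContinuousOn (dirDeriv v f) (closedBall x δ) :=
    (contDiffOn_dirDeriv v hW hf (k := 0) (by norm_num)).continuousOn.mono hx
  have hibp := integral_smul_fderiv_eq_neg_fderiv_smul_of_integrable (μ := (volume : Measure E))
    (f := φ) (g := fun s => f (x - s)) (v := v)
    ((hφ.dirDeriv v).integrable_smul_comp_sub hfc)
    (by simpa only [hderiv] using! (hφ.integrable_smul_comp_sub hf'c).neg)
    (hφ.integrable_smul_comp_sub hfc)
    (fun t _ => hφ.contDiff.differentiable (by simp) t)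
    (fun t ht => (hfd ht).comp t (differentiableAt_id.const_sub x))
  simpa only [hderiv, integral_neg, neg_inj] using! hibp

theorem dirDeriv_mollify_eq_mollify_dirDeriv (hφ : IsTestFunction φ δ)
    (hf : LocallyIntegrable f) (hW : IsOpen W) (hx : closedBall x δ ⊆ W)
    (hfW : ContDiffOn ℝ 1 f W) (v : E) :
    dirDeriv v (mollify φ f) x = mollify φ (dirDeriv v f) x := by
  rw [hφ.dirDeriv_mollify hf, hφ.mollify_dirDeriv hW hx hfW]

theorem laplacian_mollify (hφ : IsTestFunction φ δ) (hf : LocallyIntegrable f) {ι : Type*}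
    [Fintype ι] (b : OrthonormalBasis ι ℝ E) (x : E) :
    Δ (mollify φ f) x
      = ∑ i, mollify (dirDeriv (b i) (dirDeriv (b i) φ)) f x := by
  rw [laplacian_eq_sum_dirDeriv b ((hφ.contDiff_mollify hf).of_le ENat.LEInfty.out).contDiffAt]
  exact Finset.sum_congr rfl fun i _ => by
    rw [hφ.dirDeriv_mollify hf, (hφ.dirDeriv _).dirDeriv_mollify hf]

theorem laplacian_mollify_eq_mollify_laplacian (hφ : IsTestFunction φ δ)
    (hf : LocallyIntegrable f) (hW : IsOpen W) (hx : closedBall x δ ⊆ W)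
    (hfW : ContDiffOn ℝ 2 f W) : Δ (mollify φ f) x = mollify φ (Δ f) x := by
  let b := stdOrthonormalBasis ℝ E
  have hd (v : E) : ContDiffOn ℝ 1 (dirDeriv v f) W :=
    contDiffOn_dirDeriv v hW hfW (by norm_num)
  have hdd (v : E) : ContinuousOn (dirDeriv v (dirDeriv v f)) (closedBall x δ) :=
    (contDiffOn_dirDeriv v hW (hd v) (k := 0) (by norm_num)).continuousOn.mono hx
  have hΔ : Set.EqOn (Δ f) (fun y => ∑ i, dirDeriv (b i) (dirDeriv (b i) f) y)
      (closedBall x δ) := fun y hy =>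
    laplacian_eq_sum_dirDeriv b (hfW.contDiffAt (hW.mem_nhds (hx hy)))
  rw [hφ.mollify_congr hΔ, hφ.mollify_finsetSum _ fun i _ => hdd (b i),
    hφ.laplacian_mollify hf b]
  refine Finset.sum_congr rfl fun i _ => ?_
  rw [hφ.mollify_dirDeriv hW hx (hd _),
    (hφ.dirDeriv _).mollify_dirDeriv hW hx (hfW.of_le (by norm_num))]

theorem gradient_mollify {p : E → ℝ} (hφ : IsTestFunction φ δ) (hp : LocallyIntegrable p)
    (hW : IsOpen W) (hx : closedBall x δ ⊆ W) (hpW : ContDiffOn ℝ 1 p W) :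
    ∇ (mollify φ p) x = mollify φ (∇ p) x := by
  have hgrad : ContinuousOn (∇ p) (closedBall x δ) :=
    (InnerProductSpace.toDual ℝ E).symm.continuous.comp_continuousOn
      ((hpW.continuousOn_fderiv_of_isOpen hW le_rfl).mono hx)
  refine ext_inner_left ℝ fun v => ?_
  rw [inner_gradient_eq_dirDeriv, hφ.dirDeriv_mollify_eq_mollify_dirDeriv hp hW hx hpW,
    ← innerSL_apply_apply ℝ, ← hφ.mollify_clm_comp _ hgrad]
  simp only [innerSL_apply_apply, inner_gradient_eq_dirDeriv]

theorem divergence_mollify {u : E → E} (hφ : IsTestFunction φ δ) (hu : LocallyIntegrable u)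
    (hW : IsOpen W) (hx : closedBall x δ ⊆ W) (huW : ContDiffOn ℝ 1 u W) :
    divergence (mollify φ u) x = mollify φ (divergence u) x := by
  let b := stdOrthonormalBasis ℝ E
  have hd (v : E) : ContinuousOn (dirDeriv v u) (closedBall x δ) :=
    (contDiffOn_dirDeriv v hW huW (k := 0) (by norm_num)).continuousOn.mono hx
  rw [show divergence u = fun y => ∑ i, innerSL ℝ (b i) (dirDeriv (b i) u y) from
      funext fun y => divergence_eq_sum b u, divergence_eq_sum b,
    hφ.mollify_finsetSum _ (f := fun i y => innerSL ℝ (b i) (dirDeriv (b i) u y)) fun i _ =>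
      (innerSL ℝ (b i)).continuous.comp_continuousOn (hd (b i))]
  refine Finset.sum_congr rfl fun i _ => ?_
  rw [hφ.dirDeriv_mollify_eq_mollify_dirDeriv hu hW hx huW, hφ.mollify_clm_comp _ (hd _),
    innerSL_apply_apply]

end IsTestFunction

protected theorem IsStokesSolutionOn.mollify {u : E → E} {p : E → ℝ} (h : IsStokesSolutionOn u p W)
    (hW : IsOpen W) (hu : LocallyIntegrable u) (hp : LocallyIntegrable p)
    (hφ : IsTestFunction φ δ) (hV : ∀ x ∈ V, closedBall x δ ⊆ W) :
    IsStokesSolutionOn (mollify φ u) (mollify φ p) V where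
  contDiffOn_velocity := ((hφ.contDiff_mollify hu).of_le ENat.LEInfty.out).contDiffOn
  contDiffOn_pressure := ((hφ.contDiff_mollify hp).of_le ENat.LEInfty.out).contDiffOn
  laplacian_eq_gradient x hx := by
    rw [hφ.laplacian_mollify_eq_mollify_laplacian hu hW (hV x hx) h.contDiffOn_velocity,
      hφ.gradient_mollify hp hW (hV x hx) h.contDiffOn_pressure]
    exact hφ.mollify_congr fun y hy => h.laplacian_eq_gradient y (hV x hx hy)
  divergence_eq_zero x hx := by
    rw [hφ.divergence_mollify hu hW (hV x hx) (h.contDiffOn_velocity.of_le (by norm_num)),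
      hφ.mollify_congr fun y hy => h.divergence_eq_zero y (hV x hx hy), mollify_apply]
    simp only [smul_zero, integral_zero]

end Mollification

/-! ### Stokes flows in a half-space -/

section HalfSpace

open scoped Laplacian

variable {E : Type*} [NormedAddCommGroup E] [InnerProductSpace ℝ E] {u : E → E} {p : E → ℝ}
  {ν q x : E} {s δ M t : ℝ} {φ : E → ℝ}

theorem height_add_smul_left (hν : ‖ν‖ = 1) (q z : E) (s : ℝ) :
    height ν (q + s • ν) z = height ν q z - s := by
  rw [height, height, ← sub_sub, inner_sub_right, inner_smul_right, real_inner_self_eq_norm_sq, hν]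
  ring

theorem closedBall_subset_setOf_lt_height (hν : ‖ν‖ = 1) (hx : s + δ < height ν q x) :
    closedBall x δ ⊆ {z | s < height ν q z} := fun y hy => by
  have hxy : height ν q x - height ν q y ≤ δ :=
    (height_sub_le_dist hν q x y).trans (mem_closedBall'.1 hy)
  rw [Set.mem_ofPred_eq]
  linarith

theorem DecaysAtHeight.add_smul_left (hp : DecaysAtHeight ν q p) (hν : ‖ν‖ = 1) (s : ℝ) :
    DecaysAtHeight ν (q + s • ν) p := fun ε hε => by
  obtain ⟨R, hR⟩ := hp ε hε
  refine ⟨R - s, fun z hz => hR z ?_⟩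
  rw [height_add_smul_left hν] at hz
  linarith

theorem DecaysAtHeight.indicator (hp : DecaysAtHeight ν q p) (A : Set E) :
    DecaysAtHeight ν q (A.indicator p) := fun ε hε => by
  obtain ⟨R, hR⟩ := hp ε hε
  exact ⟨R, fun z hz => (norm_indicator_le_norm_self p z).trans (hR z hz)⟩

variable [FiniteDimensional ℝ E]

theorem IsStokesSolutionOn.indicator {A U V : Set E} (h : IsStokesSolutionOn u p U)
    (hVA : V ⊆ A) (hAU : A ⊆ U) (hV : IsOpen V) :
    IsStokesSolutionOn (A.indicator u) (A.indicator p) V :=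
  (h.mono (hVA.trans hAU)).congr hV (fun _ hz => Set.indicator_of_mem (hVA hz) u)
    fun _ hz => Set.indicator_of_mem (hVA hz) p

variable [MeasurableSpace E] [BorelSpace E]

protected theorem DecaysAtHeight.mollify (hp : DecaysAtHeight ν q p) (hν : ‖ν‖ = 1)
    (hφ : IsTestFunction φ δ) : DecaysAtHeight ν q (mollify φ p) := fun ε hε => by
  have : 0 ≤ ∫ t, ‖φ t‖ := integral_nonneg fun t => norm_nonneg _
  obtain ⟨R, hR⟩ := hp (ε / (1 + ∫ t, ‖φ t‖)) (by positivity)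
  refine ⟨R + δ + 1, fun z hz => ?_⟩
  have hball : closedBall z δ ⊆ {y | R < height ν q y} :=
    closedBall_subset_setOf_lt_height hν (by linarith)
  calc |mollify φ p z| = ‖mollify φ p z‖ := (norm_eq_abs _).symm
    _ ≤ ε / (1 + ∫ t, ‖φ t‖) * ∫ t, ‖φ t‖ :=
        hφ.norm_mollify_le fun y hy => (norm_eq_abs _).trans_le (hR y (hball hy).le)
    _ ≤ ε / (1 + ∫ t, ‖φ t‖) * (1 + ∫ t, ‖φ t‖) := by gcongr; linarith
    _ = ε := div_mul_cancel₀ ε (by positivity)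

theorem IsTestFunction.exists_norm_laplacian_mollify_le (hφ : IsTestFunction φ δ)
    (hu : LocallyIntegrable u) (hM : ∀ z, ‖u z‖ ≤ M) :
    ∃ C, ∀ z, ‖Δ (mollify φ u) z‖ ≤ C :=
  ⟨_, fun z => (congrArg norm (hφ.laplacian_mollify hu (stdOrthonormalBasis ℝ E) z)).trans_le
    (norm_sum_le_of_le _ fun _ _ => ((hφ.dirDeriv _).dirDeriv _).norm_mollify_le fun y _ => hM y)⟩

theorem IsTestFunction.exists_forall_norm_dirDeriv_mollify_le {ι : Type*} [Finite ι]
    (hφ : IsTestFunction φ δ) (hu : LocallyIntegrable u) (hM : ∀ z, ‖u z‖ ≤ M) (v : ι → E) :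
    ∃ C, ∀ i z, ‖dirDeriv (v i) (mollify φ u) z‖ ≤ C := by
  obtain ⟨C, hC⟩ := Finite.exists_le fun i => M * ∫ t, ‖dirDeriv (v i) φ t‖
  refine ⟨C, fun i z => ?_⟩
  rw [hφ.dirDeriv_mollify hu]
  exact ((hφ.dirDeriv _).norm_mollify_le fun y _ => hM y).trans (hC i)

variable {m : ℕ} {b : OrthonormalBasis (Fin (m + 1)) ℝ E}

theorem IsStokesSolutionOn.abs_mollify_pressure_le
    (h : IsStokesSolutionOn u p {z | 0 < height (b (Fin.last m)) q z}) (hm : m ≠ 0)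
    (hu : LocallyIntegrable u) (hp : LocallyIntegrable p) (hM : ∀ z, ‖u z‖ ≤ M)
    (hdecay : DecaysAtHeight (b (Fin.last m)) q p) (hφ : IsTestFunction φ δ)
    (hφ₁ : ∫ t, ‖φ t‖ = 1) (hδ : 0 < δ) (ht : 2 * δ < t) :
    |mollify φ p (q + t • b (Fin.last m))| ≤ Econst (m + 1) / (t - 2 * δ) * M := by
  set ν := b (Fin.last m)
  have hν : ‖ν‖ = 1 := b.norm_eq_one _
  have hshift : q + t • ν = q + (2 * δ) • ν + (t - 2 * δ) • ν := by
    rw [add_assoc, ← add_smul, add_sub_cancel]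
  have hball {z : E} (hz : -δ < height ν (q + (2 * δ) • ν) z) :
      closedBall z δ ⊆ {y | 0 < height ν q y} := by
    rw [height_add_smul_left hν] at hz
    exact closedBall_subset_setOf_lt_height hν (by linarith)
  obtain ⟨C₁, hC₁⟩ := hφ.exists_forall_norm_dirDeriv_mollify_le hu hM b
  obtain ⟨C₂, hC₂⟩ := hφ.exists_norm_laplacian_mollify_le hu hM
  have hdecay' : DecaysAtHeight ν q (dirDeriv ν (mollify φ p)) := by
    rw [hφ.dirDeriv_mollify hp]
    exact hdecay.mollify hν (hφ.dirDeriv ν)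
  rw [hshift]
  exact (h.mollify (isOpen_setOf_lt_height ν q 0) hu hp hφ fun z hz => hball hz)
    |>.abs_pressure_le_of_contDiff hm hδ
      ((hφ.contDiff_mollify hu).of_le ENat.LEInfty.out)
      ((hφ.contDiff_mollify hp).of_le ENat.LEInfty.out)
      (fun z => by simpa only [hφ₁, mul_one] using hφ.norm_mollify_le fun y _ => hM y)
      hC₁ hC₂ ((hdecay.mollify hν hφ).add_smul_left hν _) (hdecay'.add_smul_left hν _)
      (sub_pos.2 ht)

theorem IsStokesSolutionOn.abs_mollify_indicator_pressure_le
    (h : IsStokesSolutionOn u p {z | 0 < height (b (Fin.last m)) q z}) (hm : m ≠ 0)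
    (hM : ∀ z, 0 < height (b (Fin.last m)) q z → ‖u z‖ ≤ M) (hM₀ : 0 ≤ M)
    (hdecay : DecaysAtHeight (b (Fin.last m)) q p) (hφ : IsTestFunction φ δ)
    (hφ₁ : ∫ t, ‖φ t‖ = 1) (hδ : 0 < δ) (ht : 3 * δ < t) :
    |mollify φ ({z | δ ≤ height (b (Fin.last m)) q z}.indicator p) (q + t • b (Fin.last m))|
      ≤ Econst (m + 1) / (t - 3 * δ) * M := by
  set ν := b (Fin.last m)
  have hν : ‖ν‖ = 1 := b.norm_eq_one _
  set A : Set E := {z | δ ≤ height ν q z}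
  have hA : IsClosed A := isClosed_le continuous_const (continuous_height ν q)
  have hA₀ : A ⊆ {z | 0 < height ν q z} := fun z hz => hδ.trans_le hz
  have hV : {z | 0 < height ν (q + δ • ν) z} ⊆ A := fun z hz => by
    rw [Set.mem_ofPred_eq, height_add_smul_left hν] at hz
    exact (sub_pos.1 hz).le
  have hshift : q + t • ν = q + δ • ν + (t - δ) • ν := by
    rw [add_assoc, ← add_smul, add_sub_cancel]
  have hMA (z : E) : ‖A.indicator u z‖ ≤ M := by
    rw [norm_indicator_eq_indicator_norm]
    exact Set.indicator_apply_le' (fun hz => hM z (hA₀ hz)) fun _ => hM₀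
  rw [hshift, show t - 3 * δ = t - δ - 2 * δ by ring]
  exact (h.indicator hV hA₀ (isOpen_setOf_lt_height ν _ 0)).abs_mollify_pressure_le hm
    (locallyIntegrable_indicator_of_continuousOn hA (h.contDiffOn_velocity.continuousOn.mono hA₀))
    (locallyIntegrable_indicator_of_continuousOn hA (h.contDiffOn_pressure.continuousOn.mono hA₀))
    hMA ((hdecay.indicator A).add_smul_left hν δ) hφ hφ₁ hδ (by linarith)

theorem integral_norm_normed (B : ContDiffBump (0 : E)) : ∫ t, ‖B.normed volume t‖ = 1 := by
  simp only [norm_of_nonneg (B.nonneg_normed _), B.integral_normed]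

theorem dist_mollify_normed_le (B : ContDiffBump (0 : E)) {f : E → ℝ} {ε : ℝ}
    (hf : LocallyIntegrable f) (hε : ∀ y ∈ ball x B.rOut, dist (f y) (f x) ≤ ε) :
    dist (mollify (B.normed volume) f x) (f x) ≤ ε :=
  ContDiffBump.dist_normed_convolution_le hf.aestronglyMeasurable hε

theorem IsStokesSolutionOn.abs_pressure_le_add
    (h : IsStokesSolutionOn u p {z | 0 < height (b (Fin.last m)) q z}) (hm : m ≠ 0)
    (hM : ∀ z, 0 < height (b (Fin.last m)) q z → ‖u z‖ ≤ M) (hM₀ : 0 ≤ M)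
    (hdecay : DecaysAtHeight (b (Fin.last m)) q p) (hδ : 0 < δ) (ht : 3 * δ < t) {ε : ℝ}
    (hε : ∀ y ∈ ball (q + t • b (Fin.last m)) δ, dist (p y) (p (q + t • b (Fin.last m))) ≤ ε) :
    |p (q + t • b (Fin.last m))| ≤ Econst (m + 1) / (t - 3 * δ) * M + ε := by
  set ν := b (Fin.last m)
  set x := q + t • ν
  set A : Set E := {z | δ ≤ height ν q z}
  have hA : IsClosed A := isClosed_le continuous_const (continuous_height ν q)
  have hA₀ : A ⊆ {z | 0 < height ν q z} := fun z hz => hδ.trans_le hz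
  have hx : δ + δ < height ν q x := by
    rw [height_self_add_smul (b.norm_eq_one _)]
    linarith
  have hball : ball x δ ⊆ A := ball_subset_closedBall.trans
    ((closedBall_subset_setOf_lt_height (b.norm_eq_one _) hx).trans
      fun z (hz : δ < height ν q z) => hz.le)
  let B : ContDiffBump (0 : E) := ⟨δ / 2, δ, half_pos hδ, half_lt_self hδ⟩
  have hest := h.abs_mollify_indicator_pressure_le hm hM hM₀ hdecay (isTestFunction_normed B)
    (integral_norm_normed B) hδ ht
  have hdist : dist (mollify (B.normed volume) (A.indicator p) x) (A.indicator p x) ≤ ε := by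
    refine dist_mollify_normed_le B (locallyIntegrable_indicator_of_continuousOn hA
      (h.contDiffOn_pressure.continuousOn.mono hA₀)) fun y hy => ?_
    rw [Set.indicator_of_mem (hball hy), Set.indicator_of_mem (hball (mem_ball_self hδ))]
    exact hε y hy
  rw [Set.indicator_of_mem (hball (mem_ball_self hδ)), dist_comm, dist_eq] at hdist
  linarith [abs_sub_abs_le_abs_sub (p x) (mollify (B.normed volume) (A.indicator p) x)]

theorem IsStokesSolutionOn.abs_pressure_le
    (h : IsStokesSolutionOn u p {z | 0 < height (b (Fin.last m)) q z}) (hm : m ≠ 0)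
    (hM : ∀ z, 0 < height (b (Fin.last m)) q z → ‖u z‖ ≤ M)
    (hdecay : DecaysAtHeight (b (Fin.last m)) q p) (ht : 0 < t) :
    |p (q + t • b (Fin.last m))| ≤ Econst (m + 1) / t * M := by
  set ν := b (Fin.last m)
  have hx : q + t • ν ∈ {z | 0 < height ν q z} :=
    ht.trans_eq (height_self_add_smul (b.norm_eq_one _) q t).symm
  have hcont : ContinuousAt p (q + t • ν) :=
    h.contDiffOn_pressure.continuousOn.continuousAt ((isOpen_setOf_lt_height ν q 0).mem_nhds hx)
  refine le_of_forall_pos_le_add fun ε hε => ?_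
  obtain ⟨r, hr, hrp⟩ := Metric.continuousAt_iff.1 hcont ε hε
  have hlim : Tendsto (fun δ : ℝ => Econst (m + 1) / (t - 3 * δ) * M + ε) (𝓝[>] 0)
      (𝓝 (Econst (m + 1) / t * M + ε)) := by
    have hcont₀ : ContinuousAt (fun δ : ℝ => Econst (m + 1) / (t - 3 * δ) * M + ε) 0 := by
      fun_prop (disch := simpa using ht.ne')
    simpa using hcont₀.tendsto.mono_left nhdsWithin_le_nhds
  refine ge_of_tendsto hlim ?_
  filter_upwards [Ioo_mem_nhdsGT (lt_min hr (div_pos ht three_pos))] with δ ⟨hδ, hδr⟩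
  obtain ⟨hδr, hδt⟩ := lt_min_iff.1 hδr
  exact h.abs_pressure_le_add hm hM ((norm_nonneg _).trans (hM _ hx)) hdecay hδ (by linarith)
    fun y hy => (hrp ((mem_ball.1 hy).trans hδr)).le

end HalfSpace

/-! ### The exterior of a convex set -/

section Convex

variable {E : Type*} [NormedAddCommGroup E] [InnerProductSpace ℝ E] {K : Set E} {ν q x : E}

theorem mem_frontier_of_forall_height_nonpos (hν : ‖ν‖ = 1) (hq : q ∈ K)
    (hK : ∀ y ∈ K, height ν q y ≤ 0) : q ∈ frontier K := by
  rw [frontier_eq_closure_inter_closure]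
  refine ⟨subset_closure hq, ?_⟩
  have hlim : Tendsto (fun s : ℝ => q + s • ν) (𝓝[>] 0) (𝓝 q) := by
    have hcont : Continuous fun s : ℝ => q + s • ν := by fun_prop
    simpa using (hcont.tendsto 0).mono_left nhdsWithin_le_nhds
  refine mem_closure_of_tendsto hlim ?_
  filter_upwards [self_mem_nhdsWithin] with s hs hmem
  exact (hK _ hmem).not_gt (hs.trans_eq (height_self_add_smul hν q s).symm)

theorem exists_supporting_halfSpace (hK : Convex ℝ K) (hKc : IsComplete K) (hne : K.Nonempty)
    (hx : x ∉ K) :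
    ∃ ν q, ‖ν‖ = 1 ∧ q ∈ frontier K ∧ (∀ y ∈ K, height ν q y ≤ 0) ∧
      x = q + dist x q • ν := by
  obtain ⟨q, hq, hmin⟩ := exists_norm_eq_iInf_of_complete_convex hne hKc hK x
  have hd : 0 < ‖x - q‖ := norm_pos_iff.2 (sub_ne_zero.2 (ne_of_mem_of_not_mem hq hx).symm)
  have hν : ‖‖x - q‖⁻¹ • (x - q)‖ = 1 := norm_smul_inv_norm (𝕜 := ℝ) (norm_pos_iff.1 hd)
  have hsupp : ∀ y ∈ K, height (‖x - q‖⁻¹ • (x - q)) q y ≤ 0 := fun y hy => by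
    rw [height, real_inner_smul_left]
    exact mul_nonpos_of_nonneg_of_nonpos (inv_nonneg.2 hd.le)
      ((norm_eq_iInf_iff_real_inner_le_zero hK hq).1 hmin y hy)
  refine ⟨_, q, hν, mem_frontier_of_forall_height_nonpos hν hq hsupp, hsupp, ?_⟩
  rw [dist_eq_norm, smul_inv_smul₀ hd.ne', add_sub_cancel]

theorem height_le_infDist_frontier (hν : ‖ν‖ = 1) (hKc : IsClosed K) (hq : q ∈ frontier K)
    (hK : ∀ y ∈ K, height ν q y ≤ 0) (z : E) : height ν q z ≤ infDist z (frontier K) :=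
  (le_infDist ⟨q, hq⟩).2 fun y hy => by
    linarith [height_sub_le_dist hν q z y, hK y (hKc.frontier_subset hy)]

theorem exists_orthonormalBasis_last_eq [FiniteDimensional ℝ E] {m : ℕ}
    (hm : Module.finrank ℝ E = m + 1) (hν : ‖ν‖ = 1) :
    ∃ b : OrthonormalBasis (Fin (m + 1)) ℝ E, b (Fin.last m) = ν := by
  have hortho : Orthonormal ℝ (({Fin.last m} : Set (Fin (m + 1))).domRestrict fun _ => ν) :=
    ⟨fun _ => hν, fun i j hij => absurd (Subsingleton.elim i j) hij⟩
  obtain ⟨b, hb⟩ := hortho.exists_orthonormalBasis_extension_of_card_eq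
    (by rw [hm, Fintype.card_fin])
  exact ⟨b, hb _ rfl⟩

theorem pressure_bound_stokes_complement_convex_general [FiniteDimensional ℝ E]
    (hE : 2 ≤ Module.finrank ℝ E) (hK : Convex ℝ K) (hKc : IsClosed K) (hne : K.Nonempty)
    {u : E → E} {p : E → ℝ} (h : IsStokesSolutionOn u p Kᶜ)
    (hvanish : ∀ ε > 0, ∃ R : ℝ, ∀ y ∉ K, R ≤ infDist y (frontier K) → |p y| ≤ ε)
    {M : ℝ} (hM : ∀ y ∉ K, ‖u y‖ ≤ M) (hx : x ∉ K) :
    |p x| ≤ Econst (Module.finrank ℝ E) / infDist x (frontier K) * M := by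
  borelize E
  obtain ⟨m, hm⟩ : ∃ m, Module.finrank ℝ E = m + 1 := ⟨_, (Nat.sub_add_cancel (by omega)).symm⟩
  obtain ⟨ν, q, hν, hq, hsupp, hxq⟩ := exists_supporting_halfSpace hK hKc.isComplete hne hx
  obtain ⟨b, rfl⟩ := exists_orthonormalBasis_last_eq hm hν
  have hsub : {z | 0 < height (b (Fin.last m)) q z} ⊆ Kᶜ := fun z hz hzK =>
    (hsupp z hzK).not_gt hz
  have hheight := height_le_infDist_frontier hν hKc hq hsupp
  have hdecay : DecaysAtHeight (b (Fin.last m)) q p := fun ε hε => by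
    obtain ⟨R, hR⟩ := hvanish ε hε
    refine ⟨max R 1, fun z hz => ?_⟩
    obtain ⟨hRz, hz⟩ := max_le_iff.1 hz
    exact hR z (hsub (zero_lt_one.trans_le hz)) (hRz.trans (hheight z))
  have hdist : infDist x (frontier K) = dist x q := by
    refine (infDist_le_dist_of_mem hq).antisymm (le_of_eq_of_le ?_ (hheight x))
    conv_rhs => rw [hxq, height_self_add_smul hν]
  have hpos : 0 < dist x q := dist_pos.2 fun hxq' => hx (hxq' ▸ hKc.frontier_subset hq)
  have hbound := (h.mono hsub).abs_pressure_le (by omega) (fun z hz => hM z (hsub hz)) hdecay hpos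
  rwa [← hxq, ← hm, ← hdist] at hbound

end Convex

section Coordinates

open scoped Gradient Laplacian

variable {n : ℕ} {u : Eu n → Eu n} {p : Eu n → ℝ} {x : Eu n}

theorem divg_eq_divergence (hu : DifferentiableAt ℝ u x) : divg u x = divergence u x := by
  rw [divergence_eq_sum (EuclideanSpace.basisFun (Fin n) ℝ)]
  refine Finset.sum_congr rfl fun j _ => ?_
  rw [EuclideanSpace.basisFun_apply, EuclideanSpace.inner_single_left, map_one, one_mul]
  exact dirDeriv_clm_comp _ (EuclideanSpace.proj j : Eu n →L[ℝ] ℝ) hu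

theorem lapl_apply_eq_laplacian (hu : ContDiffAt ℝ 2 u x) (j : Fin n) :
    lapl (fun z => u z j) x = Δ u x j := by
  have hcomp : Δ (fun z => u z j) x = Δ u x j :=
    hu.laplacian_CLM_comp_left (l := (EuclideanSpace.proj j : Eu n →L[ℝ] ℝ))
  have huj : ContDiffAt ℝ 2 (fun z => u z j) x :=
    (EuclideanSpace.proj j : Eu n →L[ℝ] ℝ).contDiff.contDiffAt.comp x hu
  rw [← hcomp, laplacian_eq_sum_dirDeriv (EuclideanSpace.basisFun (Fin n) ℝ) huj]
  simp only [EuclideanSpace.basisFun_apply]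
  rfl

theorem gradient_apply_eq_fderiv_single (p : Eu n → ℝ) (x : Eu n) (j : Fin n) :
    ∇ p x j = fderiv ℝ p x (EuclideanSpace.single j 1) := by
  rw [← inner_gradient_left, real_inner_comm, EuclideanSpace.inner_single_left, map_one, one_mul]

theorem isStokesSolutionOn_of_coordinates {U : Set (Eu n)} (hU : IsOpen U)
    (hu : ContDiffOn ℝ 2 u U) (hp : ContDiffOn ℝ 1 p U)
    (hstokes : ∀ y ∈ U, ∀ j,
      lapl (fun z => u z j) y - fderiv ℝ p y (EuclideanSpace.single j 1) = 0)
    (hdiv : ∀ y ∈ U, divg u y = 0) : IsStokesSolutionOn u p U where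
  contDiffOn_velocity := hu
  contDiffOn_pressure := hp
  laplacian_eq_gradient y hy := by
    ext j
    rw [← lapl_apply_eq_laplacian (hu.contDiffAt (hU.mem_nhds hy)), gradient_apply_eq_fderiv_single]
    exact sub_eq_zero.1 (hstokes y hy j)
  divergence_eq_zero y hy := by
    rw [← divg_eq_divergence, hdiv y hy]
    exact (hu.contDiffAt (hU.mem_nhds hy)).differentiableAt two_ne_zero

end Coordinates

/-- Let `n ≥ 2` and `Ω = ℝⁿ \ Ḡ` with `G` a convex domain in `ℝⁿ`.
Let `u ∈ C²(Ω) ∩ C_b(Ω̄)` be the velocity component of a solution `{u, p}` of the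
Stokes system `Δu - grad p = 0`, `div u = 0` in `Ω`, with pressure `p` vanishing as
`d_x → ∞`, and `|u| ≤ M` on `Ω`. Then for every `x ∈ Ω`,
`|p(x)| ≤ (Eₙ / d_x) · sup_Ω |u| ≤ (Eₙ / d_x) · M`. -/
theorem pressure_bound_stokes_complement_convex
    (n : ℕ) (hn : 2 ≤ n) (G Ω : Set (Eu n))
    (hGo : IsOpen G) (hGc : Convex ℝ G) (hGne : G.Nonempty)
    (hΩ : Ω = (closure G)ᶜ)
    (u : Eu n → Eu n) (p : Eu n → ℝ)
    (hreg : ContDiffOn ℝ 2 u Ω) (hcont : ContinuousOn u (closure Ω))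
    (hpreg : ContDiffOn ℝ 1 p Ω)
    (hstokes : ∀ y ∈ Ω, ∀ j : Fin n,
      lapl (fun z => u z j) y - fderiv ℝ p y (EuclideanSpace.single j 1) = 0)
    (hdiv : ∀ y ∈ Ω, divg u y = 0)
    (hvanish : ∀ ε > 0, ∃ Rb : ℝ, ∀ y ∈ Ω, Rb ≤ Metric.infDist y (frontier Ω) → |p y| ≤ ε)
    (M : ℝ) (hM : ∀ y ∈ Ω, ‖u y‖ ≤ M)
    (x : Eu n) (hx : x ∈ Ω) :
    |p x| ≤ Econst n / Metric.infDist x (frontier Ω) * M := by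
  subst hΩ
  rw [frontier_compl] at hvanish ⊢
  have h := isStokesSolutionOn_of_coordinates isClosed_closure.isOpen_compl hreg hpreg hstokes hdiv
  simpa only [finrank_euclideanSpace_fin] using
    pressure_bound_stokes_complement_convex_general (by rwa [finrank_euclideanSpace_fin])
      hGc.closure isClosed_closure hGne.closure h hvanish hM hx
end
end

section
/- Let Ω = ℂ \ Ḡ, where G is a convex domain in ℂ, and let f be a holomorphic function in Ω whose real part is bounded. Then for every point z ∈ Ω and every integer s ≥ 1, |f^{(s)}(z)| ≤ (K_s / d_z^s) · sup_Ω |Re f|, where d_z = dist(z, ∂Ω) and K_s = (s!/π) max_α ∫_{−π/2}^{π/2} |cos(α + (s+1)φ)| cos^{s−1}φ dφ. Moreover, for odd orders K_{2l+1} = 2[(2l+1)!!]² / (π(2l+1)), and K_2 = 3√3/(2π), K_4 = 3(16+5√5)/(4π). -/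
open Real Filter Metric
open scoped Real

noncomputable section

/-- The constant
`K_s = (s!/π) max_{α∈ℝ} ∫_{-π/2}^{π/2} |cos(α + (s+1)φ)| cos^{s-1}φ dφ`. -/
def Kconst (s : ℕ) : ℝ :=
  ((s.factorial : ℝ) / π) *
    ⨆ α : ℝ, ∫ t in (-(π / 2))..(π / 2),
      |Real.cos (α + ((s : ℝ) + 1) * t)| * Real.cos t ^ (s - 1)

/-!
Let `p` be the point of `closure G` nearest to `z`. The line through `p` orthogonal to `z - p`
supports `closure G`, so `Ω` contains the half-plane `{p + (z - p) w | 0 < re w}`, and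
`‖z - p‖ = d_z`. The Cayley transform `ζ ↦ p + (z - p) (1 + ζ) / (1 - ζ)` carries the unit disc to
this half-plane and `0` to `z`. By Bol's lemma `(2 (z - p)) ^ s * f^{(s)}(z)` is the `s`-th
derivative at `0` of `(1 - ζ) ^ (s - 1) * g ζ`, where `g` is `f` pulled back to the disc, and
this is an integral of `re g` over circles of radius `r < 1`. Letting `r → 1` bounds it
by `sup |re g|` times the `L¹` norm of the real part of a rotation of the kernel
`(1 - ζ) ^ (s - 1) / ζ ^ s`; on the unit circle the substitution `ζ = -exp (2 i φ)` turns that norm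
into the integral defining `K_s`.

To evaluate `K_s`, expand `cos ^ (s - 1)` into cosines and fold the integral of
`|cos (α + (s + 1) φ)| cos (j φ)` onto one period `π / (s + 1)` of the first factor: summing the
translates of `cos (j φ)` gives a ratio of sines, which vanishes for `s` odd and `j ≠ 0` and leaves
an elementary integral for `s` even.
-/

open intervalIntegral Set

/-! ### Cosine coefficients of `|cos (α + N t)|` -/

theorem cos_pow_eq_sum_choose_mul_cos (n : ℕ) (t : ℝ) :
    cos t ^ n = (∑ k ∈ Finset.range (n + 1), n.choose k * cos ((2 * k - n) * t)) / 2 ^ n := by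
  have hexp : ∀ k ∈ Finset.range (n + 1),
      Complex.exp (t * Complex.I) ^ k * Complex.exp (-t * Complex.I) ^ (n - k) * n.choose k =
        n.choose k * Complex.exp (((2 * k - n) * t : ℝ) * Complex.I) := by
    intro k hk
    rw [← Complex.exp_nat_mul, ← Complex.exp_nat_mul, ← Complex.exp_add, mul_comm]
    congr 2
    push_cast [Nat.cast_sub (Finset.mem_range_succ_iff.mp hk)]
    ring
  have hcos : (2 * cos t : ℂ) ^ n =
      ∑ k ∈ Finset.range (n + 1), n.choose k * Complex.exp (((2 * k - n) * t : ℝ) * Complex.I) := by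
    rw [Complex.ofReal_cos, Complex.two_cos, add_pow, Finset.sum_congr rfl hexp]
  have hre := congrArg Complex.re hcos
  rw [eq_div_iff (by positivity), mul_comm, ← mul_pow]
  simpa only [Complex.re_sum, ← Complex.ofReal_natCast, Complex.re_ofReal_mul,
    Complex.exp_ofReal_mul_I_re, ← Complex.ofReal_ofNat, ← Complex.ofReal_mul,
    ← Complex.ofReal_pow, Complex.ofReal_re] using hre

theorem integral_periodic_mul_eq_integral_mul_sum {h w : ℝ → ℝ} {τ : ℝ}
    (hper : Function.Periodic h τ) (hh : Continuous h) (hw : Continuous w) (a : ℝ) (n : ℕ) :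
    ∫ t in a..(a + n * τ), h t * w t =
      ∫ t in a..(a + τ), h t * ∑ k ∈ Finset.range n, w (t + k * τ) := by
  have hadj := sum_integral_adjacent_intervals (μ := MeasureTheory.volume)
    (f := fun t ↦ h t * w t) (a := fun k : ℕ ↦ a + k * τ) (n := n)
    fun k _ ↦ (hh.mul hw).intervalIntegrable _ _
  simp only [Nat.cast_zero, zero_mul, add_zero] at hadj
  simp_rw [← hadj, Finset.mul_sum]
  rw [integral_finsetSum fun k _ ↦ Continuous.intervalIntegrable (by fun_prop) _ _]
  refine Finset.sum_congr rfl fun k _ ↦ ?_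
  have hshift : ∀ t, h t * w (t + k * τ) = h (t + k * τ) * w (t + k * τ) := fun t ↦ by
    rw [hper.nat_mul k t]
  simp_rw [hshift]
  rw [integral_comp_add_right (fun t ↦ h t * w t)]
  push_cast
  ring_nf

theorem sin_mul_integral_periodic_mul_cos {h : ℝ → ℝ} {τ : ℝ} (hper : Function.Periodic h τ)
    (hh : Continuous h) (a j : ℝ) (n : ℕ) :
    sin (j * τ / 2) * ∫ t in a..(a + n * τ), h t * cos (j * t) =
      sin (n * (j * τ) / 2) * ∫ t in a..(a + τ), h t * cos (j * t + (n - 1) * (j * τ) / 2) := by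
  rw [integral_periodic_mul_eq_integral_mul_sum hper hh (by fun_prop) a n,
    ← integral_const_mul, ← integral_const_mul]
  congr 1
  ext t
  have hsum : ∑ k ∈ Finset.range n, cos (j * (t + k * τ)) =
      ∑ k ∈ Finset.range n, cos (j * τ * k + j * t) :=
    Finset.sum_congr rfl fun k _ ↦ by ring_nf
  rw [hsum, mul_left_comm, sin_mul_sum_cos]
  ring_nf

theorem integral_abs_mul_eq_of_sign_change {φ w P : ℝ → ℝ} {a p b : ℝ} (hφ : Continuous φ)
    (hw : Continuous w) (hap : a ≤ p) (hpb : p ≤ b) (hpos : ∀ t ∈ Icc a p, 0 ≤ φ t)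
    (hneg : ∀ t ∈ Icc p b, φ t ≤ 0) (hP : ∀ t, HasDerivAt P (φ t * w t) t) :
    ∫ t in a..b, |φ t| * w t = 2 * P p - P a - P b := by
  have hleft : ∫ t in a..p, |φ t| * w t = ∫ t in a..p, φ t * w t :=
    integral_congr fun t ht ↦ by
      simp only [abs_of_nonneg (hpos t (uIcc_of_le hap ▸ ht))]
  have hright : ∫ t in p..b, |φ t| * w t = ∫ t in p..b, -(φ t * w t) :=
    integral_congr fun t ht ↦ by
      simp only [abs_of_nonpos (hneg t (uIcc_of_le hpb ▸ ht)), neg_mul]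
  have hint : ∀ x y, IntervalIntegrable (fun t ↦ φ t * w t) MeasureTheory.volume x y :=
    (hφ.mul hw).intervalIntegrable
  have hint' : ∀ x y, IntervalIntegrable (fun t ↦ |φ t| * w t) MeasureTheory.volume x y :=
    (hφ.abs.mul hw).intervalIntegrable
  rw [← integral_add_adjacent_intervals (hint' a p) (hint' p b), hleft, hright, integral_neg,
    integral_eq_sub_of_hasDerivAt (fun t _ ↦ hP t) (hint a p),
    integral_eq_sub_of_hasDerivAt (fun t _ ↦ hP t) (hint p b)]
  ring

theorem hasDerivAt_primitive_cos_mul_cos {N j : ℝ} (hadd : N + j ≠ 0) (hsub : N - j ≠ 0)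
    (α t : ℝ) :
    HasDerivAt
      (fun t ↦ (sin (α + (N + j) * t) / (N + j) + sin (α + (N - j) * t) / (N - j)) / 2)
      (cos (α + N * t) * cos (j * t)) t := by
  have hsin : ∀ m : ℝ, HasDerivAt (fun t ↦ sin (α + m * t)) (cos (α + m * t) * m) t := fun m ↦ by
    simpa using (((hasDerivAt_id t).const_mul m).const_add α).sin
  refine ((((hsin (N + j)).div_const _).add ((hsin (N - j)).div_const _)).div_const 2).congr_deriv
    ?_
  rw [mul_div_cancel_right₀ _ hadd, mul_div_cancel_right₀ _ hsub,
    show α + (N + j) * t = α + N * t + j * t by ring,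
    show α + (N - j) * t = α + N * t - j * t by ring, cos_add (α + N * t), cos_sub (α + N * t)]
  ring

theorem integral_abs_cos_mul_cos {N α j : ℝ} (hN : 0 < N) (hα : α ∈ Icc 0 π) (hadd : N + j ≠ 0)
    (hsub : N - j ≠ 0) :
    ∫ t in (-(π / N / 2))..(π / N / 2), |cos (α + N * t)| * cos (j * t) =
      2 / (N ^ 2 - j ^ 2) *
        (N * cos (j * ((π / 2 - α) / N)) - j * sin (j * (π / N) / 2) * sin α) := by
  obtain ⟨hα0, hαπ⟩ := hα
  set p := (π / 2 - α) / N with hp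
  set e := π / N / 2 with he
  have hNp : N * p = π / 2 - α := by rw [hp]; field_simp
  have hNe : N * e = π / 2 := by rw [he]; field_simp
  have hep : -e ≤ p := le_of_mul_le_mul_left (by linarith) hN
  have hpe : p ≤ e := le_of_mul_le_mul_left (by linarith) hN
  rw [integral_abs_mul_eq_of_sign_change (φ := fun t ↦ cos (α + N * t)) (by fun_prop) (by fun_prop)
    hep hpe ?pos ?neg (hasDerivAt_primitive_cos_mul_cos hadd hsub α)]
  case pos =>
    rintro t ⟨het, htp⟩
    have := mul_le_mul_of_nonneg_left het hN.le
    have := mul_le_mul_of_nonneg_left htp hN.le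
    exact cos_nonneg_of_neg_pi_div_two_le_of_le (by linarith) (by linarith)
  case neg =>
    rintro t ⟨hpt, hte⟩
    have := mul_le_mul_of_nonneg_left hpt hN.le
    have := mul_le_mul_of_nonneg_left hte hN.le
    exact cos_nonpos_of_pi_div_two_le_of_le (by linarith) (by linarith)
  have hcosadd : cos ((N + j) * e) = -sin (j * e) := by
    rw [add_mul, hNe, add_comm, cos_add_pi_div_two]
  have hcossub : cos ((N - j) * e) = sin (j * e) := by
    rw [sub_mul, hNe, cos_pi_div_two_sub]
  rw [show α + (N + j) * p = j * p + π / 2 by linear_combination hNp,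
    show α + (N - j) * p = π / 2 - j * p by linear_combination hNp,
    sin_add_pi_div_two, sin_pi_div_two_sub, mul_neg, mul_neg,
    show j * (π / N) / 2 = j * e by rw [he]; ring]
  simp only [sin_add, cos_neg, sin_neg, hcosadd, hcossub]
  rw [show N ^ 2 - j ^ 2 = (N + j) * (N - j) by ring]
  field_simp
  ring

/-- The `j`-th cosine coefficient of `t ↦ |cos (α + N t)|` on `[-π/2, π/2]`, without
normalization. -/
def absCosCoeff (N : ℕ) (α j : ℝ) : ℝ :=
  ∫ t in (-(π / 2))..(π / 2), |cos (α + N * t)| * cos (j * t)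

theorem absCosCoeff_neg (N : ℕ) (α j : ℝ) : absCosCoeff N α (-j) = absCosCoeff N α j := by
  simp only [absCosCoeff, neg_mul, cos_neg]

theorem periodic_abs_cos : Function.Periodic (fun t ↦ |cos t|) π := fun t ↦ by
  simp only [cos_add_pi, abs_neg]

theorem periodic_abs_cos_add_mul {N : ℝ} (hN : N ≠ 0) (α : ℝ) :
    Function.Periodic (fun t ↦ |cos (α + N * t)|) (π / N) := fun t ↦ by
  simp only [mul_add, mul_div_cancel₀ _ hN, ← add_assoc, cos_add_pi, abs_neg]

theorem sin_mul_absCosCoeff {N : ℕ} (hN : N ≠ 0) (α j : ℝ) :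
    sin (j * (π / N) / 2) * absCosCoeff N α j =
      sin (j * π / 2) * ∫ t in (-(π / 2))..(-(π / 2) + π / N),
        |cos (α + N * t)| * cos (j * t + (N - 1) * (j * (π / N)) / 2) := by
  have hN' : (N : ℝ) ≠ 0 := Nat.cast_ne_zero.mpr hN
  have hfold := sin_mul_integral_periodic_mul_cos (periodic_abs_cos_add_mul hN' α) (by fun_prop)
    (-(π / 2)) j N
  rw [mul_div_cancel₀ _ hN'] at hfold
  rwa [show -(π / 2) + π = π / 2 by ring,
    show N * (j * (π / N)) = j * π by field_simp] at hfold

theorem absCosCoeff_zero {N : ℕ} (hN : N ≠ 0) (α : ℝ) : absCosCoeff N α 0 = 2 := by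
  have hN' : (N : ℝ) ≠ 0 := Nat.cast_ne_zero.mpr hN
  have hint : ∀ a b, IntervalIntegrable (fun t ↦ |cos t|) MeasureTheory.volume a b := fun a b ↦
    Continuous.intervalIntegrable (by fun_prop) a b
  have hperiod : ∫ t in (-(π / 2))..(-(π / 2) + π), |cos t| = 2 := by
    have hle : -(π / 2) ≤ π / 2 := by linarith [pi_pos]
    have habs : ∫ t in (-(π / 2))..(π / 2), |cos t| = ∫ t in (-(π / 2))..(π / 2), cos t :=
      integral_congr fun t ht ↦ abs_of_nonneg (cos_nonneg_of_mem_Icc (uIcc_of_le hle ▸ ht))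
    rw [show -(π / 2) + π = π / 2 by ring, habs, integral_cos, sin_neg, sin_pi_div_two]
    norm_num
  have hmul := periodic_abs_cos.intervalIntegral_add_zsmul_eq N (α + N * -(π / 2)) hint
  rw [periodic_abs_cos.intervalIntegral_add_eq _ (-(π / 2)), hperiod] at hmul
  simp only [absCosCoeff, zero_mul, cos_zero, mul_one]
  rw [integral_comp_add_mul (fun x ↦ |cos x|) hN' α,
    show α + N * (π / 2) = α + N * -(π / 2) + (N : ℤ) • π by rw [zsmul_eq_mul]; push_cast; ring,
    hmul]
  simp only [zsmul_eq_mul, Int.cast_natCast, smul_eq_mul]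
  field_simp

theorem absCosCoeff_two_mul_eq_zero {N : ℕ} {i : ℤ} (hi : ¬ (N : ℤ) ∣ i) (hN : N ≠ 0) (α : ℝ) :
    absCosCoeff N α (2 * i) = 0 := by
  have hN' : (N : ℝ) ≠ 0 := Nat.cast_ne_zero.mpr hN
  have hsin : sin (2 * i * (π / N) / 2) ≠ 0 := by
    rw [Real.sin_ne_zero_iff]
    intro k hk
    refine hi ⟨k, ?_⟩
    have : (N * k : ℝ) = i := by
      field_simp at hk
      linarith
    exact_mod_cast this.symm
  have hfold := sin_mul_absCosCoeff hN α (2 * i)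
  rw [show 2 * (i : ℝ) * π / 2 = i * π by ring, sin_int_mul_pi, zero_mul] at hfold
  exact (mul_eq_zero.mp hfold).resolve_left hsin

theorem sin_mul_absCosCoeff_of_odd {N : ℕ} (hN : Odd N) {α j : ℝ} (hα : α ∈ Icc 0 π)
    (hadd : N + j ≠ 0) (hsub : N - j ≠ 0) :
    sin (j * (π / N) / 2) * absCosCoeff N α j =
      sin (j * π / 2) * (2 / (N ^ 2 - j ^ 2) *
        (N * cos (j * ((π / 2 - α) / N)) - j * sin (j * (π / N) / 2) * sin α)) := by
  obtain ⟨m, hm⟩ := hN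
  have hNpos : (0 : ℝ) < N := Nat.cast_pos.mpr (by omega)
  have hmN : (N : ℝ) = 2 * m + 1 := by exact_mod_cast hm
  have hper := periodic_abs_cos_add_mul hNpos.ne' α
  rw [sin_mul_absCosCoeff (by omega), ← integral_abs_cos_mul_cos hNpos hα hadd hsub]
  congr 1
  have hcenter : ∀ t, |cos (α + N * t)| * cos (j * t + (N - 1) * (j * (π / N)) / 2) =
      (fun t ↦ |cos (α + N * t)| * cos (j * t)) (t + m * (π / N)) := fun t ↦ by
    have hshift := hper.nat_mul m t
    simp only at hshift ⊢
    rw [hshift, hmN]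
    ring_nf
  simp_rw [hcenter]
  rw [integral_comp_add_right (fun t ↦ |cos (α + N * t)| * cos (j * t))]
  congr 1 <;> rw [hmN] <;> field_simp <;> ring

/-! ### The constants `K_s` -/

/-- The integral whose maximum over the phase `α` is `Kconst s`, up to the factor `s! / π`. -/
def phaseIntegral (s : ℕ) (α : ℝ) : ℝ :=
  ∫ t in (-(π / 2))..(π / 2), |cos (α + ((s : ℝ) + 1) * t)| * cos t ^ (s - 1)

theorem phaseIntegral_periodic (s : ℕ) : Function.Periodic (phaseIntegral s) π := fun α ↦ by
  simp only [phaseIntegral, add_right_comm α π, cos_add_pi, abs_neg]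

theorem phaseIntegral_succ (n : ℕ) (α : ℝ) :
    phaseIntegral (n + 1) α =
      (∑ k ∈ Finset.range (n + 1), n.choose k * absCosCoeff (n + 2) α (2 * k - n)) / 2 ^ n := by
  have hterm : ∀ t, |cos (α + (((n + 1 : ℕ) : ℝ) + 1) * t)| * cos t ^ (n + 1 - 1) =
      (∑ k ∈ Finset.range (n + 1),
        n.choose k * (|cos (α + ((n + 2 : ℕ) : ℝ) * t)| * cos ((2 * k - n) * t))) / 2 ^ n := by
    intro t
    rw [Nat.add_sub_cancel, cos_pow_eq_sum_choose_mul_cos, ← mul_div_assoc, Finset.mul_sum]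
    push_cast
    ring_nf
  simp only [phaseIntegral, absCosCoeff, hterm, integral_div]
  rw [integral_finsetSum fun k _ ↦ Continuous.intervalIntegrable (by fun_prop) _ _]
  simp only [integral_const_mul]

theorem phaseIntegral_two_mul_add_one (l : ℕ) (α : ℝ) :
    phaseIntegral (2 * l + 1) α = 2 * ((2 * l).choose l / 4 ^ l) := by
  have hvanish : ∀ k ∈ Finset.range (2 * l + 1), k ≠ l →
      (2 * l).choose k * absCosCoeff (2 * l + 2) α (2 * k - (2 * l : ℕ)) = 0 := by
    intro k hk hkl
    have hk' := Finset.mem_range.mp hk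
    have hdvd : ¬ ((2 * l + 2 : ℕ) : ℤ) ∣ (k - l : ℤ) := fun hdvd ↦ by
      have := Int.eq_zero_of_abs_lt_dvd hdvd (by rw [abs_lt]; omega)
      omega
    have hzero := absCosCoeff_two_mul_eq_zero hdvd (by omega) α
    rw [show (2 * k - (2 * l : ℕ) : ℝ) = 2 * (k - l : ℤ) by push_cast; ring, hzero, mul_zero]
  rw [phaseIntegral_succ, Finset.sum_eq_single_of_mem l (by simp; omega) hvanish,
    show (2 * l - (2 * l : ℕ) : ℝ) = 0 by push_cast; ring, absCosCoeff_zero (by omega), pow_mul]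
  norm_num
  ring

theorem cast_choose_two_mul_eq_doubleFactorial (l : ℕ) :
    ((2 * l).choose l : ℝ) = 2 ^ l * (2 * l + 1).doubleFactorial / ((2 * l + 1) * l.factorial) := by
  have hdouble : ((2 * l + 1 : ℕ) * (2 * l).factorial : ℝ) =
      (2 * l + 1).doubleFactorial * (2 ^ l * l.factorial) := by
    exact_mod_cast (Nat.factorial_eq_mul_doubleFactorial (2 * l)).trans
      (by rw [Nat.doubleFactorial_two_mul])
  have hchoose : ((2 * l).choose l * l.factorial * l.factorial : ℝ) = (2 * l).factorial := by
    have := Nat.choose_mul_factorial_mul_factorial (show l ≤ 2 * l by omega)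
    rw [show 2 * l - l = l by omega] at this
    exact_mod_cast this
  push_cast at hdouble
  rw [eq_div_iff (by positivity)]
  refine mul_right_cancel₀ (b := (l.factorial : ℝ)) (by positivity) ?_
  linear_combination hdouble + (2 * l + 1) * hchoose

theorem Kconst_two_mul_add_one (l : ℕ) :
    Kconst (2 * l + 1) = 2 * ((2 * l + 1).doubleFactorial : ℝ) ^ 2 / (π * (2 * l + 1)) := by
  have hfact : ((2 * l + 1).factorial : ℝ) =
      (2 * l + 1).doubleFactorial * (2 ^ l * l.factorial) := by
    rw [Nat.factorial_eq_mul_doubleFactorial, Nat.doubleFactorial_two_mul]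
    push_cast
    rfl
  calc Kconst (2 * l + 1) = (2 * l + 1).factorial / π * ⨆ α, phaseIntegral (2 * l + 1) α := rfl
    _ = (2 * l + 1).factorial / π * (2 * ((2 * l).choose l / 4 ^ l)) := by
      simp only [phaseIntegral_two_mul_add_one, ciSup_const]
    _ = 2 * ((2 * l + 1).doubleFactorial : ℝ) ^ 2 / (π * (2 * l + 1)) := by
      rw [hfact, cast_choose_two_mul_eq_doubleFactorial, show (4 : ℝ) = 2 * 2 by norm_num, mul_pow]
      field_simp

theorem phaseIntegral_two {α : ℝ} (hα : α ∈ Icc 0 π) :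
    phaseIntegral 2 α = 9 / 4 * cos ((π / 2 - α) / 3) - cos ((π / 2 - α) / 3) ^ 3 := by
  set p := (π / 2 - α) / 3 with hp
  have hphase : phaseIntegral 2 α = absCosCoeff 3 α 1 := by
    norm_num [phaseIntegral_succ, Finset.sum_range_succ, absCosCoeff_neg]
  have hsin : sin α = cos (3 * p) := by rw [← cos_pi_div_two_sub, hp]; ring_nf
  have hcoeff : sin (π / 6) * absCosCoeff 3 α 1 =
      1 / 4 * (3 * cos p - sin (π / 6) * cos (3 * p)) := by
    have := sin_mul_absCosCoeff_of_odd (N := 3) (j := 1) (by decide) hα (by norm_num) (by norm_num)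
    norm_num at this
    rwa [div_div, show (3 * 2 : ℝ) = 6 by norm_num, hsin] at this
  rw [sin_pi_div_six, cos_three_mul] at hcoeff
  linarith

theorem sin_pi_div_ten : sin (π / 10) = (√5 - 1) / 4 := by
  have h5 : √5 ^ 2 = 5 := sq_sqrt (by norm_num)
  rw [← cos_pi_div_two_sub, show π / 2 - π / 10 = 2 * (π / 5) by ring, cos_two_mul, cos_pi_div_five]
  linear_combination h5 / 8

theorem sin_three_mul_pi_div_ten : sin (3 * π / 10) = (1 + √5) / 4 := by
  rw [← cos_pi_div_two_sub, show π / 2 - 3 * π / 10 = π / 5 by ring, cos_pi_div_five]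

theorem cos_five_mul (x : ℝ) : cos (5 * x) = 16 * cos x ^ 5 - 20 * cos x ^ 3 + 5 * cos x := by
  rw [show 5 * x = 3 * x + 2 * x by ring, cos_add, cos_three_mul, sin_three_mul, cos_two_mul,
    sin_two_mul]
  linear_combination (8 * sin x ^ 2 * cos x + 2 * cos x - 8 * cos x ^ 3) * sin_sq_add_cos_sq x

theorem phaseIntegral_four {α : ℝ} (hα : α ∈ Icc 0 π) :
    phaseIntegral 4 α = (16 * cos ((π / 2 - α) / 5) ^ 5 - 20 * √5 * cos ((π / 2 - α) / 5) ^ 3 +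
      25 * √5 * cos ((π / 2 - α) / 5)) / 32 := by
  set p := (π / 2 - α) / 5 with hp
  have h5 : √5 ^ 2 = 5 := sq_sqrt (by norm_num)
  have hphase : phaseIntegral 4 α = (absCosCoeff 5 α 3 + 3 * absCosCoeff 5 α 1) / 4 := by
    norm_num [phaseIntegral_succ, Finset.sum_range_succ, absCosCoeff_neg, Nat.choose]
    ring
  have hsin : sin α = cos (5 * p) := by rw [← cos_pi_div_two_sub, hp]; ring_nf
  have hcoeff_one : sin (π / 10) * absCosCoeff 5 α 1 =
      1 / 12 * (5 * cos p - sin (π / 10) * cos (5 * p)) := by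
    have := sin_mul_absCosCoeff_of_odd (N := 5) (j := 1) (by decide) hα (by norm_num) (by norm_num)
    norm_num at this
    rwa [div_div, show (5 * 2 : ℝ) = 10 by norm_num, hsin] at this
  have hcoeff_three : sin (3 * π / 10) * absCosCoeff 5 α 3 =
      -(1 / 8 * (5 * cos (3 * p) - 3 * sin (3 * π / 10) * cos (5 * p))) := by
    have := sin_mul_absCosCoeff_of_odd (N := 5) (j := 3) (by decide) hα (by norm_num) (by norm_num)
    norm_num at this
    rwa [show 3 * (π / 5) / 2 = 3 * π / 10 by ring, show 3 * π / 2 = π / 2 + π by ring,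
      sin_add_pi, sin_pi_div_two, neg_one_mul, hsin] at this
  rw [sin_pi_div_ten, cos_five_mul] at hcoeff_one
  rw [sin_three_mul_pi_div_ten, cos_three_mul, cos_five_mul] at hcoeff_three
  -- Rationalizing: `(√5 - 1) (√5 + 1) = 4`.
  have hone : absCosCoeff 5 α 1 = 1 / 12 * (5 * (√5 + 1) * cos p -
      (16 * cos p ^ 5 - 20 * cos p ^ 3 + 5 * cos p)) := by
    linear_combination (√5 + 1) * hcoeff_one - (absCosCoeff 5 α 1 / 4 +
      1 / 48 * (16 * cos p ^ 5 - 20 * cos p ^ 3 + 5 * cos p)) * h5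
  have hthree : absCosCoeff 5 α 3 = -(1 / 8 * (5 * (√5 - 1) * (4 * cos p ^ 3 - 3 * cos p) -
      3 * (16 * cos p ^ 5 - 20 * cos p ^ 3 + 5 * cos p))) := by
    linear_combination (√5 - 1) * hcoeff_three - (absCosCoeff 5 α 3 / 4 -
      3 / 32 * (16 * cos p ^ 5 - 20 * cos p ^ 3 + 5 * cos p)) * h5
  rw [hphase, hone, hthree]
  ring

theorem Kconst_eq_of_isGreatest {s : ℕ} {v : ℝ} (hv : IsGreatest (phaseIntegral s '' Icc 0 π) v) :
    Kconst s = s.factorial / π * v := by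
  obtain ⟨⟨α₀, -, hα₀⟩, hub⟩ := hv
  have hmax : IsGreatest (range (phaseIntegral s)) v := by
    refine ⟨⟨α₀, hα₀⟩, ?_⟩
    rintro _ ⟨α, rfl⟩
    obtain ⟨β, hβ, hαβ⟩ := (phaseIntegral_periodic s).exists_mem_Ico₀ pi_pos α
    exact hαβ ▸ hub (mem_image_of_mem _ (Ico_subset_Icc_self hβ))
  exact congrArg (s.factorial / π * ·) hmax.csSup_eq

theorem Kconst_two : Kconst 2 = 3 * √3 / (2 * π) := by
  have h3 : √3 ^ 2 = 3 := sq_sqrt (by norm_num)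
  have hmax : IsGreatest (phaseIntegral 2 '' Icc 0 π) (3 * √3 / 4) := by
    refine ⟨⟨0, left_mem_Icc.mpr pi_nonneg, ?_⟩, ?_⟩
    · rw [phaseIntegral_two (left_mem_Icc.mpr pi_nonneg), show (π / 2 - 0) / 3 = π / 6 by ring,
        cos_pi_div_six]
      linear_combination -√3 / 8 * h3
    · rintro _ ⟨α, hα, rfl⟩
      rw [phaseIntegral_two hα]
      set c := cos ((π / 2 - α) / 3)
      have hc : 0 ≤ c := cos_nonneg_of_mem_Icc
        ⟨by linarith [hα.2, pi_pos], by linarith [hα.1, pi_pos]⟩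
      have hfactor : 3 * √3 / 4 - (9 / 4 * c - c ^ 3) = (c - √3 / 2) ^ 2 * (c + √3) := by
        linear_combination (3 / 4 * c - √3 / 4) * h3
      have : 0 ≤ (c - √3 / 2) ^ 2 * (c + √3) := by positivity
      linarith
  rw [Kconst_eq_of_isGreatest hmax]
  norm_num [Nat.factorial]
  field_simp
  norm_num

theorem quintic_le_of_mem_Icc {q c : ℝ} (hq : q ≤ 2.2361) (hc : c ∈ Icc 0.95 1) :
    16 * c ^ 5 - 20 * q * c ^ 3 + 25 * q * c ≤ 16 + 5 * q := by
  obtain ⟨hc0, hc1⟩ := hc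
  have hcoeff : 0 ≤ 20 * (1 + c + c ^ 2) - 25 := by nlinarith
  have hquot_extremal : 0 ≤ 16 * (1 + c + c ^ 2 + c ^ 3 + c ^ 4) -
      2.2361 * (20 * (1 + c + c ^ 2) - 25) := by
    obtain ⟨x, rfl⟩ : ∃ x, c = 0.95 + x := ⟨c - 0.95, by ring⟩
    have hx : 0 ≤ x := by linarith
    nlinarith [pow_nonneg hx 3, pow_nonneg hx 4, sq_nonneg (x - 0.02)]
  have hquot : 0 ≤ 16 * (1 + c + c ^ 2 + c ^ 3 + c ^ 4) - q * (20 * (1 + c + c ^ 2) - 25) := by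
    linarith [mul_le_mul_of_nonneg_right hq hcoeff]
  linarith [mul_nonneg (sub_nonneg.mpr hc1) hquot]

theorem Kconst_four : Kconst 4 = 3 * (16 + 5 * √5) / (4 * π) := by
  have hsqrt : √5 ≤ 2.2361 := sqrt_le_iff.mpr (by norm_num)
  have hmax : IsGreatest (phaseIntegral 4 '' Icc 0 π) ((16 + 5 * √5) / 32) := by
    have hmid : π / 2 ∈ Icc 0 π := ⟨by positivity, by linarith [pi_pos]⟩
    refine ⟨⟨π / 2, hmid, ?_⟩, ?_⟩
    · rw [phaseIntegral_four hmid, sub_self, zero_div, cos_zero]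
      ring
    · rintro _ ⟨α, hα, rfl⟩
      have hangle : ((π / 2 - α) / 5) ^ 2 ≤ 0.1 := by
        have := pi_lt_d2
        nlinarith [hα.1, hα.2]
      have hcos : 0.95 ≤ cos ((π / 2 - α) / 5) :=
        le_trans (by linarith) one_sub_sq_div_two_le_cos
      rw [phaseIntegral_four hα]
      refine div_le_div_of_nonneg_right ?_ (by norm_num)
      exact quintic_le_of_mem_Icc hsqrt ⟨hcos, cos_le_one _⟩
  rw [Kconst_eq_of_isGreatest hmax]
  norm_num [Nat.factorial]
  field_simp
  norm_num

/-! ### Derivatives and Möbius maps -/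

section Bol

variable {𝕜 : Type*} [NontriviallyNormedField 𝕜]

theorem iteratedDeriv_succ_linear_mul {h : 𝕜 → 𝕜} {z : 𝕜} (c d : 𝕜) {n : ℕ}
    (hh : ContDiffAt 𝕜 (n + 1 : ℕ) h z) :
    iteratedDeriv (n + 1) (fun w ↦ (c * w + d) * h w) z =
      (c * z + d) * iteratedDeriv (n + 1) h z + (n + 1) * c * iteratedDeriv n h z := by
  have hlin : deriv (fun w ↦ c * w + d) = fun _ ↦ c := by
    ext w
    simp
  have hhigher : ∀ i, iteratedDeriv (i + 2) (fun w ↦ c * w + d) z = 0 := fun i ↦ by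
    rw [iteratedDeriv_succ', hlin, iteratedDeriv_const, if_neg i.succ_ne_zero]
  rw [iteratedDeriv_fun_mul (by fun_prop) hh, Finset.sum_range_succ', Finset.sum_range_succ']
  simp only [hhigher, mul_zero, zero_mul, Finset.sum_const_zero, zero_add, iteratedDeriv_one, hlin,
    iteratedDeriv_zero, Nat.choose_one_right, Nat.choose_zero_right, Nat.add_sub_cancel, tsub_zero]
  push_cast
  ring

theorem hasDerivAt_moebius {a b c d z : 𝕜} (hz : c * z + d ≠ 0) :
    HasDerivAt (fun w ↦ (a * w + b) / (c * w + d)) ((a * d - b * c) / (c * z + d) ^ 2) z := by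
  have hlin : ∀ a b : 𝕜, HasDerivAt (fun w ↦ a * w + b) a z := fun a b ↦ by
    simpa using ((hasDerivAt_id z).const_mul a).add_const b
  refine ((hlin a b).div (hlin c d) hz).congr_deriv ?_
  ring

variable [CompleteSpace 𝕜]

theorem hasDerivAt_iteratedDeriv_comp_moebius_div_pow {f : 𝕜 → 𝕜} {a b c d z : 𝕜}
    (hz : c * z + d ≠ 0) (hf : AnalyticAt 𝕜 f ((a * z + b) / (c * z + d))) (n k : ℕ) :
    HasDerivAt (fun w ↦ iteratedDeriv n f ((a * w + b) / (c * w + d)) / (c * w + d) ^ k)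
      ((a * d - b * c) * iteratedDeriv (n + 1) f ((a * z + b) / (c * z + d)) / (c * z + d) ^ (k + 2)
        - k * c * iteratedDeriv n f ((a * z + b) / (c * z + d)) / (c * z + d) ^ (k + 1)) z := by
  have hdiff : DifferentiableAt 𝕜 (iteratedDeriv n f) ((a * z + b) / (c * z + d)) := by
    rw [iteratedDeriv_eq_iterate]
    exact (hf.iterated_deriv n).differentiableAt
  have hcomp : HasDerivAt (fun w ↦ iteratedDeriv n f ((a * w + b) / (c * w + d)))
      (iteratedDeriv (n + 1) f ((a * z + b) / (c * z + d)) *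
        ((a * d - b * c) / (c * z + d) ^ 2)) z := by
    rw [iteratedDeriv_succ]
    exact hdiff.hasDerivAt.comp z (hasDerivAt_moebius hz)
  have hpow : HasDerivAt (fun w ↦ (c * w + d) ^ k) (k * (c * z + d) ^ (k - 1) * c) z := by
    simpa using (((hasDerivAt_id z).const_mul c).add_const d).fun_pow k
  refine (hcomp.div hpow (pow_ne_zero k hz)).congr_deriv ?_
  rcases k with - | k
  · simp only [pow_zero, Nat.cast_zero, zero_mul, mul_zero, sub_zero, mul_one, one_pow, div_one,
      zero_div, zero_add]
    ring
  · rw [Nat.add_sub_cancel]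
    generalize iteratedDeriv (n + 1) f _ = f₁, iteratedDeriv n f _ = f₀
    generalize c * z + d = e at hz ⊢
    field_simp
    ring

/-- **Bol's lemma**. -/
theorem iteratedDeriv_pow_mul_comp_moebius {f : 𝕜 → 𝕜} (a b c d : 𝕜) (n : ℕ) {z : 𝕜}
    (hz : c * z + d ≠ 0) (hf : AnalyticAt 𝕜 f ((a * z + b) / (c * z + d))) :
    iteratedDeriv (n + 1) (fun w ↦ (c * w + d) ^ n * f ((a * w + b) / (c * w + d))) z =
      (a * d - b * c) ^ (n + 1) *
        (iteratedDeriv (n + 1) f ((a * z + b) / (c * z + d)) / (c * z + d) ^ (n + 2)) := by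
  induction n generalizing z with
  | zero =>
    have hderiv := (hasDerivAt_iteratedDeriv_comp_moebius_div_pow hz hf 0 0).deriv
    simp only [iteratedDeriv_zero, pow_zero, div_one, zero_add, Nat.cast_zero, zero_mul, zero_div,
      sub_zero] at hderiv
    simp only [zero_add, iteratedDeriv_one, pow_zero, one_mul, pow_one]
    rw [hderiv, iteratedDeriv_one, mul_div_assoc]
  | succ n ih =>
    set h : 𝕜 → 𝕜 := fun w ↦ (c * w + d) ^ n * f ((a * w + b) / (c * w + d))
    have hmoebius : AnalyticAt 𝕜 (fun w ↦ (a * w + b) / (c * w + d)) z := by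
      fun_prop (disch := assumption)
    have hh : AnalyticAt 𝕜 h z :=
      AnalyticAt.mul (by fun_prop) (hf.comp_of_eq hmoebius rfl)
    have hnear : iteratedDeriv (n + 1) h =ᶠ[nhds z] fun w ↦ (a * d - b * c) ^ (n + 1) *
        (iteratedDeriv (n + 1) f ((a * w + b) / (c * w + d)) / (c * w + d) ^ (n + 2)) := by
      have hden : ∀ᶠ w in nhds z, c * w + d ≠ 0 := ContinuousAt.eventually_ne (by fun_prop) hz
      filter_upwards [hden, hmoebius.continuousAt.eventually hf.eventually_analyticAt] with w hw hfw
      exact ih hw hfw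
    have hderiv := ((hasDerivAt_iteratedDeriv_comp_moebius_div_pow hz hf (n + 1) (n + 2)).const_mul
      ((a * d - b * c) ^ (n + 1))).deriv
    have hsplit : (fun w ↦ (c * w + d) ^ (n + 1) * f ((a * w + b) / (c * w + d))) =
        fun w ↦ (c * w + d) * h w := by
      simp only [h, pow_succ', mul_assoc]
    rw [hsplit, iteratedDeriv_succ_linear_mul c d hh.contDiffAt, ih hz hf, iteratedDeriv_succ,
      hnear.deriv_eq, hderiv]
    push_cast
    field_simp
    ring

end Bol

/-! ### Derivatives at the centre of a disc in terms of the real part -/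

section Schwarz

variable {r : ℝ} {g : ℂ → ℂ}

theorem circleAverage_inv_pow_smul {E : Type*} [NormedAddCommGroup E] [NormedSpace ℂ E]
    [CompleteSpace E] {f : ℂ → E} {c : ℂ} (hr : 0 < r) (hf : DifferentiableOn ℂ f (closedBall c r))
    (n : ℕ) :
    circleAverage (fun ζ ↦ ((ζ - c) ^ n)⁻¹ • f ζ) c r =
      (n.factorial : ℂ)⁻¹ • iteratedDeriv n f c := by
  have hcauchy := hf.circleIntegral_one_div_sub_center_pow_smul hr n
  simp only [circleAverage_eq_circleIntegral hr.ne', smul_smul]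
  simp only [one_div, pow_succ', mul_inv] at hcauchy
  rw [hcauchy, smul_smul]
  congr 1
  field_simp [Complex.two_pi_I_ne_zero]

/-- On `|ζ| = r` the conjugate of `P ζ / ζ ^ m` is a polynomial in `ζ` without constant term. -/
theorem circleAverage_conj_mul_eval_div_pow (hr : 0 < r)
    (hg : DifferentiableOn ℂ g (closedBall 0 r)) {P : Polynomial ℂ} {m : ℕ} (hP : P.natDegree < m) :
    circleAverage (fun ζ ↦ (starRingEnd ℂ) (g ζ) * (P.eval ζ / ζ ^ m)) 0 r = 0 := by
  set q : ℂ → ℂ := fun ζ ↦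
    ∑ k ∈ Finset.range m, (starRingEnd ℂ) (P.coeff k) * (ζ / r ^ 2) ^ (m - k) with hq
  have hq_zero : q 0 = 0 := Finset.sum_eq_zero fun k hk ↦ by
    rw [zero_div, zero_pow (Nat.sub_ne_zero_of_lt (Finset.mem_range.mp hk)), mul_zero]
  have hreflect : EqOn (fun ζ ↦ (starRingEnd ℂ) (g ζ) * (P.eval ζ / ζ ^ m))
      ((Complex.conjCLE : ℂ →L[ℝ] ℂ) ∘ fun ζ ↦ g ζ * q ζ) (sphere 0 |r|) := by
    intro ζ hζ
    rw [mem_sphere_zero_iff_norm, abs_of_pos hr] at hζ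
    have hζ0 : ζ ≠ 0 := norm_pos_iff.mp (hζ ▸ hr)
    have hinv : (starRingEnd ℂ) ζ / r ^ 2 = ζ⁻¹ := by
      rw [Complex.inv_def, Complex.normSq_eq_norm_sq, hζ]
      push_cast
      rfl
    simp only [Function.comp_apply, ContinuousLinearEquiv.coe_coe, Complex.conjCLE_apply, map_mul,
      hq, map_sum, map_pow, map_div₀, Complex.conj_conj, Complex.conj_ofReal, hinv]
    rw [Polynomial.eval_eq_sum_range' hP, Finset.sum_div]
    congr 1
    refine Finset.sum_congr rfl fun k hk ↦ ?_
    rw [inv_pow, pow_sub₀ ζ hζ0 (Finset.mem_range.mp hk).le]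
    field_simp
  have hgq : DifferentiableOn ℂ (fun ζ ↦ g ζ * q ζ) (closedBall 0 r) := hg.mul (by fun_prop)
  have hcl : DiffContOnCl ℂ (fun ζ ↦ g ζ * q ζ) (ball 0 |r|) := by
    rw [abs_of_pos hr]
    exact (hgq.mono closure_ball_subset_closedBall).diffContOnCl
  have hint : CircleIntegrable (fun ζ ↦ g ζ * q ζ) 0 r :=
    (hgq.continuousOn.mono sphere_subset_closedBall).circleIntegrable hr.le
  rw [circleAverage_congr_sphere hreflect,
    (Complex.conjCLE : ℂ →L[ℝ] ℂ).circleAverage_comp_comm hint, hcl.circleAverage, hq_zero,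
    mul_zero, map_zero]

theorem iteratedDeriv_eval_mul_eq_circleAverage_re (hr : 0 < r)
    (hg : DifferentiableOn ℂ g (closedBall 0 r)) {P : Polynomial ℂ} {m : ℕ} (hP : P.natDegree < m) :
    iteratedDeriv m (fun ζ ↦ P.eval ζ * g ζ) 0 =
      2 * m.factorial * circleAverage (fun ζ ↦ ((g ζ).re : ℂ) * (P.eval ζ / ζ ^ m)) 0 r := by
  have hcont : ContinuousOn g (sphere 0 r) := hg.continuousOn.mono sphere_subset_closedBall
  have hkernel : ContinuousOn (fun ζ ↦ P.eval ζ / ζ ^ m) (sphere 0 r) :=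
    P.continuous.continuousOn.div (by fun_prop) fun ζ hζ ↦
      pow_ne_zero m (ne_of_mem_sphere hζ hr.ne')
  have hint : CircleIntegrable (fun ζ ↦ g ζ * (P.eval ζ / ζ ^ m)) 0 r :=
    (hcont.mul hkernel).circleIntegrable hr.le
  have hint_conj : CircleIntegrable (fun ζ ↦ (starRingEnd ℂ) (g ζ) * (P.eval ζ / ζ ^ m)) 0 r :=
    ((Complex.continuous_conj.comp_continuousOn hcont).mul hkernel).circleIntegrable hr.le
  have hcauchy : (m.factorial : ℂ)⁻¹ * iteratedDeriv m (fun ζ ↦ P.eval ζ * g ζ) 0 =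
      circleAverage (fun ζ ↦ g ζ * (P.eval ζ / ζ ^ m)) 0 r := by
    rw [← smul_eq_mul, ← circleAverage_inv_pow_smul (f := fun ζ ↦ P.eval ζ * g ζ) hr
      (P.differentiable.differentiableOn.mul hg)]
    congr 1
    ext ζ
    simp only [sub_zero, smul_eq_mul]
    ring
  have hre : circleAverage (fun ζ ↦ g ζ * (P.eval ζ / ζ ^ m)) 0 r =
      2 * circleAverage (fun ζ ↦ ((g ζ).re : ℂ) * (P.eval ζ / ζ ^ m)) 0 r := by
    have hsum := circleAverage_fun_add hint hint_conj
    rw [circleAverage_conj_mul_eval_div_pow hr hg hP, add_zero] at hsum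
    rw [← hsum, ← smul_eq_mul, ← circleAverage_fun_smul]
    congr 1
    ext ζ
    rw [Complex.re_eq_add_conj, smul_eq_mul]
    ring
  rw [mul_right_comm, ← hre, ← hcauchy, mul_right_comm,
    inv_mul_cancel₀ (Nat.cast_ne_zero.mpr m.factorial_ne_zero), one_mul]

theorem re_mul_iteratedDeriv_eval_mul_le (hr : 0 < r)
    (hg : DifferentiableOn ℂ g (closedBall 0 r)) {M : ℝ} (hM : ∀ ζ ∈ sphere 0 r, |(g ζ).re| ≤ M)
    {P : Polynomial ℂ} {m : ℕ} (hP : P.natDegree < m) (v : ℂ) :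
    (v * iteratedDeriv m (fun ζ ↦ P.eval ζ * g ζ) 0).re ≤
      2 * m.factorial * (M * circleAverage (fun ζ ↦ |(v * (P.eval ζ / ζ ^ m)).re|) 0 r) := by
  have hcont : ContinuousOn g (sphere 0 r) := hg.continuousOn.mono sphere_subset_closedBall
  have hkernel : ContinuousOn (fun ζ ↦ v * (P.eval ζ / ζ ^ m)) (sphere 0 r) :=
    continuousOn_const.mul <| P.continuous.continuousOn.div (by fun_prop) fun ζ hζ ↦
      pow_ne_zero m (ne_of_mem_sphere hζ hr.ne')
  have hcont_re := Complex.continuous_re.comp_continuousOn hcont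
  have hkernel_re := Complex.continuous_re.comp_continuousOn hkernel
  have hint : CircleIntegrable (fun ζ ↦ ((g ζ).re : ℂ) * (v * (P.eval ζ / ζ ^ m))) 0 r :=
    ((Complex.continuous_ofReal.comp_continuousOn hcont_re).mul hkernel).circleIntegrable hr.le
  have hint_re : CircleIntegrable (fun ζ ↦ (g ζ).re * (v * (P.eval ζ / ζ ^ m)).re) 0 r :=
    (hcont_re.mul hkernel_re).circleIntegrable hr.le
  have hint_abs : CircleIntegrable (fun ζ ↦ M • |(v * (P.eval ζ / ζ ^ m)).re|) 0 r :=
    (hkernel_re.abs.const_smul M).circleIntegrable hr.le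
  have hre : (v * iteratedDeriv m (fun ζ ↦ P.eval ζ * g ζ) 0).re =
      2 * m.factorial * circleAverage (fun ζ ↦ (g ζ).re * (v * (P.eval ζ / ζ ^ m)).re) 0 r := by
    have hpull : v * circleAverage (fun ζ ↦ ((g ζ).re : ℂ) * (P.eval ζ / ζ ^ m)) 0 r =
        circleAverage (fun ζ ↦ ((g ζ).re : ℂ) * (v * (P.eval ζ / ζ ^ m))) 0 r := by
      simp only [← smul_eq_mul v, ← circleAverage_fun_smul, mul_smul_comm]
    have hcomm := Complex.reCLM.circleAverage_comp_comm hint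
    simp only [Function.comp_def, Complex.reCLM_apply, Complex.re_ofReal_mul] at hcomm
    rw [iteratedDeriv_eval_mul_eq_circleAverage_re hr hg hP, mul_left_comm, hpull, hcomm]
    exact_mod_cast Complex.re_ofReal_mul (2 * m.factorial) _
  rw [hre, ← smul_eq_mul M, ← circleAverage_fun_smul]
  refine mul_le_mul_of_nonneg_left ?_ (by positivity)
  refine circleAverage_mono hint_re hint_abs fun ζ hζ ↦ ?_
  rw [abs_of_pos hr] at hζ
  calc (g ζ).re * (v * (P.eval ζ / ζ ^ m)).re ≤ |(g ζ).re| * |(v * (P.eval ζ / ζ ^ m)).re| := by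
        rw [← abs_mul]
        exact le_abs_self _
    _ ≤ M • |(v * (P.eval ζ / ζ ^ m)).re| :=
        mul_le_mul_of_nonneg_right (hM ζ hζ) (abs_nonneg _)

theorem re_mul_iteratedDeriv_eval_mul_le_of_ball (hg : DifferentiableOn ℂ g (ball 0 1)) {M : ℝ}
    (hM : ∀ ζ ∈ ball 0 1, |(g ζ).re| ≤ M) {P : Polynomial ℂ} {m : ℕ} (hP : P.natDegree < m)
    (v : ℂ) :
    (v * iteratedDeriv m (fun ζ ↦ P.eval ζ * g ζ) 0).re ≤
      2 * m.factorial * (M * circleAverage (fun ζ ↦ |(v * (P.eval ζ / ζ ^ m)).re|) 0 1) := by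
  have hkernel : ContinuousOn (fun ζ : ℂ ↦ |(v * (P.eval ζ / ζ ^ m)).re|)
      {ζ | ‖ζ - 0‖ ∈ Ioi (0 : ℝ)} := by
    have : ContinuousOn (fun ζ ↦ P.eval ζ / ζ ^ m) {ζ | ‖ζ - 0‖ ∈ Ioi (0 : ℝ)} :=
      P.continuous.continuousOn.div (by fun_prop) fun ζ hζ ↦
        pow_ne_zero m (norm_pos_iff.mp (sub_zero ζ ▸ hζ))
    fun_prop
  have hradius : ContinuousAt (circleAverage (fun ζ ↦ |(v * (P.eval ζ / ζ ^ m)).re|) 0) 1 :=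
    (Real.ContinuousOn.circleAverage hkernel fun _ hr ↦ (mem_Ioi.mp hr).le).continuousAt
      (Ioi_mem_nhds one_pos)
  have hlim := ((hradius.tendsto.mono_left (nhdsWithin_le_nhds (s := Iio 1))).const_mul M).const_mul
    (2 * m.factorial : ℝ)
  refine ge_of_tendsto hlim ?_
  filter_upwards [Ioo_mem_nhdsLT one_pos] with r ⟨hr0, hr1⟩
  exact re_mul_iteratedDeriv_eval_mul_le hr0 (hg.mono (closedBall_subset_ball hr1))
    (fun ζ hζ ↦ hM ζ (closedBall_subset_ball hr1 (sphere_subset_closedBall hζ))) hP v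

end Schwarz

/-! ### The bound on the unit disc -/

theorem bddAbove_range_phaseIntegral (s : ℕ) : BddAbove (range (phaseIntegral s)) := by
  refine ⟨1 * |π / 2 - -(π / 2)|, ?_⟩
  rintro _ ⟨α, rfl⟩
  refine (le_norm_self _).trans (norm_integral_le_of_norm_le_const fun t _ ↦ ?_)
  rw [norm_mul, norm_pow, Real.norm_eq_abs, Real.norm_eq_abs, abs_abs]
  exact mul_le_one₀ (abs_cos_le_one _) (by positivity)
    (pow_le_one₀ (abs_nonneg _) (abs_cos_le_one _))

theorem phaseIntegral_le_Kconst (s : ℕ) (α : ℝ) :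
    s.factorial / π * phaseIntegral s α ≤ Kconst s :=
  mul_le_mul_of_nonneg_left (le_ciSup (bddAbove_range_phaseIntegral s) α) (by positivity)

theorem circleMap_pi_add_two_mul (x : ℝ) :
    circleMap 0 1 (π + 2 * x) = -Complex.exp (x * Complex.I) ^ 2 := by
  rw [circleMap_zero, ← Complex.exp_nat_mul, Complex.ofReal_one, one_mul, Complex.ofReal_add,
    add_mul, Complex.exp_add, Complex.exp_pi_mul_I, neg_one_mul]
  push_cast
  rw [mul_assoc]

theorem one_sub_circleMap_pi_add_two_mul (x : ℝ) :
    1 - circleMap 0 1 (π + 2 * x) = (2 * cos x : ℝ) * Complex.exp (x * Complex.I) := by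
  rw [circleMap_pi_add_two_mul]
  push_cast
  rw [Complex.two_cos, neg_mul, Complex.exp_neg]
  field_simp [Complex.exp_ne_zero]
  ring

theorem abs_re_exp_mul_one_sub_pow_div_pow (n : ℕ) (θ : ℝ) {x : ℝ}
    (hx : x ∈ Icc (-(π / 2)) (π / 2)) :
    |(Complex.exp (-θ * Complex.I) *
      ((1 - circleMap 0 1 (π + 2 * x)) ^ n / circleMap 0 1 (π + 2 * x) ^ (n + 1))).re| =
      2 ^ n * (|cos (θ + (n + 2) * x)| * cos x ^ n) := by
  have hpolar : Complex.exp (-θ * Complex.I) *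
      ((1 - circleMap 0 1 (π + 2 * x)) ^ n / circleMap 0 1 (π + 2 * x) ^ (n + 1)) =
      ((-1) ^ (n + 1) * (2 * cos x) ^ n : ℝ) *
        Complex.exp ((-(θ + (n + 2) * x) : ℝ) * Complex.I) := by
    have hexp : Complex.exp ((-(θ + (n + 2) * x) : ℝ) * Complex.I) =
        Complex.exp (-θ * Complex.I) / Complex.exp (x * Complex.I) ^ (n + 2) := by
      rw [← Complex.exp_nat_mul, ← Complex.exp_sub]
      push_cast
      ring_nf
    rw [one_sub_circleMap_pi_add_two_mul, circleMap_pi_add_two_mul, hexp, neg_pow]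
    push_cast
    field_simp [Complex.exp_ne_zero]
    rw [← pow_mul, mul_comm (n + 1) 2, pow_mul, neg_one_sq, one_pow]
    ring
  rw [hpolar, Complex.re_ofReal_mul, Complex.exp_ofReal_mul_I_re, cos_neg, abs_mul, abs_mul,
    abs_neg_one_pow, one_mul, abs_of_nonneg (by have := cos_nonneg_of_mem_Icc hx; positivity)]
  ring

theorem circleAverage_abs_re_exp_mul_one_sub_pow_div_pow (n : ℕ) (θ : ℝ) :
    circleAverage (fun ζ ↦ |(Complex.exp (-θ * Complex.I) * ((1 - ζ) ^ n / ζ ^ (n + 1))).re|) 0 1 =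
      2 ^ n / π * phaseIntegral (n + 1) θ := by
  have hsub := smul_integral_comp_add_mul (a := -(π / 2)) (b := π / 2) (fun t ↦
    |(Complex.exp (-θ * Complex.I) *
      ((1 - circleMap 0 1 t) ^ n / circleMap 0 1 t ^ (n + 1))).re|) 2 π
  rw [show π + 2 * (-(π / 2)) = 0 by ring, show π + 2 * (π / 2) = 2 * π by ring] at hsub
  have hcongr : EqOn (fun x ↦ |(Complex.exp (-θ * Complex.I) *
      ((1 - circleMap 0 1 (π + 2 * x)) ^ n / circleMap 0 1 (π + 2 * x) ^ (n + 1))).re|)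
      (fun x ↦ 2 ^ n * (|cos (θ + ((n + 1 : ℕ) + 1) * x)| * cos x ^ (n + 1 - 1)))
      (uIcc (-(π / 2)) (π / 2)) := fun x hx ↦ by
    rw [uIcc_of_le (by linarith [pi_pos])] at hx
    beta_reduce
    rw [abs_re_exp_mul_one_sub_pow_div_pow n θ hx, Nat.add_sub_cancel, Nat.cast_succ, add_assoc,
      one_add_one_eq_two]
  rw [circleAverage_def, ← hsub, integral_congr hcongr, integral_const_mul, phaseIntegral,
    smul_eq_mul, smul_eq_mul]
  field_simp

theorem norm_iteratedDeriv_one_sub_pow_mul_le {g : ℂ → ℂ} (hg : DifferentiableOn ℂ g (ball 0 1))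
    {M : ℝ} (hM : ∀ ζ ∈ ball 0 1, |(g ζ).re| ≤ M) (n : ℕ) :
    ‖iteratedDeriv (n + 1) (fun ζ ↦ (1 - ζ) ^ n * g ζ) 0‖ ≤
      2 ^ (n + 1) * (Kconst (n + 1) * M) := by
  have hM0 : 0 ≤ M := (abs_nonneg _).trans (hM 0 (mem_ball_self one_pos))
  set D := iteratedDeriv (n + 1) (fun ζ ↦ (1 - ζ) ^ n * g ζ) 0
  have hrotate : Complex.exp (-D.arg * Complex.I) * D = ‖D‖ := by
    nth_rw 2 [← Complex.norm_mul_exp_arg_mul_I D]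
    rw [mul_left_comm, ← Complex.exp_add, neg_mul, neg_add_cancel, Complex.exp_zero, mul_one]
  have hdegree : ((1 - Polynomial.X : Polynomial ℂ) ^ n).natDegree < n + 1 := by
    refine Nat.lt_succ_of_le (Polynomial.natDegree_pow_le_of_le n ?_ |>.trans_eq (mul_one n))
    compute_degree
  have hbound := re_mul_iteratedDeriv_eval_mul_le_of_ball hg hM hdegree
    (Complex.exp (-D.arg * Complex.I))
  simp only [Polynomial.eval_pow, Polynomial.eval_sub, Polynomial.eval_one, Polynomial.eval_X,
    circleAverage_abs_re_exp_mul_one_sub_pow_div_pow] at hbound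
  calc ‖D‖ = (Complex.exp (-D.arg * Complex.I) * D).re := by rw [hrotate, Complex.ofReal_re]
    _ ≤ 2 * (n + 1).factorial * (M * (2 ^ n / π * phaseIntegral (n + 1) D.arg)) := hbound
    _ = 2 ^ (n + 1) * ((n + 1).factorial / π * phaseIntegral (n + 1) D.arg * M) := by ring
    _ ≤ 2 ^ (n + 1) * (Kconst (n + 1) * M) := by
      gcongr
      exact phaseIntegral_le_Kconst (n + 1) D.arg

/-! ### The bound on a half-plane -/

theorem re_one_add_div_one_sub_pos {z : ℂ} (hz : z ∈ ball 0 1) : 0 < ((1 + z) / (1 - z)).re := by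
  have hz1 : 1 - z ≠ 0 := sub_ne_zero.mpr fun h ↦ by simp [← h] at hz
  have hnorm : Complex.normSq z < 1 := by
    rw [Complex.normSq_eq_norm_sq]
    exact pow_lt_one₀ (norm_nonneg z) (mem_ball_zero_iff.mp hz) two_ne_zero
  have hre : ((1 + z) / (1 - z)).re = (1 - Complex.normSq z) / Complex.normSq (1 - z) := by
    rw [Complex.div_re, ← add_div]
    simp only [Complex.add_re, Complex.sub_re, Complex.add_im, Complex.sub_im, Complex.one_re,
      Complex.one_im, Complex.normSq_apply]
    ring
  rw [hre]
  exact div_pos (sub_pos.mpr hnorm) (Complex.normSq_pos.mpr hz1)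

theorem norm_pow_mul_norm_iteratedDeriv_le_of_mapsTo_halfPlane {f : ℂ → ℂ} {U : Set ℂ}
    (hU : IsOpen U) (hf : DifferentiableOn ℂ f U) {M : ℝ} (hM : ∀ w ∈ U, |(f w).re| ≤ M) {p u : ℂ}
    (hmaps : MapsTo (fun w ↦ p + u * w) {w | 0 < w.re} U) (n : ℕ) :
    ‖u‖ ^ (n + 1) * ‖iteratedDeriv (n + 1) f (p + u)‖ ≤ Kconst (n + 1) * M := by
  have hden : ∀ z ∈ ball (0 : ℂ) 1, -1 * z + 1 ≠ 0 := fun z hz h ↦ by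
    simp [show z = 1 by linear_combination -h] at hz
  have hcayley : MapsTo (fun z ↦ ((u - p) * z + (p + u)) / (-1 * z + 1)) (ball 0 1) U := by
    intro z hz
    convert hmaps (re_one_add_div_one_sub_pos hz) using 1
    rw [show 1 - z = -1 * z + 1 by ring]
    linear_combination p * div_self (hden z hz)
  have hg : DifferentiableOn ℂ (fun z ↦ f (((u - p) * z + (p + u)) / (-1 * z + 1))) (ball 0 1) :=
    hf.comp (fun z hz ↦
      (hasDerivAt_moebius (hden z hz)).differentiableAt.differentiableWithinAt) hcayley
  have hbol := iteratedDeriv_pow_mul_comp_moebius (u - p) (p + u) (-1) 1 n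
    (hden 0 (mem_ball_self one_pos))
    (hf.analyticAt (hU.mem_nhds (hcayley (mem_ball_self one_pos))))
  have hdisc := norm_iteratedDeriv_one_sub_pow_mul_le hg (fun z hz ↦ hM _ (hcayley hz)) n
  rw [show (fun z ↦ (1 - z) ^ n * f (((u - p) * z + (p + u)) / (-1 * z + 1))) =
    fun z ↦ (-1 * z + 1) ^ n * f (((u - p) * z + (p + u)) / (-1 * z + 1)) by
      ext z; rw [neg_one_mul, neg_add_eq_sub], hbol,
    show (u - p) * 1 - (p + u) * -1 = 2 * u by ring] at hdisc
  simp only [mul_zero, zero_add, div_one, one_pow, norm_mul, norm_pow, mul_pow,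
    Complex.norm_ofNat, mul_assoc] at hdisc
  exact le_of_mul_le_mul_left hdisc (by positivity)

/-! ### The complement of a convex set -/

theorem exists_mem_frontier_mapsTo_halfPlane_compl {C : Set ℂ} (hC : IsClosed C)
    (hconv : Convex ℝ C) (hne : C.Nonempty) {z : ℂ} (hz : z ∉ C) :
    ∃ p ∈ frontier C, MapsTo (fun w ↦ p + (z - p) * w) {w | 0 < w.re} Cᶜ := by
  obtain ⟨p, hp, hnearest⟩ := exists_norm_eq_iInf_of_complete_convex hne hC.isComplete hconv z
  rw [norm_eq_iInf_iff_real_inner_le_zero hconv hp] at hnearest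
  have hzp : 0 < Complex.normSq (z - p) :=
    Complex.normSq_pos.mpr (sub_ne_zero.mpr fun h ↦ hz (h ▸ hp))
  have hmaps : MapsTo (fun w ↦ p + (z - p) * w) {w | 0 < w.re} Cᶜ := fun w hw hmem ↦ by
    have hinner : inner ℝ (z - p) (p + (z - p) * w - p) = Complex.normSq (z - p) * w.re := by
      rw [add_sub_cancel_left, Complex.inner, mul_right_comm, Complex.mul_conj,
        Complex.re_ofReal_mul]
    exact (hnearest _ hmem).not_gt (hinner ▸ mul_pos hzp hw)
  have hfrontier : p ∈ frontier C := by
    have h0 : (0 : ℂ) ∈ closure {w : ℂ | 0 < w.re} := by simp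
    have hray : Continuous fun w ↦ p + (z - p) * w := by fun_prop
    rw [frontier_eq_closure_inter_closure]
    exact ⟨subset_closure hp, by simpa using hmaps.closure hray h0⟩
  exact ⟨p, hfrontier, hmaps⟩

theorem norm_iteratedDeriv_le_of_isClosed_convex {C : Set ℂ} (hC : IsClosed C)
    (hconv : Convex ℝ C) (hne : C.Nonempty) {f : ℂ → ℂ} (hf : DifferentiableOn ℂ f Cᶜ) {M : ℝ}
    (hM : ∀ w ∈ Cᶜ, |(f w).re| ≤ M) {z : ℂ} (hz : z ∉ C) (n : ℕ) :
    ‖iteratedDeriv (n + 1) f z‖ ≤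
      Kconst (n + 1) / infDist z (frontier C) ^ (n + 1) * M := by
  obtain ⟨p, hp, hmaps⟩ := exists_mem_frontier_mapsTo_halfPlane_compl hC hconv hne hz
  have hdist_le : infDist z (frontier C) ≤ ‖z - p‖ :=
    dist_eq_norm z p ▸ infDist_le_dist_of_mem hp
  have hdist_pos : 0 < infDist z (frontier C) :=
    (isClosed_frontier.notMem_iff_infDist_pos ⟨p, hp⟩).mp fun h ↦ hz (hC.frontier_subset h)
  have hhalf := norm_pow_mul_norm_iteratedDeriv_le_of_mapsTo_halfPlane hC.isOpen_compl hf hM hmaps n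
  rw [add_sub_cancel] at hhalf
  rw [div_mul_eq_mul_div, le_div_iff₀ (by positivity), mul_comm]
  refine le_trans ?_ hhalf
  gcongr

theorem derivative_bound_holomorphic_complement_convex_general
    (G Ω : Set ℂ) (hGc : Convex ℝ G) (hGne : G.Nonempty)
    (hΩ : Ω = (closure G)ᶜ)
    (f : ℂ → ℂ) (hf : DifferentiableOn ℂ f Ω)
    (M : ℝ) (hM : ∀ w ∈ Ω, |(f w).re| ≤ M) :
    (∀ z ∈ Ω, ∀ s : ℕ, 1 ≤ s →
      ‖iteratedDeriv s f z‖ ≤ Kconst s / Metric.infDist z (frontier Ω) ^ s * M)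
    ∧ (∀ l : ℕ, Kconst (2 * l + 1) =
        2 * ((Nat.doubleFactorial (2 * l + 1) : ℝ)) ^ 2 / (π * (2 * (l : ℝ) + 1)))
    ∧ Kconst 2 = 3 * Real.sqrt 3 / (2 * π)
    ∧ Kconst 4 = 3 * (16 + 5 * Real.sqrt 5) / (4 * π) := by
  refine ⟨fun z hz s hs ↦ ?_, Kconst_two_mul_add_one, Kconst_two, Kconst_four⟩
  obtain ⟨n, rfl⟩ := Nat.exists_eq_add_of_le' hs
  subst hΩ
  rw [frontier_compl]
  exact norm_iteratedDeriv_le_of_isClosed_convex isClosed_closure hGc.closure hGne.closure hf hM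
    hz n

/-- Let `Ω = ℂ \ Ḡ` with `G` a convex domain in `ℂ`, and let `f` be
holomorphic in `Ω` with bounded real part (say `|Re f| ≤ M` on `Ω`). Then for every
`z ∈ Ω` and every `s ≥ 1`,
`|f^{(s)}(z)| ≤ (K_s / d_z^s) · sup_Ω |Re f| ≤ (K_s / d_z^s) · M`, where
`d_z = dist(z, ∂Ω)`. Moreover `K_{2l+1} = 2((2l+1)‼)²/(π(2l+1))`, `K_2 = 3√3/(2π)`
and `K_4 = 3(16+5√5)/(4π)`. -/
theorem derivative_bound_holomorphic_complement_convex
    (G Ω : Set ℂ) (hGo : IsOpen G) (hGc : Convex ℝ G) (hGne : G.Nonempty)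
    (hΩ : Ω = (closure G)ᶜ)
    (f : ℂ → ℂ) (hf : DifferentiableOn ℂ f Ω)
    (M : ℝ) (hM : ∀ w ∈ Ω, |(f w).re| ≤ M) :
    (∀ z ∈ Ω, ∀ s : ℕ, 1 ≤ s →
      ‖iteratedDeriv s f z‖ ≤ Kconst s / Metric.infDist z (frontier Ω) ^ s * M)
    ∧ (∀ l : ℕ, Kconst (2 * l + 1) =
        2 * ((Nat.doubleFactorial (2 * l + 1) : ℝ)) ^ 2 / (π * (2 * (l : ℝ) + 1)))
    ∧ Kconst 2 = 3 * Real.sqrt 3 / (2 * π)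
    ∧ Kconst 4 = 3 * (16 + 5 * Real.sqrt 5) / (4 * π) :=
  derivative_bound_holomorphic_complement_convex_general G Ω hGc hGne hΩ f hf M hM
end
end
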